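/- Let A* be a block-nondegenerate local maximizer of f over the feasible set. Then there exists δ > 0 such that every greedy HOOI sequence {A^k}_{k≥0} with ‖A⁰ − A*‖_F ≤ δ converges (blockwise in Frobenius norm) to a feasible point Ā that is a local maximizer of f. -/

import Mathlib

open Matrix BigOperators Filter

def froSq {ι κ : Type*} [Fintype ι] [Fintype κ] (M : Matrix ι κ ℝ) : ℝ :=
  ∑ i, ∑ j, (M i j) ^ 2

noncomputable def fro {ι κ : Type*} [Fintype ι] [Fintype κ] (M : Matrix ι κ ℝ) : ℝ :=
  Real.sqrt (froSq M)

noncomputable def eigList {m : ℕ} {κ : Type*} [Fintype κ] (Y : Matrix (Fin m) κ ℝ) : List ℝ :=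
  ((((Finset.univ : Finset (Fin m)).val.map
      (fun j => (Matrix.isHermitian_mul_conjTranspose_self Y).eigenvalues j)).sort (· ≤ ·)).reverse)

noncomputable def sval {m : ℕ} {κ : Type*} [Fintype κ] (Y : Matrix (Fin m) κ ℝ) (i : ℕ) : ℝ :=
  Real.sqrt ((eigList Y).getD (i - 1) 0)

/-- Feasibility: every factor matrix has orthonormal columns. -/
def TFeas {N : ℕ} {I r : Fin N → ℕ}
    (A : (n : Fin N) → Matrix (Fin (I n)) (Fin (r n)) ℝ) : Prop :=
  ∀ n, (A n)ᵀ * A n = 1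

/-- `Gₙ(A) = unfoldₙ(X ×₁ A₁ᵀ ⋯ ×_{n−1} A_{n−1}ᵀ ×_{n+1} A_{n+1}ᵀ ⋯ ×_N A_Nᵀ)`. -/
noncomputable def Gmat {N : ℕ} {I r : Fin N → ℕ} (X : ((n : Fin N) → Fin (I n)) → ℝ)
    (A : (n : Fin N) → Matrix (Fin (I n)) (Fin (r n)) ℝ) (n : Fin N) :
    Matrix (Fin (I n)) ((m : {m : Fin N // m ≠ n}) → Fin (r m.1)) ℝ :=
  fun j c => ∑ idx : ((m : {m : Fin N // m ≠ n}) → Fin (I m.1)),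
    X (fun i => if h : i = n then Fin.cast (by rw [h]) j else idx ⟨i, h⟩) *
      ∏ m : {m : Fin N // m ≠ n}, A m.1 (idx m) (c m)

/-- `f(A) = ‖X ×₁ A₁ᵀ ⋯ ×_N A_Nᵀ‖_F²`. -/
noncomputable def fval {N : ℕ} {I r : Fin N → ℕ} (X : ((n : Fin N) → Fin (I n)) → ℝ)
    (A : (n : Fin N) → Matrix (Fin (I n)) (Fin (r n)) ℝ) : ℝ :=
  ∑ c : ((n : Fin N) → Fin (r n)),
    (∑ idx : ((n : Fin N) → Fin (I n)), X idx * ∏ n, A n (idx n) (c n)) ^ 2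

/-- A critical point: `Gₙ(A)Gₙ(A)ᵀAₙ = AₙAₙᵀGₙ(A)Gₙ(A)ᵀAₙ` for all `n`. -/
def Critical {N : ℕ} {I r : Fin N → ℕ} (X : ((n : Fin N) → Fin (I n)) → ℝ)
    (A : (n : Fin N) → Matrix (Fin (I n)) (Fin (r n)) ℝ) : Prop :=
  ∀ n, Gmat X A n * (Gmat X A n)ᵀ * A n =
    A n * (A n)ᵀ * (Gmat X A n * (Gmat X A n)ᵀ * A n)

/-- A block-wise maximizer. -/
def BlockMax {N : ℕ} {I r : Fin N → ℕ} (X : ((n : Fin N) → Fin (I n)) → ℝ)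
    (A : (n : Fin N) → Matrix (Fin (I n)) (Fin (r n)) ℝ) : Prop :=
  ∀ n, ∀ B : Matrix (Fin (I n)) (Fin (r n)) ℝ, Bᵀ * B = 1 →
    froSq (Bᵀ * Gmat X A n) ≤ froSq ((A n)ᵀ * Gmat X A n)

/-- Block-nondegeneracy: `σ_{rₙ}(Gₙ(A)) > σ_{rₙ+1}(Gₙ(A))` for all `n`. -/
def NonDeg {N : ℕ} {I r : Fin N → ℕ} (X : ((n : Fin N) → Fin (I n)) → ℝ)
    (A : (n : Fin N) → Matrix (Fin (I n)) (Fin (r n)) ℝ) : Prop :=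
  ∀ n, sval (Gmat X A n) (r n + 1) < sval (Gmat X A n) (r n)

/-- The hybrid tuple used in HOOI: the already-updated blocks `i < n` come from
`Anew`, the rest from `Aold`. -/
def hyb {N : ℕ} {I r : Fin N → ℕ}
    (Aold Anew : (n : Fin N) → Matrix (Fin (I n)) (Fin (r n)) ℝ) (n : Fin N) :
    (i : Fin N) → Matrix (Fin (I i)) (Fin (r i)) ℝ :=
  fun i => if i < n then Anew i else Aold i

/-- `Gₙ^k = unfoldₙ(X ×₁ (A₁^{k+1})ᵀ ⋯ ×_{n−1} (A_{n−1}^{k+1})ᵀ ×_{n+1} (A_{n+1}^k)ᵀ ⋯ ×_N (A_N^k)ᵀ)`. -/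
noncomputable def Gseq {N : ℕ} {I r : Fin N → ℕ} (X : ((n : Fin N) → Fin (I n)) → ℝ)
    (A : ℕ → (n : Fin N) → Matrix (Fin (I n)) (Fin (r n)) ℝ) (k : ℕ) (n : Fin N) :
    Matrix (Fin (I n)) ((m : {m : Fin N // m ≠ n}) → Fin (r m.1)) ℝ :=
  Gmat X (hyb (A k) (A (k + 1)) n) n

/-- A HOOI sequence. -/
def IsHOOI {N : ℕ} {I r : Fin N → ℕ} (X : ((n : Fin N) → Fin (I n)) → ℝ)
    (A : ℕ → (n : Fin N) → Matrix (Fin (I n)) (Fin (r n)) ℝ) : Prop :=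
  (∀ k, TFeas (A k)) ∧
  ∀ k (n : Fin N), ∀ B : Matrix (Fin (I n)) (Fin (r n)) ℝ, Bᵀ * B = 1 →
    froSq (Bᵀ * Gseq X A k n) ≤ froSq ((A (k + 1) n)ᵀ * Gseq X A k n)

/-- A greedy HOOI sequence. -/
def IsGreedyHOOI {N : ℕ} {I r : Fin N → ℕ} (X : ((n : Fin N) → Fin (I n)) → ℝ)
    (A : ℕ → (n : Fin N) → Matrix (Fin (I n)) (Fin (r n)) ℝ) : Prop :=
  IsHOOI X A ∧
  ∀ k (n : Fin N), ∀ B : Matrix (Fin (I n)) (Fin (r n)) ℝ, Bᵀ * B = 1 →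
    (∀ C : Matrix (Fin (I n)) (Fin (r n)) ℝ, Cᵀ * C = 1 →
      froSq (Cᵀ * Gseq X A k n) ≤ froSq (Bᵀ * Gseq X A k n)) →
    fro (A (k + 1) n - A k n) ≤ fro (B - A k n)

/-- `Ā` is a limit point of the sequence `{A^k}` (blockwise in Frobenius norm). -/
def IsLimitPt {N : ℕ} {I r : Fin N → ℕ}
    (A : ℕ → (n : Fin N) → Matrix (Fin (I n)) (Fin (r n)) ℝ)
    (Abar : (n : Fin N) → Matrix (Fin (I n)) (Fin (r n)) ℝ) : Prop :=
  ∃ φ : ℕ → ℕ, StrictMono φ ∧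
    ∀ n, Tendsto (fun k => fro (A (φ k) n - Abar n)) atTop (nhds 0)

/-- `‖A − B‖_F = √(∑ₙ ‖Aₙ − Bₙ‖_F²)` on tuples. -/
noncomputable def tdist {N : ℕ} {I r : Fin N → ℕ}
    (A B : (n : Fin N) → Matrix (Fin (I n)) (Fin (r n)) ℝ) : ℝ :=
  Real.sqrt (∑ n, froSq (A n - B n))

/-- A local maximizer of `f` over the feasible set. -/
def LocalMax {N : ℕ} {I r : Fin N → ℕ} (X : ((n : Fin N) → Fin (I n)) → ℝ)
    (A : (n : Fin N) → Matrix (Fin (I n)) (Fin (r n)) ℝ) : Prop :=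
  TFeas A ∧ ∃ ε > (0 : ℝ), ∀ B : (n : Fin N) → Matrix (Fin (I n)) (Fin (r n)) ℝ,
    TFeas B → tdist B A ≤ ε → fval X B ≤ fval X A

/-- A globally optimal solution. -/
def GlobalMax {N : ℕ} {I r : Fin N → ℕ} (X : ((n : Fin N) → Fin (I n)) → ℝ)
    (A : (n : Fin N) → Matrix (Fin (I n)) (Fin (r n)) ℝ) : Prop :=
  TFeas A ∧ ∀ B : (n : Fin N) → Matrix (Fin (I n)) (Fin (r n)) ℝ,
    TFeas B → fval X B ≤ fval X A

/-! Near a block-nondegenerate local maximizer `A*`, the spectral gap of the Gram matrices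
`Gₙ(A) Gₙ(A)ᵀ` makes a greedy sweep raise `f` by at least `c · step²`. Replacing each block by its
Newton–Schulz step extends `f` from the feasible set to a polynomial whose Euclidean gradient has
norm at most `C · step` along the segment of that sweep.

Such ascent steps of a polynomial `F` have finite total length by the Kurdyka–Łojasiewicz argument,
given a desingularizing function: a monotone `Ω` with `Ω b - Ω a ≥ (b - a) / η` whenever every level
between `a` and `b` contains a point whose gradient has norm at most `η`. It is obtained as follows.
On each level set `F = t`, some minimizer `w` of the gradient norm has coordinates satisfying a
polynomial relation `P(t, wᵢ) = 0`, found by eliminating `w` from the critical point equations of a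
penalized functional with a generic centre. Moving along branches of these curves gives
`1 = dF/dt ≤ ‖∇F‖ · ‖dw/dt‖`. The speeds of all branches of `P = 0` are dominated by an
integrable function of `t`, because `P` has boundedly many monotone pieces on each line
`y = const`.

The iterates therefore stay near `A*` and converge to a critical point of the extension. A
polynomial has finitely many critical values on a ball, so close to `A*` that point has the value
`f(A*)`, which makes it a local maximizer. -/

section PolynomialCalculus

open MvPolynomial

theorem exists_eval_ne_zero {σ R : Type*} [CommRing R] [IsDomain R] [Infinite R]
    {p : MvPolynomial σ R} (hp : p ≠ 0) : ∃ x, eval x p ≠ 0 := by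
  contrapose! hp
  exact MvPolynomial.funext (by simpa using hp)

theorem exists_algebraic_relation {R α β : Type*} [CommRing R] [IsDomain R] [Fintype α] [Fintype β]
    (hcard : Fintype.card β < Fintype.card α) (e : α → MvPolynomial β R) :
    ∃ Q : MvPolynomial α R, Q ≠ 0 ∧ ∀ x : β → R, eval (fun a => eval x (e a)) Q = 0 := by
  have hdep : ¬ AlgebraicIndependent R e := fun h => by
    have hle := h.lift_cardinalMk_le_trdeg
    rw [MvPolynomial.trdeg_of_isDomain] at hle
    simp only [Cardinal.mk_fintype, Cardinal.lift_natCast, Nat.cast_le] at hle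
    omega
  rw [algebraicIndependent_iff] at hdep
  push Not at hdep
  obtain ⟨Q, hQ, hQ0⟩ := hdep
  refine ⟨Q, hQ0, fun x => ?_⟩
  have hx := congrArg (aeval x) hQ
  simpa only [aeval_eq_bind₁, aeval_bind₁, ← coe_aeval_eq_eval, RingHom.coe_coe, map_zero] using hx

variable {σ : Type*} [Fintype σ]

/-- The Fréchet derivative of the polynomial function of `p` at `x`. -/
noncomputable def evalFDeriv (p : MvPolynomial σ ℝ) (x : σ → ℝ) : (σ → ℝ) →L[ℝ] ℝ :=
  ∑ i, eval x (pderiv i p) • ContinuousLinearMap.proj i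

theorem evalFDeriv_apply (p : MvPolynomial σ ℝ) (x v : σ → ℝ) :
    evalFDeriv p x v = ∑ i, eval x (pderiv i p) * v i := by
  simp [evalFDeriv]

theorem hasFDerivAt_eval (p : MvPolynomial σ ℝ) (x : σ → ℝ) :
    HasFDerivAt (fun y => eval y p) (evalFDeriv p x) x := by
  classical
  induction p using MvPolynomial.induction_on with
  | C a =>
    simpa [evalFDeriv] using hasFDerivAt_const a x
  | add p q hp hq =>
    simpa [evalFDeriv, add_smul, Finset.sum_add_distrib] using hp.fun_add hq
  | mul_X p i hp =>
    have hmul := hp.fun_mul (hasFDerivAt_apply i x)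
    simp only [map_mul, eval_X]
    refine hmul.congr_fderiv (ContinuousLinearMap.ext fun v => ?_)
    simp only [evalFDeriv_apply, Derivation.leibniz, pderiv_X, smul_eq_mul, map_add, map_mul,
      eval_X, _root_.add_apply, _root_.smul_apply, ContinuousLinearMap.proj_apply, add_mul,
      Finset.sum_add_distrib, Finset.mul_sum, Pi.single_apply]
    simp [mul_assoc]

theorem eval_pderiv_eq_zero_of_isLocalMin {σ : Type*} [Finite σ] {p : MvPolynomial σ ℝ} {x : σ → ℝ}
    (h : IsLocalMin (fun y => eval y p) x) (i : σ) : eval x (pderiv i p) = 0 := by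
  classical
  cases nonempty_fintype σ
  have hzero := DFunLike.congr_fun (h.hasFDerivAt_eq_zero (hasFDerivAt_eval p x)) (Pi.single i 1)
  simpa [evalFDeriv_apply, Pi.single_apply] using hzero

theorem eq_add_pderiv_of_isLocalMin_penalized {Ψ : MvPolynomial σ ℝ} {a w : σ → ℝ}
    (h : IsLocalMin (fun x => ∑ i, (x i - a i) ^ 2 + eval x Ψ) w) (i : σ) :
    a i = w i + eval w (pderiv i Ψ) / 2 := by
  classical
  have hmin : IsLocalMin (fun x => eval x (∑ i, (X i - C (a i)) ^ 2 + Ψ)) w := by simpa using h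
  have hcrit := eval_pderiv_eq_zero_of_isLocalMin hmin i
  have hsq : ∑ j, eval w (pderiv i ((X j - C (a j)) ^ 2)) = 2 * (w i - a i) := by
    rw [Finset.sum_eq_single i]
    · simp only [pow_two, Derivation.leibniz, map_sub, pderiv_X_self, pderiv_C, smul_eq_mul,
        map_add, map_mul, eval_X, eval_C, map_one, map_zero]
      ring
    · intro j _ hj
      simp [pow_two, pderiv_X_of_ne hj]
    · simp
  rw [map_add, map_add, map_sum, map_sum, hsq] at hcrit
  linear_combination (-1 / 2) * hcrit

end PolynomialCalculus

section Elimination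

open MvPolynomial

theorem eval_elim'_eq_eval_map_optionEquivLeft {σ R : Type*} [CommRing R]
    (Q : MvPolynomial (Option σ) R) (y : R) (x : σ → R) :
    eval (Option.elim' y x) Q = ((optionEquivLeft R σ Q).map (eval x)).eval y := by
  rw [← optionEquivLeft_elim_eval, funext (Option.elim'_eq_elim y x)]

theorem eval_leadingCoeff_eq_zero_of_tendsto {σ : Type*} {Q : Polynomial (MvPolynomial σ ℝ)}
    {K : ℕ → ℝ} {s : ℕ → σ → ℝ} {b : σ → ℝ} (hK : Tendsto K atTop atTop)
    (hs : Tendsto s atTop (nhds b)) (h0 : ∀ m, (Q.map (eval (s m))).eval (K m) = 0) :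
    eval b Q.leadingCoeff = 0 := by
  set L := Q.natDegree
  have hcoeff (l : ℕ) : Tendsto (fun m => eval (s m) (Q.coeff l)) atTop
      (nhds (eval b (Q.coeff l))) := ((continuous_eval _).tendsto b).comp hs
  have hterm : ∀ l ∈ Finset.range L,
      Tendsto (fun m => eval (s m) (Q.coeff l) * (K m ^ l / K m ^ L)) atTop (nhds 0) := by
    intro l hl
    simpa using (hcoeff l).mul
      ((tendsto_pow_div_pow_atTop_zero (Finset.mem_range.1 hl)).comp hK)
  have hlead := (tendsto_finsetSum _ hterm).add (hcoeff L)
  rw [Finset.sum_const_zero, zero_add] at hlead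
  refine tendsto_nhds_unique (hlead.congr' ?_) tendsto_const_nhds
  filter_upwards [hK.eventually_gt_atTop 0] with m hm
  have hsum := h0 m
  rw [Polynomial.eval_map, Polynomial.eval₂_eq_sum_range, Finset.sum_range_succ] at hsum
  have hpow : K m ^ L ≠ 0 := (pow_pos hm L).ne'
  rw [← mul_div_cancel_right₀ (eval (s m) (Q.coeff L)) hpow]
  simp only [← mul_div_assoc, ← Finset.sum_div, ← add_div]
  rw [hsum, zero_div]

theorem exists_relation_of_tendsto_atTop {α σ : Type*} [Fintype α] [Fintype σ]
    (hcard : Fintype.card σ < Fintype.card α) (e : α → MvPolynomial (Option σ) ℝ) :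
    ∃ q : MvPolynomial α ℝ, q ≠ 0 ∧ ∀ (K : ℕ → ℝ) (w : ℕ → σ → ℝ) (b : α → ℝ),
      Tendsto K atTop atTop →
      Tendsto (fun m a => eval (Option.elim' (K m) (w m)) (e a)) atTop (nhds b) →
      eval b q = 0 := by
  obtain ⟨Q, hQ0, hQ⟩ :=
    exists_algebraic_relation (by simpa using hcard) (Option.elim' (X none) e)
  refine ⟨(optionEquivLeft ℝ α Q).leadingCoeff, by simpa using hQ0, fun K w b hK hb => ?_⟩
  refine eval_leadingCoeff_eq_zero_of_tendsto hK hb fun m => ?_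
  rw [← eval_elim'_eq_eval_map_optionEquivLeft, ← hQ (Option.elim' (K m) (w m))]
  congr 2
  funext o
  cases o <;> simp

theorem exists_generic_relation {ι κ τ σ : Type*} [Finite ι] [Fintype κ] [Fintype τ] [Fintype σ]
    (hcard : Fintype.card σ < Fintype.card κ + Fintype.card τ)
    (e : ι → κ ⊕ τ → MvPolynomial (Option σ) ℝ) :
    ∃ a : τ → ℝ, ∀ j, ∃ P : MvPolynomial κ ℝ, P ≠ 0 ∧
      ∀ (K : ℕ → ℝ) (w : ℕ → σ → ℝ) (x : κ → ℝ), Tendsto K atTop atTop →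
      Tendsto (fun m k => eval (Option.elim' (K m) (w m)) (e j k)) atTop (nhds (Sum.elim x a)) →
      eval x P = 0 := by
  cases nonempty_fintype ι
  choose q hq0 hq using fun j =>
    exists_relation_of_tendsto_atTop (by rwa [Fintype.card_sum]) (e j)
  obtain ⟨s, hs⟩ := exists_eval_ne_zero
    (Finset.prod_ne_zero_iff.2 fun j (_ : j ∈ Finset.univ) => hq0 j)
  rw [map_prod, Finset.prod_ne_zero_iff] at hs
  have heval (j : ι) (x : κ → ℝ) :
      eval x (bind₁ (Sum.elim X (C ∘ s ∘ Sum.inr)) (q j))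
        = eval (Sum.elim x (s ∘ Sum.inr)) (q j) := by
    simp only [← coe_aeval_eq_eval, RingHom.coe_coe, aeval_bind₁]
    congr 2
    funext k
    cases k <;> simp
  refine ⟨s ∘ Sum.inr, fun j => ⟨bind₁ (Sum.elim X (C ∘ s ∘ Sum.inr)) (q j), fun h => ?_,
    fun K w x hK hx => by rw [heval]; exact hq j K w _ hK hx⟩⟩
  have hzero := heval j (s ∘ Sum.inl)
  rw [h, map_zero, Sum.elim_comp_inl_inr] at hzero
  exact hs j (Finset.mem_univ j) hzero.symm

end Elimination

section Penalization

open MvPolynomial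

theorem exists_penalized_minimizer {E : Type*} [PseudoMetricSpace E] [ProperSpace E] [Nonempty E]
    {d h q : E → ℝ} (hd : Continuous d) (hh : Continuous h) (hq : Continuous q)
    (hd0 : ∀ x, 0 ≤ d x) (hh0 : ∀ x, 0 ≤ h x) (hb : ∀ C, Bornology.IsBounded {x | q x ≤ C})
    {K : ℝ} (hK : 0 < K) :
    ∃ w, ∀ y, d w + (K * h w + K ^ 2 * q w) ≤ d y + (K * h y + K ^ 2 * q y) := by
  obtain ⟨z⟩ := ‹Nonempty E›
  refine Continuous.exists_forall_le_of_isBounded (by fun_prop) z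
    ((hb ((d z + (K * h z + K ^ 2 * q z)) / K ^ 2)).subset fun y hy => ?_)
  rw [Set.mem_ofPred_eq] at hy ⊢
  rw [le_div_iff₀ (pow_pos hK 2)]
  linarith [hd0 y, mul_nonneg hK.le (hh0 y)]

theorem exists_tendsto_penalized_minimizers {E : Type*} [PseudoMetricSpace E] [ProperSpace E]
    {d h q : E → ℝ} (hd : Continuous d) (hh : Continuous h) (hq : Continuous q)
    (hd0 : ∀ x, 0 ≤ d x) (hh0 : ∀ x, 0 ≤ h x) (hq0 : ∀ x, 0 ≤ q x)
    (hb : ∀ C, Bornology.IsBounded {x | q x ≤ C}) {z : E} (hz : q z = 0) :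
    ∃ (K : ℕ → ℝ) (w : ℕ → E) (x : E), Tendsto K atTop atTop ∧ Tendsto w atTop (nhds x) ∧
      (∀ m y, d (w m) + (K m * h (w m) + K m ^ 2 * q (w m)) ≤
        d y + (K m * h y + K m ^ 2 * q y)) ∧
      q x = 0 ∧ ∀ y, q y = 0 → h x ≤ h y := by
  have : Nonempty E := ⟨z⟩
  have hpos (m : ℕ) : (0 : ℝ) < m + 1 := by positivity
  have hinv : Tendsto (fun m : ℕ => ((m : ℝ) + 1)⁻¹) atTop (nhds 0) := by
    simpa using tendsto_one_div_add_atTop_nhds_zero_nat (𝕜 := ℝ)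
  choose w hw using fun m => exists_penalized_minimizer hd hh hq hd0 hh0 hb (hpos m)
  have hval (y : E) (hy : q y = 0) (m : ℕ) : h (w m) + (m + 1) * q (w m) ≤
      d y * ((m : ℝ) + 1)⁻¹ + h y := by
    have hmin := hw m y
    rw [hy] at hmin
    rw [← div_eq_mul_inv, ← sub_le_iff_le_add, le_div_iff₀ (hpos m)]
    linarith [hd0 (w m)]
  have hh_le (y : E) (hy : q y = 0) (m : ℕ) : h (w m) ≤ d y * ((m : ℝ) + 1)⁻¹ + h y := by
    linarith [hval y hy m, mul_nonneg (hpos m).le (hq0 (w m))]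
  have hq_le (m : ℕ) : q (w m) ≤ (d z + h z) * ((m : ℝ) + 1)⁻¹ := by
    have hinv_le : d z * ((m : ℝ) + 1)⁻¹ ≤ d z :=
      mul_le_of_le_one_right (hd0 z) (inv_le_one_of_one_le₀ (by simp))
    rw [← div_eq_mul_inv, le_div_iff₀ (hpos m)]
    linarith [hval z hz m, hh0 (w m)]
  have hbound (m : ℕ) : q (w m) ≤ d z + h z := (hq_le m).trans <|
    mul_le_of_le_one_right (add_nonneg (hd0 z) (hh0 z)) (inv_le_one_of_one_le₀ (by simp))
  obtain ⟨x, -, φ, hφ, hlim⟩ := tendsto_subseq_of_bounded (hb (d z + h z)) hbound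
  refine ⟨fun m => φ m + 1, w ∘ φ, x, tendsto_atTop_add_const_right _ _
    (tendsto_natCast_atTop_atTop.comp hφ.tendsto_atTop), hlim, fun m => hw (φ m), ?_, ?_⟩
  · refine (hq0 x).antisymm' (le_of_tendsto_of_tendsto' ((hq.tendsto x).comp hlim) ?_
      fun m => hq_le (φ m))
    simpa [Function.comp_def] using (hinv.const_mul (d z + h z)).comp hφ.tendsto_atTop
  · refine fun y hy => le_of_tendsto_of_tendsto' ((hh.tendsto x).comp hlim) ?_
      fun m => hh_le y hy (φ m)
    simpa [Function.comp_def] using ((hinv.const_mul (d y)).add_const (h y)).comp hφ.tendsto_atTop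

/-- The `i`-th coordinate of the centre `a` as a polynomial in `(K, t, w)`, when `w` is a critical
point of `‖w - a‖² + K h + K² ((f - t)² + g)`; the variables `K` and `t` are `none` and
`some none`. -/
noncomputable def penalizedCenter {τ : Type*} (f g h : MvPolynomial τ ℝ) (i : τ) :
    MvPolynomial (Option (Option τ)) ℝ :=
  let ι : MvPolynomial τ ℝ →ₐ[ℝ] MvPolynomial (Option (Option τ)) ℝ := rename (some ∘ some)
  X (some (some i)) + C (1 / 2) * (X none * ι (pderiv i h) + X none ^ 2 *
    (2 * (ι f - X (some none)) * ι (pderiv i f) + ι (pderiv i g)))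

theorem eval_penalizedCenter {τ : Type*} [Fintype τ] {f g h : MvPolynomial τ ℝ} {a w : τ → ℝ}
    {K t : ℝ}
    (hw : ∀ y, ∑ i, (w i - a i) ^ 2 + (K * eval w h + K ^ 2 * ((eval w f - t) ^ 2 + eval w g)) ≤
      ∑ i, (y i - a i) ^ 2 + (K * eval y h + K ^ 2 * ((eval y f - t) ^ 2 + eval y g))) (i : τ) :
    eval (Option.elim' K (Option.elim' t w)) (penalizedCenter f g h i) = a i := by
  let Ψ := C K * h + C (K ^ 2) * ((f - C t) ^ 2 + g)
  have hmin : IsLocalMin (fun y => ∑ i, (y i - a i) ^ 2 + eval y Ψ) w :=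
    Filter.Eventually.of_forall fun y => by simpa [Ψ] using hw y
  have hcomp : (Option.elim' K (Option.elim' t w) : Option (Option τ) → ℝ) ∘ (some ∘ some) = w :=
    rfl
  rw [eq_add_pderiv_of_isLocalMin_penalized hmin i]
  simp only [penalizedCenter, Ψ, pow_two, map_add, map_mul, map_sub, eval_X, eval_C, eval_rename,
    hcomp, Option.elim', Derivation.leibniz, smul_eq_mul, pderiv_C, map_ofNat, map_zero]
  ring

theorem exists_polynomial_relation_of_minimizers {τ : Type*} [Finite τ] (f g h : MvPolynomial τ ℝ)
    (hg : ∀ w, 0 ≤ eval w g) (hh : ∀ w, 0 ≤ eval w h)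
    (hb : ∀ C, Bornology.IsBounded {w | eval w g ≤ C}) :
    ∃ P : MvPolynomial (Fin 2) ℝ, P ≠ 0 ∧ ∀ t, (∃ w, eval w g = 0 ∧ eval w f = t) →
      ∃ w, eval w g = 0 ∧ eval w f = t ∧
        (∀ y, eval y g = 0 → eval y f = t → eval w h ≤ eval y h) ∧
        ∀ i, eval ![t, w i] P = 0 := by
  cases nonempty_fintype τ
  obtain ⟨a, ha⟩ := exists_generic_relation (ι := τ) (κ := Fin 2) (τ := τ) (σ := Option τ)
    (by simp; omega)
    (fun j => Sum.elim ![X (some none), X (some (some j))] (penalizedCenter f g h))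
  choose P hP0 hP using ha
  refine ⟨∏ j, P j, Finset.prod_ne_zero_iff.2 fun j _ => hP0 j, ?_⟩
  rintro t ⟨z, hz, hzt⟩
  have hqb (c : ℝ) : Bornology.IsBounded {w | (eval w f - t) ^ 2 + eval w g ≤ c} :=
    (hb c).subset fun w hw => le_trans (le_add_of_nonneg_left (sq_nonneg (eval w f - t))) hw
  have hqpos (w : τ → ℝ) : 0 ≤ (eval w f - t) ^ 2 + eval w g := add_nonneg (sq_nonneg _) (hg w)
  have hcont (p : MvPolynomial τ ℝ) : Continuous fun w => eval w p := continuous_eval p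
  have hqzero (w : τ → ℝ) : (eval w f - t) ^ 2 + eval w g = 0 ↔ eval w g = 0 ∧ eval w f = t := by
    rw [add_eq_zero_iff_of_nonneg (sq_nonneg _) (hg w), sq_eq_zero_iff, sub_eq_zero, and_comm]
  obtain ⟨K, w, x, hK, hw, hmin, hx, hxmin⟩ := exists_tendsto_penalized_minimizers
    (d := fun w => ∑ i, (w i - a i) ^ 2) (by fun_prop) (hcont h)
    ((((hcont f).sub continuous_const).pow 2).add (hcont g))
    (fun w => Finset.sum_nonneg fun i _ => sq_nonneg _) hh hqpos hqb ((hqzero z).2 ⟨hz, hzt⟩)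
  obtain ⟨hxg, hxf⟩ := (hqzero x).1 hx
  refine ⟨x, hxg, hxf, fun y hyg hyf => hxmin y ((hqzero y).2 ⟨hyg, hyf⟩), fun j => ?_⟩
  rw [map_prod]
  refine Finset.prod_eq_zero (Finset.mem_univ j)
    (hP j K (fun m => Option.elim' t (w m)) _ hK (tendsto_pi_nhds.2 ?_))
  rintro (k | i)
  · fin_cases k
    · simp
    · simpa using (tendsto_pi_nhds.1 hw) j
  · simp only [Sum.elim_inr, eval_penalizedCenter (hmin _), tendsto_const_nhds_iff]

end Penalization

section FiniteValues

open MvPolynomial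

variable {τ : Type*} [Finite τ]

theorem isCompact_setOf_sum_sq_sub_le {τ : Type*} [Fintype τ] (a : τ → ℝ) (A : ℝ) :
    IsCompact {w : τ → ℝ | ∑ i, (w i - a i) ^ 2 ≤ A} := by
  refine Metric.isCompact_of_isClosed_isBounded
    (isClosed_le (by fun_prop) continuous_const) ?_
  refine (Metric.isBounded_iff_subset_closedBall a).2 ⟨√A, fun w hw => ?_⟩
  refine (dist_pi_le_iff (Real.sqrt_nonneg A)).2 fun i => Real.abs_le_sqrt (le_trans ?_ hw)
  exact Finset.single_le_sum (f := fun i => (w i - a i) ^ 2) (fun i _ => sq_nonneg _)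
    (Finset.mem_univ i)

theorem eventually_exists_penalized_critical_point (f q : MvPolynomial τ ℝ)
    (hq : ∀ w, 0 ≤ eval w q) (a : τ → ℝ) {l u : ℝ} (hl : ∀ w, eval w q = 0 → eval w f ≠ l)
    (hu : ∀ w, eval w q = 0 → eval w f ≠ u) {z : τ → ℝ} (hz : eval z q = 0)
    (hlz : l < eval z f) (hzu : eval z f < u) :
    ∀ᶠ K in atTop, ∃ w, l < eval w f ∧ eval w f < u ∧
      ∀ i, a i = w i + K * eval w (pderiv i q) / 2 := by
  cases nonempty_fintype τ
  have hcont (p : MvPolynomial τ ℝ) : Continuous fun w => eval w p := continuous_eval p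
  set D : (τ → ℝ) → ℝ := fun w => ∑ i, (w i - a i) ^ 2
  have hD : Continuous D := by fun_prop
  have hD0 (w : τ → ℝ) : 0 ≤ D w := Finset.sum_nonneg fun i _ => sq_nonneg _
  obtain ⟨δ, hδ, hqδ⟩ : ∃ δ, 0 < δ ∧
      ∀ w ∈ {w | D w ≤ D z} ∩ {w | eval w f = l ∨ eval w f = u}, δ ≤ eval w q := by
    refine ((isCompact_setOf_sum_sq_sub_le a _).inter_right ?_).exists_forall_le'
      (hcont q).continuousOn fun w hw => (hq w).lt_of_ne fun h => ?_
    · exact (isClosed_eq (hcont f) continuous_const).union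
        (isClosed_eq (hcont f) continuous_const)
    · exact hw.2.elim (hl w h.symm) (hu w h.symm)
  filter_upwards [eventually_gt_atTop (D z / δ), eventually_gt_atTop 0] with K hKδ hK
  rw [div_lt_iff₀ hδ] at hKδ
  have hS : IsCompact ({w | D w ≤ D z + 1} ∩ {w | eval w f ∈ Set.Icc l u}) :=
    (isCompact_setOf_sum_sq_sub_le a _).inter_right (isClosed_Icc.preimage (hcont f))
  obtain ⟨w, hwS, hw⟩ := hS.exists_isMinOn (f := fun w => D w + eval w (C K * q))
    ⟨z, (lt_add_one (D z)).le, hlz.le, hzu.le⟩ (hD.add (hcont _)).continuousOn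
  have hwz : D w + K * eval w q ≤ D z := by
    simpa [hz] using hw (show z ∈ _ from ⟨(lt_add_one (D z)).le, hlz.le, hzu.le⟩)
  have hDw : D w ≤ D z := by linarith [mul_nonneg hK.le (hq w)]
  have hnot : ¬ (eval w f = l ∨ eval w f = u) := fun h => by
    linarith [mul_le_mul_of_nonneg_left (hqδ w ⟨hDw, h⟩) hK.le, hD0 w]
  have hlw := lt_of_le_of_ne hwS.2.1 fun h => hnot (Or.inl h.symm)
  have hwu := lt_of_le_of_ne hwS.2.2 fun h => hnot (Or.inr h)
  refine ⟨w, hlw, hwu, fun i => ?_⟩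
  have hmin := hw.isLocalMin (inter_mem
    ((hD.tendsto w).eventually_le_const (hDw.trans_lt (lt_add_one _)))
    ((hcont f).continuousAt (Icc_mem_nhds hlw hwu)))
  simpa [Derivation.leibniz] using eq_add_pderiv_of_isLocalMin_penalized hmin i

theorem exists_tendsto_penalized_critical_points {f q : MvPolynomial τ ℝ}
    (hq : ∀ w, 0 ≤ eval w q) (hT : {t | ∃ w, eval w q = 0 ∧ eval w f = t}.Countable)
    (a : τ → ℝ) {z : τ → ℝ} (hz : eval z q = 0) :
    ∃ (K : ℕ → ℝ) (w : ℕ → τ → ℝ), Tendsto K atTop atTop ∧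
      Tendsto (fun m => eval (w m) f) atTop (nhds (eval z f)) ∧
      ∀ m i, a i = w m i + K m * eval (w m) (pderiv i q) / 2 := by
  have hstep (m : ℕ) : ∃ K > (m : ℝ), ∃ w, eval z f - 1 / (m + 1) < eval w f ∧
      eval w f < eval z f + 1 / (m + 1) ∧ ∀ i, a i = w i + K * eval w (pderiv i q) / 2 := by
    have hpos : (0 : ℝ) < 1 / (m + 1) := by positivity
    obtain ⟨l, hlT, hl, hlz⟩ := (hT.dense_compl ℝ).exists_between (sub_lt_self (eval z f) hpos)
    obtain ⟨u, huT, hzu, hu⟩ :=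
      (hT.dense_compl ℝ).exists_between (lt_add_of_pos_right (eval z f) hpos)
    obtain ⟨K, ⟨w, hlw, hwu, hw⟩, hK⟩ := ((eventually_exists_penalized_critical_point f q hq a
      (fun w hw h => hlT ⟨w, hw, h⟩) (fun w hw h => huT ⟨w, hw, h⟩) hz hlz hzu).and
      (eventually_gt_atTop (m : ℝ))).exists
    exact ⟨K, hK, w, hl.trans hlw, hwu.trans hu, hw⟩
  choose K hK w hlw hwu hw using hstep
  refine ⟨K, w, tendsto_atTop_mono (fun m => (hK m).le) tendsto_natCast_atTop_atTop,
    tendsto_of_tendsto_of_tendsto_of_le_of_le ?_ ?_ (fun m => (hlw m).le) (fun m => (hwu m).le), hw⟩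
  · simpa using (tendsto_one_div_add_atTop_nhds_zero_nat (𝕜 := ℝ)).const_sub (eval z f)
  · simpa using (tendsto_one_div_add_atTop_nhds_zero_nat (𝕜 := ℝ)).const_add (eval z f)

theorem finite_values_of_countable {f q : MvPolynomial τ ℝ} (hq : ∀ w, 0 ≤ eval w q)
    (hT : {t | ∃ w, eval w q = 0 ∧ eval w f = t}.Countable) :
    {t | ∃ w, eval w q = 0 ∧ eval w f = t}.Finite := by
  cases nonempty_fintype τ
  obtain ⟨a, ha⟩ := exists_generic_relation (ι := Unit) (κ := Unit) (τ := τ) (σ := τ) (by simp)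
    (fun _ => Sum.elim (fun _ => rename some f)
      fun i => X (some i) + C (1 / 2) * (X none * rename some (pderiv i q)))
  obtain ⟨P, hP0, hP⟩ := ha ()
  refine Set.Finite.subset ?_ (?_ : _ ⊆ {t | eval (fun _ => t) P = 0})
  · refine (Polynomial.finite_setOfPred_isRoot
      (EmbeddingLike.map_ne_zero_iff (f := uniqueAlgEquiv ℝ Unit).2 hP0)).subset fun t ht => ?_
    exact (eval₂_const_uniqueAlgEquiv (φ := RingHom.id ℝ)).trans ht
  · rintro _ ⟨z, hz, rfl⟩
    obtain ⟨K, w, hK, hw, hcrit⟩ := exists_tendsto_penalized_critical_points hq hT a hz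
    have hcomp (m : ℕ) : (Option.elim' (K m) (w m) : Option τ → ℝ) ∘ some = w m := rfl
    refine hP K w (fun _ => eval z f) hK (tendsto_pi_nhds.2 ?_)
    rintro (_ | i)
    · simpa [eval_rename, hcomp] using hw
    · refine tendsto_const_nhds.congr fun m => ?_
      simp only [Sum.elim_inr, map_add, map_mul, eval_X, eval_C, eval_rename, hcomp, Option.elim']
      linear_combination hcrit m i

end FiniteValues

section Slice

open MvPolynomial

variable {σ R : Type*} [DecidableEq σ] [CommRing R]

/-- The univariate polynomial obtained from `p` by freezing all variables but `i` at the values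
given by `x`. -/
noncomputable def slice (p : MvPolynomial σ R) (x : σ → R) (i : σ) : Polynomial R :=
  aeval (Function.update (fun j => Polynomial.C (x j)) i Polynomial.X) p

theorem eval_slice (p : MvPolynomial σ R) (x : σ → R) (i : σ) (t : R) :
    (slice p x i).eval t = eval (Function.update x i t) p := by
  rw [slice, aeval_def, ← Polynomial.coe_evalRingHom, hom_eval₂, eval, coe_eval₂Hom]
  congr 1
  · ext; simp
  · funext j
    rcases eq_or_ne j i with rfl | hj <;> simp [*]

theorem derivative_slice (p : MvPolynomial σ R) (x : σ → R) (i : σ) :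
    (slice p x i).derivative = slice (pderiv i p) x i := by
  induction p using MvPolynomial.induction_on with
  | C a => simp [slice]
  | add p q hp hq => simpa [slice] using congrArg₂ (· + ·) hp hq
  | mul_X p j hp =>
    simp only [slice, map_mul, aeval_X, Polynomial.derivative_mul, Derivation.leibniz, smul_eq_mul,
      map_add] at hp ⊢
    rw [hp]
    rcases eq_or_ne j i with rfl | hj
    · simp; ring
    · simp [hj]; ring

theorem natDegree_slice_le (p : MvPolynomial σ R) (x : σ → R) (i : σ) :
    (slice p x i).natDegree ≤ p.totalDegree := by
  have hX (j : σ) :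
      (Function.update (fun j => Polynomial.C (x j)) i Polynomial.X j).natDegree ≤ 1 := by
    rcases eq_or_ne j i with rfl | hj
    · simpa using Polynomial.natDegree_X_le
    · simp [hj]
  simpa [slice] using aeval_natDegree_le (m := p.totalDegree) (n := 1) p le_rfl _ hX

theorem eval_slice_zero (p : MvPolynomial (Fin 2) R) (s y t : R) :
    (slice p ![s, y] 0).eval t = eval ![t, y] p := by
  rw [eval_slice]
  congr 2
  ext i; fin_cases i <;> rfl

theorem eval_slice_one (p : MvPolynomial (Fin 2) R) (t s y : R) :
    (slice p ![t, s] 1).eval y = eval ![t, y] p := by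
  rw [eval_slice]
  congr 2
  ext i; fin_cases i <;> rfl

end Slice

section SpeedDensity

open MvPolynomial MeasureTheory

theorem setLIntegral_abs_derivative_le_of_injOn (u : Polynomial ℝ) {η : ℝ} {E : Set ℝ}
    (hE : MeasurableSet E) (hinj : Set.InjOn u.eval E) (hη : ∀ t ∈ E, |u.eval t| < η) :
    ∫⁻ t in E, ENNReal.ofReal |u.derivative.eval t| ≤ ENNReal.ofReal (2 * η) := by
  have harea := lintegral_image_eq_lintegral_abs_deriv_mul hE
    (fun t _ => (u.hasDerivAt t).hasDerivWithinAt) hinj (fun _ => 1)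
  simp only [mul_one, lintegral_one, Measure.restrict_apply_univ] at harea
  rw [← harea]
  calc volume (u.eval '' E) ≤ volume (Set.Ioo (-η) η) :=
        measure_mono (Set.image_subset_iff.2 fun t ht => abs_lt.1 (hη t ht))
    _ = ENNReal.ofReal (2 * η) := by rw [Real.volume_Ioo, sub_neg_eq_add, two_mul]

/-- The number of critical points of `u` to the left of `t`; the level sets of this function are
intervals of injectivity of `u`. -/
noncomputable def criticalCount (u : Polynomial ℝ) (t : ℝ) : ℕ :=
  (u.derivative.roots.toFinset.filter (· < t)).card

theorem measurable_criticalCount (u : Polynomial ℝ) : Measurable (criticalCount u) := by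
  unfold criticalCount
  simp only [Finset.card_filter]
  exact Finset.measurable_sum _ fun z _ =>
    Measurable.ite measurableSet_Ioi measurable_const measurable_const

theorem criticalCount_le_natDegree (u : Polynomial ℝ) (t : ℝ) :
    criticalCount u t ≤ u.natDegree :=
  calc criticalCount u t ≤ u.derivative.roots.toFinset.card := Finset.card_filter_le _ _
    _ ≤ Multiset.card u.derivative.roots := Multiset.toFinset_card_le _
    _ ≤ u.derivative.natDegree := Polynomial.card_roots' _
    _ ≤ u.natDegree := (Polynomial.natDegree_derivative_le u).trans (Nat.sub_le _ _)

theorem injOn_eval_criticalCount {u : Polynomial ℝ} (hu : u.derivative ≠ 0) (k : ℕ) :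
    Set.InjOn u.eval (criticalCount u ⁻¹' {k}) := by
  have hlt {x y : ℝ} (hxy : x < y) (he : u.eval x = u.eval y) :
      criticalCount u x < criticalCount u y := by
    obtain ⟨c, hc, hc0⟩ := exists_deriv_eq_zero hxy u.continuous.continuousOn he
    rw [Polynomial.deriv] at hc0
    refine Finset.card_lt_card (Finset.ssubset_iff_of_subset ?_ |>.2 ⟨c, ?_, ?_⟩)
    · exact Finset.monotone_filter_right _ fun z _ (hz : z < x) => hz.trans hxy
    · simp [hu, hc0, hc.2]
    · simp [hc.1.le]
  rintro x rfl y hy he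
  rcases lt_trichotomy x y with h | h | h
  · exact absurd hy.symm (hlt h he).ne
  · exact h
  · exact absurd hy (hlt h he.symm).ne

theorem setLIntegral_abs_derivative_le (u : Polynomial ℝ) (η : ℝ) :
    ∫⁻ t in {t | |u.eval t| < η}, ENNReal.ofReal |u.derivative.eval t| ≤
      (u.natDegree + 1) * ENNReal.ofReal (2 * η) := by
  by_cases hu : u.derivative = 0
  · simp [hu]
  let E (k : Fin (u.natDegree + 1)) : Set ℝ := {t | |u.eval t| < η} ∩ criticalCount u ⁻¹' {k.1}
  have hcover : {t | |u.eval t| < η} ⊆ ⋃ k, E k := fun t ht => Set.mem_iUnion.2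
    ⟨⟨criticalCount u t, Nat.lt_succ_of_le (criticalCount_le_natDegree u t)⟩, ht, rfl⟩
  calc ∫⁻ t in {t | |u.eval t| < η}, ENNReal.ofReal |u.derivative.eval t|
      ≤ ∫⁻ t in ⋃ k, E k, ENNReal.ofReal |u.derivative.eval t| := lintegral_mono_set hcover
    _ ≤ ∑' k, ∫⁻ t in E k, ENNReal.ofReal |u.derivative.eval t| := lintegral_iUnion_le _ _
    _ = ∑ k, ∫⁻ t in E k, ENNReal.ofReal |u.derivative.eval t| := tsum_fintype _
    _ ≤ ∑ _k : Fin (u.natDegree + 1), ENNReal.ofReal (2 * η) := Finset.sum_le_sum fun k _ =>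
        setLIntegral_abs_derivative_le_of_injOn u
          ((isOpen_lt u.continuous.abs continuous_const).measurableSet.inter
            (measurable_criticalCount u (measurableSet_singleton _)))
          ((injOn_eval_criticalCount hu k).mono Set.inter_subset_right) fun t ht => ht.1
    _ = (u.natDegree + 1) * ENNReal.ofReal (2 * η) := by simp

theorem continuous_eval_pair (p : MvPolynomial (Fin 2) ℝ) :
    Continuous fun z : ℝ × ℝ => eval ![z.1, z.2] p := by
  refine (continuous_eval p).comp (continuous_pi fun i => ?_)
  fin_cases i
  · exact continuous_fst
  · exact continuous_snd

/-- The density `2 (m + 1) |∂ₜp|` on the strip `|p| < 1 / (m + 1)` around the curve `p = 0`. As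
`m → ∞`, its integral over `y` recovers at least the speed `|∂ₜp / ∂ᵧp|` of every regular branch. -/
noncomputable def stripDensity (p : MvPolynomial (Fin 2) ℝ) (m : ℕ) (z : ℝ × ℝ) : ENNReal :=
  {z : ℝ × ℝ | |eval ![z.1, z.2] p| < 1 / (m + 1 : ℝ)}.indicator
    (fun z => ENNReal.ofReal (2 * (m + 1)) * ENNReal.ofReal |eval ![z.1, z.2] (pderiv 0 p)|) z

/-- A finite-mass bound for the speed at time `t` of the branches `y(t)` of the curve
`p (t, y) = 0` that satisfy `|y| ≤ R`. -/
noncomputable def speedDensity (p : MvPolynomial (Fin 2) ℝ) (R t : ℝ) : ENNReal :=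
  liminf (fun m : ℕ => ∫⁻ y in Set.Icc (-(R + 1)) (R + 1), stripDensity p m (t, y)) atTop

theorem measurable_stripDensity (p : MvPolynomial (Fin 2) ℝ) (m : ℕ) :
    Measurable (stripDensity p m) :=
  ((continuous_eval_pair (pderiv 0 p)).abs.measurable.ennreal_ofReal.const_mul _).indicator
    (isOpen_lt (continuous_eval_pair p).abs continuous_const).measurableSet

theorem measurable_speedDensity (p : MvPolynomial (Fin 2) ℝ) (R : ℝ) :
    Measurable (speedDensity p R) :=
  Measurable.liminf fun m => (measurable_stripDensity p m).lintegral_prod_right'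

theorem lintegral_stripDensity_le (p : MvPolynomial (Fin 2) ℝ) (m : ℕ) (y : ℝ) :
    ∫⁻ t, stripDensity p m (t, y) ≤ (p.totalDegree + 1) * 4 := by
  set u := slice p ![0, y] 0
  have hu (t : ℝ) : stripDensity p m (t, y) = ENNReal.ofReal (2 * (m + 1)) *
      {t | |u.eval t| < 1 / (m + 1 : ℝ)}.indicator
        (fun t => ENNReal.ofReal |u.derivative.eval t|) t := by
    simp only [u, derivative_slice, eval_slice_zero, stripDensity, Set.indicator_apply,
      Set.mem_ofPred_eq, mul_ite, mul_zero]
  simp only [hu]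
  rw [lintegral_const_mul' _ _ ENNReal.ofReal_ne_top,
    lintegral_indicator (isOpen_lt u.continuous.abs continuous_const).measurableSet]
  calc _ ≤ ENNReal.ofReal (2 * (m + 1)) *
        ((p.totalDegree + 1) * ENNReal.ofReal (2 * (1 / (m + 1 : ℝ)))) := by
        gcongr
        refine (setLIntegral_abs_derivative_le u _).trans ?_
        gcongr
        exact natDegree_slice_le p _ 0
    _ = (p.totalDegree + 1) * ENNReal.ofReal (2 * (m + 1) * (2 * (1 / (m + 1 : ℝ)))) := by
        rw [ENNReal.ofReal_mul (p := 2 * ((m : ℝ) + 1)) (by positivity)]; ring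
    _ = (p.totalDegree + 1) * 4 := by
        rw [show 2 * (m + 1) * (2 * (1 / (m + 1 : ℝ))) = 4 by field_simp; norm_num]; simp

theorem lintegral_speedDensity_lt_top (p : MvPolynomial (Fin 2) ℝ) (R : ℝ) :
    ∫⁻ t, speedDensity p R t < ⊤ := by
  have hmass (m : ℕ) : ∫⁻ t, ∫⁻ y in Set.Icc (-(R + 1)) (R + 1), stripDensity p m (t, y) ≤
      ∫⁻ _ in Set.Icc (-(R + 1)) (R + 1), (p.totalDegree + 1) * 4 := by
    rw [lintegral_lintegral_swap (f := fun t y => stripDensity p m (t, y))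
      (measurable_stripDensity p m).aemeasurable]
    exact lintegral_mono fun y => lintegral_stripDensity_le p m y
  calc ∫⁻ t, speedDensity p R t ≤ liminf (fun m : ℕ =>
        ∫⁻ t, ∫⁻ y in Set.Icc (-(R + 1)) (R + 1), stripDensity p m (t, y)) atTop :=
        lintegral_liminf_le fun m => (measurable_stripDensity p m).lintegral_prod_right'
    _ ≤ liminf (fun _ : ℕ => ∫⁻ _ in Set.Icc (-(R + 1)) (R + 1), (p.totalDegree + 1) * 4) atTop :=
        liminf_le_liminf (Eventually.of_forall hmass)
    _ < ⊤ := by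
        rw [liminf_const, lintegral_const, Measure.restrict_apply_univ, Real.volume_Icc]
        finiteness

end SpeedDensity

section SpeedLowerBound

open MvPolynomial MeasureTheory

theorem ofReal_div_le_setLIntegral_stripDensity {p : MvPolynomial (Fin 2) ℝ} {t y₀ a b ρ : ℝ}
    {m : ℕ} (ha : 0 ≤ a) (hb : 0 < b) (hρ : ρ = 1 / (m + 1) * (1 / (2 * b)))
    (hp : ∀ y ∈ Metric.ball y₀ ρ, |eval ![t, y] p| ≤ 2 * b * |y - y₀|)
    (hpt : ∀ y ∈ Metric.ball y₀ ρ, a / 2 ≤ |eval ![t, y] (pderiv 0 p)|) :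
    ENNReal.ofReal (a / b) ≤ ∫⁻ y in Metric.ball y₀ ρ, stripDensity p m (t, y) := by
  calc ENNReal.ofReal (a / b)
      = ∫⁻ _ in Metric.ball y₀ ρ, ENNReal.ofReal (2 * (m + 1) * (a / 2)) := by
        rw [setLIntegral_const, Real.volume_ball, ← ENNReal.ofReal_mul (by positivity), hρ]
        congr 1
        field_simp
    _ ≤ ∫⁻ y in Metric.ball y₀ ρ, stripDensity p m (t, y) := by
        refine setLIntegral_mono ((measurable_stripDensity p m).comp measurable_prodMk_left)
          fun y hy => ?_
        have hstrip : |eval ![t, y] p| < 1 / (m + 1 : ℝ) :=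
          calc |eval ![t, y] p| ≤ 2 * b * |y - y₀| := hp y hy
            _ < 2 * b * ρ := by gcongr; exact hy
            _ = 1 / (m + 1) := by rw [hρ]; field_simp
        rw [stripDensity, Set.indicator_of_mem (by exact hstrip),
          ← ENNReal.ofReal_mul (by positivity)]
        gcongr
        exact hpt y hy

theorem eventually_abs_eval_le {p : MvPolynomial (Fin 2) ℝ} {t y₀ : ℝ}
    (h0 : eval ![t, y₀] p = 0) (hb : eval ![t, y₀] (pderiv 1 p) ≠ 0) :
    ∀ᶠ y in nhds y₀, |eval ![t, y] p| ≤ 2 * |eval ![t, y₀] (pderiv 1 p)| * |y - y₀| := by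
  have hderiv := (slice p ![t, 0] 1).hasDerivAt y₀
  simp only [derivative_slice, eval_slice_one] at hderiv
  filter_upwards [(hasDerivAt_iff_isLittleO.1 hderiv).def (abs_pos.2 hb)] with y hy
  rw [h0, sub_zero, smul_eq_mul, Real.norm_eq_abs, Real.norm_eq_abs] at hy
  linarith [abs_sub_abs_le_abs_sub (eval ![t, y] p) ((y - y₀) * eval ![t, y₀] (pderiv 1 p)),
    abs_mul (y - y₀) (eval ![t, y₀] (pderiv 1 p))]

theorem ofReal_abs_div_le_speedDensity {p : MvPolynomial (Fin 2) ℝ} {R t y₀ : ℝ}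
    (h0 : eval ![t, y₀] p = 0) (hb : eval ![t, y₀] (pderiv 1 p) ≠ 0) (hy₀ : |y₀| ≤ R) :
    ENNReal.ofReal |eval ![t, y₀] (pderiv 0 p) / eval ![t, y₀] (pderiv 1 p)| ≤
      speedDensity p R t := by
  rw [abs_div]
  rcases (abs_nonneg (eval ![t, y₀] (pderiv 0 p))).eq_or_lt with ha0 | ha0
  · simp [← ha0]
  set a := |eval ![t, y₀] (pderiv 0 p)|
  have hpt : ∀ᶠ y in nhds y₀, a / 2 < |eval ![t, y] (pderiv 0 p)| :=
    ((continuous_eval_pair (pderiv 0 p)).comp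
      (Continuous.prodMk_right t)).abs.continuousAt.eventually
        (lt_mem_nhds (show a / 2 < a by linarith))
  obtain ⟨ε, hε, hnear⟩ := Metric.eventually_nhds_iff.1 ((eventually_abs_eval_le h0 hb).and hpt)
  set b := |eval ![t, y₀] (pderiv 1 p)|
  have hradius : Tendsto (fun m : ℕ => 1 / (m + 1 : ℝ) * (1 / (2 * b))) atTop (nhds 0) := by
    simpa using (tendsto_one_div_add_atTop_nhds_zero_nat (𝕜 := ℝ)).mul_const (1 / (2 * b))
  refine le_liminf_of_le (by isBoundedDefault) ?_
  filter_upwards [hradius.eventually (gt_mem_nhds (lt_min hε one_pos))] with m hm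
  have hball {y : ℝ} (hy : y ∈ Metric.ball y₀ (1 / (m + 1 : ℝ) * (1 / (2 * b)))) :
      dist y y₀ < ε ∧ |y - y₀| < 1 :=
    lt_min_iff.1 ((Metric.mem_ball.1 hy).trans hm)
  refine (ofReal_div_le_setLIntegral_stripDensity ha0.le (abs_pos.2 hb) rfl
    (fun y hy => (hnear (hball hy).1).1) fun y hy => (hnear (hball hy).1).2.le).trans
    (lintegral_mono_set fun y hy => ?_)
  obtain ⟨hlo, hhi⟩ := abs_lt.1 (hball hy).2
  obtain ⟨hlo₀, hhi₀⟩ := abs_le.1 hy₀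
  constructor <;> linarith

end SpeedLowerBound

section Branches

open MvPolynomial Asymptotics

variable {α τ : Type*} {l : Filter α}

theorem tendsto_slope_of_eval_eq_zero {p : MvPolynomial (Fin 2) ℝ} {t y : α → ℝ} {t₀ y₀ : ℝ}
    (ht : Tendsto t l (nhdsWithin t₀ {t₀}ᶜ)) (hy : Tendsto y l (nhds y₀))
    (hp : ∀ᶠ z in l, eval ![t z, y z] p = 0) (h0 : eval ![t₀, y₀] p = 0)
    (hb : eval ![t₀, y₀] (pderiv 1 p) ≠ 0) :
    Tendsto (fun z => (y z - y₀) / (t z - t₀)) l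
      (nhds (-(eval ![t₀, y₀] (pderiv 0 p) / eval ![t₀, y₀] (pderiv 1 p)))) := by
  set a := eval ![t₀, y₀] (pderiv 0 p)
  set b := eval ![t₀, y₀] (pderiv 1 p)
  obtain ⟨ht₀, hne⟩ := tendsto_nhdsWithin_iff.1 ht
  have hlin : (fun z => (y z - y₀) + a / b * (t z - t₀)) =o[l] fun z => ![t z - t₀, y z - y₀] := by
    have hpair : Tendsto (fun z => ![t z, y z]) l (nhds ![t₀, y₀]) :=
      tendsto_pi_nhds.2 (Fin.forall_fin_two.2 ⟨ht₀, hy⟩)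
    refine ((hasFDerivAt_eval p _).isLittleO.comp_tendsto hpair).const_mul_left (-b⁻¹)
      |>.congr' ?_ ?_
    · filter_upwards [hp] with z hz
      simp only [Function.comp_apply, hz, h0, evalFDeriv_apply, Fin.sum_univ_two, Pi.sub_apply,
        cons_val_zero, cons_val_one]
      field_simp
      ring
    · exact Eventually.of_forall fun z => funext (Fin.forall_fin_two.2 ⟨rfl, rfl⟩)
  have hO : (fun z => ![t z - t₀, y z - y₀]) =O[l] fun z => t z - t₀ := by
    have hoff : (fun z => ![0, -((y z - y₀) + a / b * (t z - t₀))]) =o[l]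
        fun z => ![t z - t₀, y z - y₀] :=
      isLittleO_pi.2 (Fin.forall_fin_two.2 ⟨isLittleO_zero _ _, hlin.neg_left⟩)
    refine hoff.right_isBigO_add.trans (isBigO_pi.2 (Fin.forall_fin_two.2 ⟨?_, ?_⟩))
    · simpa using isBigO_refl _ l
    · refine ((isBigO_refl (fun z => t z - t₀) l).const_mul_left (-(a / b))).congr_left fun z => ?_
      simp only [Pi.add_apply, cons_val_one, cons_val_fin_one]
      ring
  have hquot := (hlin.trans_isBigO hO).tendsto_div_nhds_zero.sub_const (a / b)
  rw [zero_sub] at hquot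
  refine hquot.congr' ?_
  filter_upwards [hne] with z hz
  have : t z - t₀ ≠ 0 := sub_ne_zero.2 hz
  field_simp
  ring

variable [Fintype τ]

theorem evalFDeriv_eq_one_of_tendsto_slope [NeBot l] {f : MvPolynomial τ ℝ} {t : α → ℝ}
    {w : α → τ → ℝ} {t₀ : ℝ} {w₀ v : τ → ℝ} (ht : Tendsto t l (nhdsWithin t₀ {t₀}ᶜ))
    (hw : Tendsto w l (nhds w₀)) (hf : ∀ᶠ z in l, eval (w z) f = t z) (hf₀ : eval w₀ f = t₀)
    (hv : ∀ i, Tendsto (fun z => (w z i - w₀ i) / (t z - t₀)) l (nhds (v i))) :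
    evalFDeriv f w₀ v = 1 := by
  have hderiv := (hasFDerivAt_eval f w₀).hasFDerivWithinAt (s := Set.univ) |>.lim
    (c := fun z => (t z - t₀)⁻¹) (tendsto_sub_nhds_zero_iff.2 hw) (by simp)
    (tendsto_pi_nhds.2 fun i => by simpa [div_eq_inv_mul] using hv i)
  refine tendsto_nhds_unique (hderiv.congr' ?_) tendsto_const_nhds
  filter_upwards [hf, (tendsto_nhdsWithin_iff.1 ht).2] with z hz hne
  rw [add_sub_cancel, hz, hf₀, smul_eq_mul, inv_mul_cancel₀ (sub_ne_zero.2 hne)]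

theorem evalFDeriv_eq_one_of_accPt {f : MvPolynomial τ ℝ} {p : τ → MvPolynomial (Fin 2) ℝ}
    {G : Set (ℝ × (τ → ℝ))} {x : ℝ × (τ → ℝ)} (hG : Set.InjOn Prod.fst G)
    (hf : ∀ z ∈ G, eval z.2 f = z.1) (hp : ∀ z ∈ G, ∀ i, eval ![z.1, z.2 i] (p i) = 0)
    (hx : x ∈ G) (hb : ∀ i, eval ![x.1, x.2 i] (pderiv 1 (p i)) ≠ 0) (hacc : AccPt x (𝓟 G)) :
    evalFDeriv f x.2 (fun i =>
      -(eval ![x.1, x.2 i] (pderiv 0 (p i)) / eval ![x.1, x.2 i] (pderiv 1 (p i)))) = 1 := by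
  have hne : NeBot (nhdsWithin x {x}ᶜ ⊓ 𝓟 G) := hacc
  set l := nhdsWithin x {x}ᶜ ⊓ 𝓟 G
  have hl : l ≤ nhds x := inf_le_left.trans nhdsWithin_le_nhds
  have hlG : ∀ᶠ z in l, z ∈ G := mem_inf_of_right (mem_principal_self G)
  have hlne : ∀ᶠ z in l, z ≠ x := mem_inf_of_left self_mem_nhdsWithin
  have ht : Tendsto Prod.fst l (nhdsWithin x.1 {x.1}ᶜ) := by
    refine tendsto_nhdsWithin_iff.2 ⟨(continuous_fst.tendsto x).mono_left hl, ?_⟩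
    filter_upwards [hlG, hlne] with z hz hzx
    exact fun h => hzx (hG hz hx h)
  have hw : Tendsto Prod.snd l (nhds x.2) := (continuous_snd.tendsto x).mono_left hl
  exact evalFDeriv_eq_one_of_tendsto_slope ht hw (hlG.mono hf) (hf x hx) fun i =>
    tendsto_slope_of_eval_eq_zero ht (tendsto_pi_nhds.1 hw i) (hlG.mono fun z hz => hp z hz i)
      (hp x hx i) (hb i)

end Branches

section BranchCover

open MvPolynomial MeasureTheory

theorem iterate_derivative_slice {σ R : Type*} [DecidableEq σ] [CommRing R] (p : MvPolynomial σ R)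
    (x : σ → R) (i : σ) (k : ℕ) :
    Polynomial.derivative^[k] (slice p x i) = slice ((pderiv i)^[k] p) x i :=
  ((Function.Semiconj.iterate_right (f := fun p => slice p x i) (ga := pderiv i)
    (gb := Polynomial.derivative) fun p => (derivative_slice p x i).symm) k p).symm

theorem exists_iterate_pderiv_simple_zero {P : MvPolynomial (Fin 2) ℝ} {t y : ℝ}
    (hP : ∃ z, eval ![t, z] P ≠ 0) (h0 : eval ![t, y] P = 0) :
    ∃ k < P.totalDegree, eval ![t, y] ((pderiv 1)^[k] P) = 0 ∧
      eval ![t, y] (pderiv 1 ((pderiv 1)^[k] P)) ≠ 0 := by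
  set u := slice P ![t, 0] 1 with hu
  have hu0 : u ≠ 0 := fun h => by
    obtain ⟨z, hz⟩ := hP
    rw [← eval_slice_one P t 0 z, ← hu, h, Polynomial.eval_zero] at hz
    exact hz rfl
  have heval (k : ℕ) : (Polynomial.derivative^[k] u).eval y = eval ![t, y] ((pderiv 1)^[k] P) := by
    rw [iterate_derivative_slice, eval_slice_one]
  have hpos : 0 < u.rootMultiplicity y :=
    (Polynomial.rootMultiplicity_pos hu0).2 ((eval_slice_one P t 0 y).trans h0)
  have hle : u.rootMultiplicity y ≤ P.totalDegree :=
    calc u.rootMultiplicity y = u.roots.count y := (Polynomial.count_roots u).symm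
      _ ≤ u.roots.card := Multiset.count_le_card _ _
      _ ≤ u.natDegree := Polynomial.card_roots' u
      _ ≤ P.totalDegree := natDegree_slice_le P _ 1
  obtain ⟨k, hk⟩ : ∃ k, u.rootMultiplicity y = k + 1 := Nat.exists_eq_add_one.2 hpos
  refine ⟨k, by omega, ?_, ?_⟩
  · rw [← heval]
    exact Polynomial.isRoot_iterate_derivative_of_lt_rootMultiplicity (by omega)
  · rw [← Function.iterate_succ_apply' (pderiv 1), ← heval, Nat.succ_eq_add_one, ← hk,
      Polynomial.eval_iterate_derivative_rootMultiplicity, nsmul_eq_mul]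
    exact mul_ne_zero (mod_cast Nat.factorial_ne_zero _)
      (Polynomial.eval_divByMonic_pow_rootMultiplicity_ne_zero y hu0)

theorem countable_setOf_not_accPt {E : Type*} [TopologicalSpace E] [SecondCountableTopology E]
    (G : Set E) : {x ∈ G | ¬ AccPt x (𝓟 G)}.Countable := by
  have hdiscrete : DiscreteTopology {x ∈ G | ¬ AccPt x (𝓟 G)} := by
    refine discreteTopology_subtype_iff.2 fun x hx => ?_
    rw [eq_bot_iff, ← not_neBot.1 hx.2]
    exact inf_le_inf_left _ (principal_mono.2 fun y hy => hy.1)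
  exact TopologicalSpace.separableSpace_iff_countable.1 inferInstance

theorem countable_setOf_forall_eval_eq_zero {P : MvPolynomial (Fin 2) ℝ} (hP : P ≠ 0) :
    {t | ∀ y, eval ![t, y] P = 0}.Countable := by
  obtain ⟨s, hs⟩ := exists_eval_ne_zero hP
  have hslice : slice P ![0, s 1] 0 ≠ 0 := fun h => hs <| by
    have hzero := eval_slice_zero P 0 (s 1) (s 0)
    rwa [h, Polynomial.eval_zero, eq_comm, show ![s 0, s 1] = s from (List.ofFn_inj.1 rfl)] at hzero
  refine (Polynomial.finite_setOfPred_isRoot hslice).countable.mono fun t ht => ?_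
  exact (eval_slice_zero P 0 (s 1) t).trans (ht (s 1))

/-- A finite-mass bound for the speed at time `t` of all branches, of any multiplicity, of the curve
`P (t, y) = 0` that satisfy `|y| ≤ R`. -/
noncomputable def totalSpeedDensity (P : MvPolynomial (Fin 2) ℝ) (R t : ℝ) : ENNReal :=
  ∑ k ∈ Finset.range P.totalDegree, speedDensity ((pderiv 1)^[k] P) R t

theorem measurable_totalSpeedDensity (P : MvPolynomial (Fin 2) ℝ) (R : ℝ) :
    Measurable (totalSpeedDensity P R) :=
  Finset.measurable_sum _ fun _ _ => measurable_speedDensity _ R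

theorem lintegral_totalSpeedDensity_lt_top (P : MvPolynomial (Fin 2) ℝ) (R : ℝ) :
    ∫⁻ t, totalSpeedDensity P R t < ⊤ := by
  simp only [totalSpeedDensity]
  rw [lintegral_finsetSum _ fun k _ => measurable_speedDensity _ R]
  exact ENNReal.sum_lt_top.2 fun k _ => lintegral_speedDensity_lt_top _ R

theorem ofReal_abs_div_le_totalSpeedDensity {P : MvPolynomial (Fin 2) ℝ} {R t y : ℝ} {k : ℕ}
    (hk : k < P.totalDegree) (h0 : eval ![t, y] ((pderiv 1)^[k] P) = 0)
    (hb : eval ![t, y] (pderiv 1 ((pderiv 1)^[k] P)) ≠ 0) (hy : |y| ≤ R) :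
    ENNReal.ofReal |eval ![t, y] (pderiv 0 ((pderiv 1)^[k] P)) /
      eval ![t, y] (pderiv 1 ((pderiv 1)^[k] P))| ≤ totalSpeedDensity P R t :=
  (ofReal_abs_div_le_speedDensity h0 hb hy).trans <|
    Finset.single_le_sum (f := fun k => speedDensity ((pderiv 1)^[k] P) R t)
      (fun _ _ => zero_le) (Finset.mem_range.2 hk)

variable {τ : Type*} [Fintype τ]

/-- The squared Euclidean norm of the gradient of `f`. -/
noncomputable def gradNormSq (f : MvPolynomial τ ℝ) : MvPolynomial τ ℝ :=
  ∑ i, pderiv i f ^ 2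

theorem eval_gradNormSq (f : MvPolynomial τ ℝ) (w : τ → ℝ) :
    eval w (gradNormSq f) = ∑ i, eval w (pderiv i f) ^ 2 := by
  simp [gradNormSq]

theorem eval_gradNormSq_nonneg (f : MvPolynomial τ ℝ) (w : τ → ℝ) : 0 ≤ eval w (gradNormSq f) := by
  rw [eval_gradNormSq]
  positivity

theorem abs_eval_pderiv_le (f : MvPolynomial τ ℝ) (w : τ → ℝ) (i : τ) :
    |eval w (pderiv i f)| ≤ √(eval w (gradNormSq f)) := by
  rw [eval_gradNormSq]
  exact Real.abs_le_sqrt (Finset.single_le_sum (f := fun i => eval w (pderiv i f) ^ 2)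
    (fun _ _ => sq_nonneg _) (Finset.mem_univ i))

theorem evalFDeriv_le (f : MvPolynomial τ ℝ) (w v : τ → ℝ) :
    evalFDeriv f w v ≤ (∑ i, |v i|) * √(eval w (gradNormSq f)) := by
  rw [evalFDeriv_apply, Finset.sum_mul]
  refine Finset.sum_le_sum fun i _ => (le_abs_self _).trans ?_
  rw [abs_mul, mul_comm]
  exact mul_le_mul_of_nonneg_left (abs_eval_pderiv_le f w i) (abs_nonneg _)

theorem exists_countable_one_le_totalSpeedDensity_mul {f : MvPolynomial τ ℝ}
    {P : MvPolynomial (Fin 2) ℝ} (hP : P ≠ 0) {T : Set ℝ} {W : ℝ → τ → ℝ} {R : ℝ}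
    (hf : ∀ t ∈ T, eval (W t) f = t) (hroot : ∀ t ∈ T, ∀ i, eval ![t, W t i] P = 0)
    (hR : ∀ t ∈ T, ∀ i, |W t i| ≤ R) :
    ∃ S : Set ℝ, S.Countable ∧ ∀ t ∈ T, t ∉ S → 1 ≤ (Fintype.card τ * totalSpeedDensity P R t) *
      ENNReal.ofReal √(eval (W t) (gradNormSq f)) := by
  let G (κ : τ → ℕ) : Set (ℝ × (τ → ℝ)) := {z | z.1 ∈ T ∧ z.2 = W z.1 ∧ ∀ i,
    eval ![z.1, z.2 i] ((pderiv 1)^[κ i] P) = 0 ∧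
    eval ![z.1, z.2 i] (pderiv 1 ((pderiv 1)^[κ i] P)) ≠ 0}
  refine ⟨{t | ∀ y, eval ![t, y] P = 0} ∪ ⋃ κ, Prod.fst '' {x ∈ G κ | ¬ AccPt x (𝓟 (G κ))},
    (countable_setOf_forall_eval_eq_zero hP).union
      (Set.countable_iUnion fun κ => (countable_setOf_not_accPt _).image _), fun t ht htS => ?_⟩
  rw [Set.mem_union, not_or, Set.mem_iUnion, not_exists, Set.mem_ofPred_eq, not_forall] at htS
  choose κ hκ hκ0 hκ1 using fun i => exists_iterate_pderiv_simple_zero htS.1 (hroot t ht i)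
  have hmem : (t, W t) ∈ G κ := ⟨ht, rfl, fun i => ⟨hκ0 i, hκ1 i⟩⟩
  have hacc : AccPt (t, W t) (𝓟 (G κ)) := by
    by_contra hiso
    exact htS.2 κ ⟨_, ⟨hmem, hiso⟩, rfl⟩
  have hinj : Set.InjOn Prod.fst (G κ) := fun z hz z' hz' h =>
    Prod.ext h (by rw [hz.2.1, hz'.2.1, h])
  have hone := evalFDeriv_eq_one_of_accPt hinj (fun z hz => hz.2.1 ▸ hf z.1 hz.1)
    (fun z hz i => (hz.2.2 i).1) hmem hκ1 hacc
  have hspeed := ENNReal.ofReal_le_ofReal (hone.symm.le.trans (evalFDeriv_le f (W t) _))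
  rw [ENNReal.ofReal_one, ENNReal.ofReal_mul (Finset.sum_nonneg fun i _ => abs_nonneg _),
    ENNReal.ofReal_sum_of_nonneg fun i _ => abs_nonneg _] at hspeed
  refine hspeed.trans (mul_le_mul_left ?_ _)
  calc _ ≤ ∑ _i : τ, totalSpeedDensity P R t := Finset.sum_le_sum fun i _ => by
        rw [abs_neg]
        exact ofReal_abs_div_le_totalSpeedDensity (hκ i) (hκ0 i) (hκ1 i) (hR t ht i)
    _ = Fintype.card τ * totalSpeedDensity P R t := by simp

theorem exists_integrable_one_le_mul_gradNorm (f : MvPolynomial τ ℝ) {g : MvPolynomial τ ℝ}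
    (hg : ∀ w, 0 ≤ eval w g) (hb : ∀ C, Bornology.IsBounded {w | eval w g ≤ C}) :
    ∃ (ρ : ℝ → ENNReal) (S : Set ℝ), Measurable ρ ∧ ∫⁻ t, ρ t < ⊤ ∧ S.Countable ∧
      ∀ w, eval w g = 0 → eval w f ∉ S →
        1 ≤ ρ (eval w f) * ENNReal.ofReal √(eval w (gradNormSq f)) := by
  obtain ⟨P, hP0, hP⟩ :=
    exists_polynomial_relation_of_minimizers f g (gradNormSq f) hg (eval_gradNormSq_nonneg f) hb
  obtain ⟨R, hR⟩ := (hb 0).exists_norm_le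
  choose! W hWg hWf hWmin hWP using hP
  obtain ⟨S, hS, hone⟩ := exists_countable_one_le_totalSpeedDensity_mul hP0
    (T := {t | ∃ w, eval w g = 0 ∧ eval w f = t}) (fun t ht => hWf t ht) (fun t ht => hWP t ht)
    fun t ht i => (norm_le_pi_norm (W t) i).trans (hR _ (hWg t ht).le)
  refine ⟨fun t => Fintype.card τ * totalSpeedDensity P R t, S,
    (measurable_totalSpeedDensity P R).const_mul _, ?_, hS, fun w hw hwS => ?_⟩
  · rw [lintegral_const_mul _ (measurable_totalSpeedDensity P R)]
    exact ENNReal.mul_lt_top (by simp) (lintegral_totalSpeedDensity_lt_top P R)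
  · refine (hone _ ⟨w, hw, rfl⟩ hwS).trans ?_
    gcongr
    exact hWmin _ ⟨w, hw, rfl⟩ w hw rfl

end BranchCover

section Desingularization

open MvPolynomial MeasureTheory

variable {σ : Type*} [Fintype σ]

/-- `Ω` is a Kurdyka–Łojasiewicz desingularizing function of `F` on `B`, in integrated form: the
derivative of `Ω` at `t` is at least `1 / ‖∇F‖` for some point of `B` on the level set `F = t`. -/
structure IsDesingularizing (F : MvPolynomial σ ℝ) (B : Set (σ → ℝ)) (Ω : ℝ → ℝ) : Prop where
  monotone : Monotone Ω
  continuous : Continuous Ω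
  sub_le : ∀ a b η : ℝ, a ≤ b → 0 ≤ η →
    (∀ t ∈ Set.Ioo a b, ∃ y ∈ B, eval y F = t ∧ √(eval y (gradNormSq F)) ≤ η) →
    b - a ≤ η * (Ω b - Ω a)

theorem sub_le_mul_intervalIntegral {ρ : ℝ → ENNReal} {S : Set ℝ} {a b η : ℝ}
    (hρ : Measurable ρ) (hfin : ∫⁻ t, ρ t < ⊤) (hS : S.Countable) (hab : a ≤ b) (hη : 0 ≤ η)
    (h : ∀ t ∈ Set.Ioo a b, t ∉ S → 1 ≤ ρ t * ENNReal.ofReal η) :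
    b - a ≤ η * ∫ t in a..b, (ρ t).toReal := by
  have hint : IntervalIntegrable (fun t => (ρ t).toReal) volume a b :=
    (integrable_toReal_of_lintegral_ne_top hρ.aemeasurable hfin.ne).intervalIntegrable
  have hone : ∀ᵐ t ∂volume.restrict (Set.Icc a b), 1 ≤ η * (ρ t).toReal := by
    rw [restrict_Ioo_eq_restrict_Icc.symm]
    filter_upwards [ae_restrict_of_ae (ae_lt_top hρ hfin.ne),
      ae_restrict_of_ae (measure_eq_zero_iff_ae_notMem.1 (hS.measure_zero volume)),
      ae_restrict_mem measurableSet_Ioo] with t htop htS ht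
    have hreal := ENNReal.toReal_mono (by finiteness) (h t ht htS)
    rwa [ENNReal.toReal_one, ENNReal.toReal_mul, ENNReal.toReal_ofReal hη, mul_comm] at hreal
  calc b - a = ∫ _ in a..b, (1 : ℝ) := by simp
    _ ≤ ∫ t in a..b, η * (ρ t).toReal := intervalIntegral.integral_mono_ae_restrict hab
        intervalIntegrable_const (hint.const_mul η) hone
    _ = η * ∫ t in a..b, (ρ t).toReal := intervalIntegral.integral_const_mul _ _

theorem exists_isDesingularizing_zeroSet (f : MvPolynomial σ ℝ) {g : MvPolynomial σ ℝ}
    (hg : ∀ w, 0 ≤ eval w g) (hb : ∀ C, Bornology.IsBounded {w | eval w g ≤ C}) :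
    ∃ Ω, IsDesingularizing f {w | eval w g = 0} Ω := by
  obtain ⟨ρ, S, hρ, hfin, hS, hone⟩ := exists_integrable_one_le_mul_gradNorm f hg hb
  have hint (a b : ℝ) : IntervalIntegrable (fun t => (ρ t).toReal) volume a b :=
    (integrable_toReal_of_lintegral_ne_top hρ.aemeasurable hfin.ne).intervalIntegrable
  refine ⟨fun s => ∫ t in (0 : ℝ)..s, (ρ t).toReal, fun a b hab => ?_,
    intervalIntegral.continuous_primitive hint 0, fun a b η hab hη hlevel => ?_⟩
  · rw [← sub_nonneg, intervalIntegral.integral_interval_sub_left (hint 0 b) (hint 0 a)]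
    exact intervalIntegral.integral_nonneg hab fun _ _ => ENNReal.toReal_nonneg
  · rw [intervalIntegral.integral_interval_sub_left (hint 0 b) (hint 0 a)]
    refine sub_le_mul_intervalIntegral hρ hfin hS hab hη fun t ht htS => ?_
    obtain ⟨w, hw, rfl, hwη⟩ := hlevel t ht
    exact (hone w hw htS).trans (by gcongr)

theorem finite_criticalValues_zeroSet (f : MvPolynomial σ ℝ) {g : MvPolynomial σ ℝ}
    (hg : ∀ w, 0 ≤ eval w g) (hb : ∀ C, Bornology.IsBounded {w | eval w g ≤ C}) :
    {t | ∃ w, eval w g = 0 ∧ eval w (gradNormSq f) = 0 ∧ eval w f = t}.Finite := by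
  obtain ⟨ρ, S, -, -, hS, hone⟩ := exists_integrable_one_le_mul_gradNorm f hg hb
  have hsum (w : σ → ℝ) : eval w (g + gradNormSq f) = 0 ↔
      eval w g = 0 ∧ eval w (gradNormSq f) = 0 := by
    rw [map_add, add_eq_zero_iff_of_nonneg (hg w) (eval_gradNormSq_nonneg f w)]
  have hcountable : {t | ∃ w, eval w (g + gradNormSq f) = 0 ∧ eval w f = t}.Countable := by
    refine hS.mono ?_
    rintro t ⟨w, hw, rfl⟩
    by_contra hwS
    simpa [((hsum w).1 hw).2] using hone w ((hsum w).1 hw).1 hwS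
  simpa only [hsum, and_assoc] using finite_values_of_countable
    (fun w => (map_add (eval w) g _).symm ▸ add_nonneg (hg w) (eval_gradNormSq_nonneg f w))
    hcountable

/-- The closed Euclidean ball of radius `R`; the function space carries the supremum norm. -/
def euclideanBall (σ : Type*) [Fintype σ] (R : ℝ) : Set (σ → ℝ) :=
  {y | ∑ i, y i ^ 2 ≤ R ^ 2}

/-- A polynomial whose zero set is the Euclidean sphere of radius `R`. -/
noncomputable def sphereEquation (σ : Type*) [Fintype σ] (R : ℝ) : MvPolynomial σ ℝ :=
  (∑ i, X i ^ 2 - C (R ^ 2)) ^ 2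

theorem eval_sphereEquation (R : ℝ) (w : σ → ℝ) :
    eval w (sphereEquation σ R) = (∑ i, w i ^ 2 - R ^ 2) ^ 2 := by
  simp [sphereEquation]

theorem eval_sphereEquation_nonneg (R : ℝ) (w : σ → ℝ) : 0 ≤ eval w (sphereEquation σ R) := by
  rw [eval_sphereEquation]
  positivity

theorem isBounded_sphereEquation_le (R c : ℝ) :
    Bornology.IsBounded {w | eval w (sphereEquation σ R) ≤ c} := by
  refine isBounded_iff_forall_norm_le.2 ⟨2 + c + R ^ 2, fun w hw => ?_⟩
  rw [Set.mem_ofPred_eq, eval_sphereEquation] at hw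
  have hc : 0 ≤ c := (sq_nonneg _).trans hw
  refine (pi_norm_le_iff_of_nonneg (by positivity)).2 fun i => ?_
  have hi : |w i| ^ 2 ≤ ∑ i, w i ^ 2 := by
    rw [sq_abs]
    exact Finset.single_le_sum (f := fun i => w i ^ 2) (fun _ _ => sq_nonneg _) (Finset.mem_univ i)
  rw [Real.norm_eq_abs]
  nlinarith [sq_nonneg (∑ i, w i ^ 2 - R ^ 2 - 1), sq_nonneg (|w i| - 1)]

/-- The point of the sphere one dimension up that lies above the point `y` of the ball. -/
noncomputable def sphereLift (R : ℝ) (y : σ → ℝ) (o : Option σ) : ℝ :=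
  o.elim √(R ^ 2 - ∑ i, y i ^ 2) y

theorem eval_sphereEquation_sphereLift {R : ℝ} {y : σ → ℝ} (hy : y ∈ euclideanBall σ R) :
    eval (sphereLift R y) (sphereEquation (Option σ) R) = 0 := by
  have hroot := Real.sq_sqrt (sub_nonneg.2 hy)
  rw [eval_sphereEquation, Fintype.sum_option]
  simp only [sphereLift, Option.elim_none, Option.elim_some, hroot]
  ring

theorem eval_sphereLift_rename_some (R : ℝ) (y : σ → ℝ) (F : MvPolynomial σ ℝ) :
    eval (sphereLift R y) (rename some F) = eval y F :=
  eval_rename _ _ _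

theorem eval_sphereLift_gradNormSq (R : ℝ) (y : σ → ℝ) (F : MvPolynomial σ ℝ) :
    eval (sphereLift R y) (gradNormSq (rename some F)) = eval y (gradNormSq F) := by
  classical
  have hnone : pderiv none (rename some F) = 0 :=
    pderiv_eq_zero_of_notMem_vars fun h => by simpa using vars_rename some F h
  simp only [eval_gradNormSq, Fintype.sum_option, hnone, pderiv_rename (Option.some_injective σ),
    eval_sphereLift_rename_some]
  simp

theorem exists_isDesingularizing_euclideanBall (F : MvPolynomial σ ℝ) (R : ℝ) :
    ∃ Ω, IsDesingularizing F (euclideanBall σ R) Ω := by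
  obtain ⟨Ω, hΩ⟩ := exists_isDesingularizing_zeroSet (rename some F)
    (eval_sphereEquation_nonneg R) (isBounded_sphereEquation_le R)
  refine ⟨Ω, hΩ.monotone, hΩ.continuous, fun a b η hab hη h =>
    hΩ.sub_le a b η hab hη fun t ht => ?_⟩
  obtain ⟨y, hy, hyt, hyη⟩ := h t ht
  refine ⟨sphereLift R y, eval_sphereEquation_sphereLift hy, ?_, ?_⟩
  · rwa [eval_sphereLift_rename_some]
  · rwa [eval_sphereLift_gradNormSq]

theorem finite_criticalValues_euclideanBall (F : MvPolynomial σ ℝ) (R : ℝ) :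
    {t | ∃ y ∈ euclideanBall σ R, eval y (gradNormSq F) = 0 ∧ eval y F = t}.Finite := by
  refine (finite_criticalValues_zeroSet (rename some F) (eval_sphereEquation_nonneg R)
    (isBounded_sphereEquation_le R)).subset ?_
  rintro t ⟨y, hy, hgrad, rfl⟩
  exact ⟨sphereLift R y, eval_sphereEquation_sphereLift hy,
    (eval_sphereLift_gradNormSq R y F).trans hgrad, eval_sphereLift_rename_some R y F⟩

theorem isClosed_euclideanBall (R : ℝ) : IsClosed (euclideanBall σ R) :=
  isClosed_le (by fun_prop) continuous_const

end Desingularization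

section AscentSequences

open MvPolynomial

theorem dist_le_of_dist_succ_le_sub {E : Type*} [PseudoMetricSpace E] {x : ℕ → E} {u : ℕ → ℝ}
    {p : E} {η M : ℝ} (h0 : u 0 ≤ M) (hbudget : dist (x 0) p + (M - u 0) ≤ η)
    (hstep : ∀ k, dist (x k) p ≤ η → dist (x k) (x (k + 1)) ≤ u (k + 1) - u k ∧ u (k + 1) ≤ M)
    (k : ℕ) : dist (x k) p ≤ η := by
  suffices h : u k ≤ M ∧ dist (x k) p + (M - u k) ≤ η by linarith [h.1, h.2]
  induction k with
  | zero => exact ⟨h0, hbudget⟩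
  | succ k ih =>
    obtain ⟨hdist, hle⟩ := hstep k (by linarith [ih.1, ih.2])
    exact ⟨hle, by linarith [dist_triangle_left (x (k + 1)) p (x k), ih.2]⟩

theorem cauchySeq_of_dist_succ_le_sub {E : Type*} [PseudoMetricSpace E] {x : ℕ → E} {u : ℕ → ℝ}
    {M : ℝ} (hM : ∀ k, u k ≤ M) (h : ∀ k, dist (x k) (x (k + 1)) ≤ u (k + 1) - u k) :
    CauchySeq x := by
  refine cauchySeq_of_summable_dist
    (summable_of_sum_range_le (c := M - u 0) (fun _ => dist_nonneg) fun n => ?_)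
  calc ∑ k ∈ Finset.range n, dist (x k) (x (k + 1))
      ≤ ∑ k ∈ Finset.range n, (u (k + 1) - u k) := Finset.sum_le_sum fun k _ => h k
    _ = u n - u 0 := Finset.sum_range_sub u n
    _ ≤ M - u 0 := by linarith [hM n]

variable {σ : Type*} [Fintype σ] {F : MvPolynomial σ ℝ} {B : Set (σ → ℝ)} {Ω : ℝ → ℝ}
  {c C η ε : ℝ}

/-- A step from `x` to `x'` that increases `F` at least quadratically in its length, and along which
the gradient of `F` is at most proportional to its length. -/
structure IsAscentStep (F : MvPolynomial σ ℝ) (B : Set (σ → ℝ)) (c C : ℝ) (x x' : σ → ℝ) :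
    Prop where
  increase : c * dist x x' ^ 2 ≤ eval x' F - eval x F
  segment_subset : segment ℝ x x' ⊆ B
  grad_le : ∀ y ∈ segment ℝ x x', √(eval y (gradNormSq F)) ≤ C * dist x x'

theorem IsAscentStep.eval_le {x x' : σ → ℝ} (h : IsAscentStep F B c C x x') (hc : 0 < c) :
    eval x F ≤ eval x' F :=
  sub_nonneg.1 (le_trans (by positivity) h.increase)

theorem IsAscentStep.dist_le (hΩ : IsDesingularizing F B Ω) {x x' : σ → ℝ}
    (h : IsAscentStep F B c C x x') (hc : 0 < c) (hC : 0 < C) :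
    dist x x' ≤ C / c * Ω (eval x' F) - C / c * Ω (eval x F) := by
  rw [← mul_sub]
  have hlevel : ∀ t ∈ Set.Ioo (eval x F) (eval x' F),
      ∃ y ∈ B, eval y F = t ∧ √(eval y (gradNormSq F)) ≤ C * dist x x' := fun t ht => by
    obtain ⟨y, hy, rfl⟩ := (convex_segment x x').isPreconnected.intermediate_value
      (left_mem_segment ℝ x x') (right_mem_segment ℝ x x') (continuous_eval F).continuousOn
      (Set.Ioo_subset_Icc_self ht)
    exact ⟨y, h.segment_subset hy, rfl, h.grad_le y hy⟩
  have hsub := hΩ.sub_le _ _ (C * dist x x') (h.eval_le hc) (by positivity) hlevel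
  rcases (dist_nonneg : 0 ≤ dist x x').eq_or_lt with hd | hd
  · rw [← hd]
    exact mul_nonneg (by positivity) (sub_nonneg.2 (hΩ.monotone (h.eval_le hc)))
  · rw [div_mul_eq_mul_div, le_div_iff₀ hc]
    refine le_of_mul_le_mul_left ?_ hd
    linarith [h.increase]

theorem mem_and_eval_gradNormSq_eq_zero_of_tendsto {x : ℕ → σ → ℝ} {y : σ → ℝ} (hB : IsClosed B)
    (hx : Tendsto x atTop (nhds y)) (hstep : ∀ k, IsAscentStep F B c C (x k) (x (k + 1))) :
    y ∈ B ∧ eval y (gradNormSq F) = 0 := by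
  refine ⟨hB.mem_of_tendsto hx (Eventually.of_forall fun k =>
    (hstep k).segment_subset (left_mem_segment ℝ _ _)), ?_⟩
  have hdist : Tendsto (fun k => C * dist (x k) (x (k + 1))) atTop (nhds 0) := by
    simpa using (hx.dist (hx.comp (tendsto_add_atTop_nat 1))).const_mul C
  have hgrad : √(eval y (gradNormSq F)) ≤ 0 :=
    le_of_tendsto_of_tendsto' (((continuous_eval (gradNormSq F)).sqrt.tendsto y).comp hx) hdist
      fun k => (hstep k).grad_le _ (left_mem_segment ℝ _ _)
  exact (Real.sqrt_eq_zero (eval_gradNormSq_nonneg F y)).1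
    (le_antisymm hgrad (Real.sqrt_nonneg _))

theorem exists_tendsto_of_isAscentStep (hΩ : IsDesingularizing F B Ω) (hc : 0 < c) (hC : 0 < C)
    {A : Set (σ → ℝ)} {p : σ → ℝ} (hmax : ∀ x ∈ A, dist x p ≤ ε → eval x F ≤ eval p F)
    (hηε : η ≤ ε) {x : ℕ → σ → ℝ} (hA : ∀ k, x k ∈ A)
    (hbudget : dist (x 0) p + (C / c * Ω (eval p F) - C / c * Ω (eval (x 0) F)) ≤ η)
    (h0 : dist (x 0) p ≤ η)
    (hstep : ∀ k, dist (x k) p ≤ η →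
      dist (x (k + 1)) p ≤ ε ∧ IsAscentStep F B c C (x k) (x (k + 1))) :
    ∃ y, Tendsto x atTop (nhds y) ∧ ∀ k, dist (x k) p ≤ η := by
  have hbound {k : ℕ} (hk : dist (x k) p ≤ ε) : C / c * Ω (eval (x k) F) ≤ C / c * Ω (eval p F) :=
    mul_le_mul_of_nonneg_left (hΩ.monotone (hmax _ (hA k) hk)) (by positivity)
  have hnear : ∀ k, dist (x k) p ≤ η :=
    dist_le_of_dist_succ_le_sub (u := fun k => C / c * Ω (eval (x k) F)) (hbound (h0.trans hηε))
      hbudget fun k hk => ⟨(hstep k hk).2.dist_le hΩ hc hC, hbound (hstep k hk).1⟩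
  obtain ⟨y, hy⟩ := cauchySeq_tendsto_of_complete <|
    cauchySeq_of_dist_succ_le_sub (fun k => hbound ((hnear k).trans hηε))
      fun k => (hstep k (hnear k)).2.dist_le hΩ hc hC
  exact ⟨y, hy, hnear⟩

theorem exists_radius_forall_ascent_converges (hΩ : IsDesingularizing F B Ω) (hB : IsClosed B)
    (hcrit : {t | ∃ y ∈ B, eval y (gradNormSq F) = 0 ∧ eval y F = t}.Finite)
    (hc : 0 < c) (hC : 0 < C) (hη : 0 < η) (hηε : η ≤ ε) {A : Set (σ → ℝ)} (hA : IsClosed A)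
    {p : σ → ℝ} (hmax : ∀ x ∈ A, dist x p ≤ ε → eval x F ≤ eval p F) :
    ∃ δ > 0, ∀ x : ℕ → σ → ℝ, (∀ k, x k ∈ A) → dist (x 0) p < δ →
      (∀ k, dist (x k) p ≤ η →
        dist (x (k + 1)) p ≤ ε ∧ IsAscentStep F B c C (x k) (x (k + 1))) →
      ∃ y ∈ A, Tendsto x atTop (nhds y) ∧ dist y p ≤ η ∧ eval y F = eval p F := by
  set K := {t | ∃ y ∈ B, eval y (gradNormSq F) = 0 ∧ eval y F = t}
  have hF := continuous_eval F
  obtain ⟨r, hr, hisolated⟩ := Metric.mem_nhds_iff.1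
    ((hcrit.sdiff (t := {eval p F})).isClosed.isOpen_compl.mem_nhds fun h => h.2 rfl)
  have hbudget : ContinuousAt
      (fun x => dist x p + (C / c * Ω (eval p F) - C / c * Ω (eval x F))) p := by
    have := hΩ.continuous
    fun_prop
  obtain ⟨δ, hδ, hnear⟩ := Metric.eventually_nhds_iff.1
    ((hbudget.eventually_lt_const (u := η) (by simpa using hη)).and
      (hF.continuousAt.eventually_const_lt (sub_lt_self (eval p F) hr)))
  refine ⟨min δ η, lt_min hδ hη, fun x hxA hx0 hstep => ?_⟩
  obtain ⟨hstart, hvalue⟩ := hnear (hx0.trans_le (min_le_left _ _))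
  obtain ⟨y, hy, hxη⟩ := exists_tendsto_of_isAscentStep hΩ hc hC hmax hηε hxA hstart.le
    (hx0.le.trans (min_le_right _ _)) hstep
  have hyA : y ∈ A := hA.mem_of_tendsto hy (Eventually.of_forall hxA)
  have hyη : dist y p ≤ η := le_of_tendsto' (hy.dist tendsto_const_nhds) hxη
  have hmono : Monotone fun k => eval (x k) F :=
    monotone_nat_of_le_succ fun k => (hstep k (hxη k)).2.eval_le hc
  have hlower : eval (x 0) F ≤ eval y F :=
    ge_of_tendsto' ((hF.tendsto y).comp hy) fun k => hmono (Nat.zero_le k)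
  obtain ⟨hyB, hygrad⟩ :=
    mem_and_eval_gradNormSq_eq_zero_of_tendsto hB hy fun k => (hstep k (hxη k)).2
  refine ⟨y, hyA, hy, hyη, by_contra fun hne => hisolated ?_ ⟨⟨y, hyB, hygrad, rfl⟩, hne⟩⟩
  have hupper := hmax y hyA (hyη.trans hηε)
  rw [Metric.mem_ball, Real.dist_eq, abs_sub_lt_iff]
  constructor <;> linarith

end AscentSequences

section Frobenius

variable {m ρ κ : Type*} [Fintype m] [Fintype ρ] [Fintype κ]

theorem froSq_eq_trace (A : Matrix m ρ ℝ) : froSq A = trace (Aᵀ * A) := by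
  simp only [froSq, trace, diag_apply, mul_apply, transpose_apply, pow_two]
  exact Finset.sum_comm

theorem froSq_nonneg (A : Matrix m ρ ℝ) : 0 ≤ froSq A :=
  Finset.sum_nonneg fun _ _ => Finset.sum_nonneg fun _ _ => sq_nonneg _

theorem sq_apply_le_froSq (A : Matrix m ρ ℝ) (i : m) (j : ρ) : A i j ^ 2 ≤ froSq A :=
  (Finset.single_le_sum (f := fun j => A i j ^ 2) (fun _ _ => sq_nonneg _)
    (Finset.mem_univ j)).trans
  (Finset.single_le_sum (f := fun i => ∑ j, A i j ^ 2)
    (fun _ _ => Finset.sum_nonneg fun _ _ => sq_nonneg _) (Finset.mem_univ i))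

theorem froSq_eq_zero_iff {A : Matrix m ρ ℝ} : froSq A = 0 ↔ A = 0 := by
  refine ⟨fun h => ?_, fun h => by simp [h, froSq]⟩
  ext i j
  exact pow_eq_zero_iff two_ne_zero |>.1 (le_antisymm (h ▸ sq_apply_le_froSq A i j) (sq_nonneg _))

theorem froSq_transpose (A : Matrix m ρ ℝ) : froSq Aᵀ = froSq A :=
  Finset.sum_comm

theorem froSq_sub (A B : Matrix m ρ ℝ) :
    froSq (A - B) = froSq A - 2 * trace (Aᵀ * B) + froSq B := by
  have hcomm : trace (Bᵀ * A) = trace (Aᵀ * B) := by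
    rw [← trace_transpose, transpose_mul, transpose_transpose]
  simp only [froSq_eq_trace, transpose_sub, Matrix.sub_mul, Matrix.mul_sub, trace_sub, hcomm]
  ring

theorem froSq_smul (a : ℝ) (A : Matrix m ρ ℝ) : froSq (a • A) = a ^ 2 * froSq A := by
  simp only [froSq, Finset.mul_sum, Matrix.smul_apply, smul_eq_mul, mul_pow]

theorem froSq_sub_comm (A B : Matrix m ρ ℝ) : froSq (A - B) = froSq (B - A) := by
  rw [← neg_sub, ← neg_one_smul ℝ, froSq_smul, neg_one_sq, one_mul]

theorem froSq_add_le (A B : Matrix m ρ ℝ) : froSq (A + B) ≤ 2 * froSq A + 2 * froSq B := by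
  simp only [froSq, Finset.mul_sum, ← Finset.sum_add_distrib, Matrix.add_apply]
  refine Finset.sum_le_sum fun i _ => Finset.sum_le_sum fun j _ => ?_
  nlinarith [sq_nonneg (A i j - B i j)]

theorem froSq_mul_le (A : Matrix m ρ ℝ) (B : Matrix ρ κ ℝ) :
    froSq (A * B) ≤ froSq A * froSq B := by
  rw [← froSq_transpose B]
  simp only [froSq, Finset.sum_mul_sum]
  refine Finset.sum_le_sum fun i _ => Finset.sum_le_sum fun j _ => ?_
  rw [← Finset.sum_mul_sum, mul_apply]
  exact Finset.sum_mul_sq_le_sq_mul_sq (R := ℝ) _ _ _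

theorem froSq_transpose_mul (U : Matrix m ρ ℝ) (G : Matrix m κ ℝ) :
    froSq (Uᵀ * G) = trace (G * Gᵀ * (U * Uᵀ)) := by
  rw [← froSq_transpose, froSq_eq_trace, transpose_transpose, transpose_mul, transpose_transpose,
    Matrix.mul_assoc, trace_mul_comm, Matrix.mul_assoc, Matrix.mul_assoc, Matrix.mul_assoc]

theorem real_dotProduct_self_nonneg (x : m → ℝ) : 0 ≤ x ⬝ᵥ x :=
  Finset.sum_nonneg fun _ _ => mul_self_nonneg _

theorem neg_mul_le_dotProduct_mulVec {D : Matrix m m ℝ} {t : ℝ} (ht : 0 ≤ t)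
    (hD : froSq D ≤ t ^ 2) (x : m → ℝ) : -(t * (x ⬝ᵥ x)) ≤ x ⬝ᵥ (D *ᵥ x) := by
  have hx := real_dotProduct_self_nonneg x
  have hform : x ⬝ᵥ (D *ᵥ x) = ∑ ij : m × m, D ij.1 ij.2 * (x ij.1 * x ij.2) := by
    simp only [dotProduct, mulVec, Finset.mul_sum, Fintype.sum_prod_type]
    exact Finset.sum_congr rfl fun i _ => Finset.sum_congr rfl fun j _ => by ring
  have hsq : ∑ ij : m × m, (x ij.1 * x ij.2) ^ 2 = (x ⬝ᵥ x) ^ 2 := by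
    simp only [dotProduct, Fintype.sum_prod_type, pow_two, Finset.sum_mul_sum]
    exact Finset.sum_congr rfl fun i _ => Finset.sum_congr rfl fun j _ => by ring
  have hle : (x ⬝ᵥ (D *ᵥ x)) ^ 2 ≤ (t * (x ⬝ᵥ x)) ^ 2 := by
    rw [mul_pow, ← hsq, hform]
    refine (Finset.sum_mul_sq_le_sq_mul_sq (R := ℝ) _ _ _).trans (mul_le_mul_of_nonneg_right ?_ ?_)
    · rwa [Fintype.sum_prod_type]
    · exact Finset.sum_nonneg fun _ _ => sq_nonneg _
  exact (abs_le_of_sq_le_sq' hle (mul_nonneg ht hx)).1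

theorem mul_froSq_le_trace {H : Matrix m m ℝ} {γ : ℝ}
    (h : ∀ x : m → ℝ, γ * (x ⬝ᵥ x) ≤ x ⬝ᵥ (H *ᵥ x)) (S : Matrix m ρ ℝ) :
    γ * froSq S ≤ trace (Sᵀ * (H * S)) := by
  have hS : froSq S = ∑ j, S.col j ⬝ᵥ S.col j := by
    simp only [froSq_eq_trace, trace, diag_apply, mul_apply, transpose_apply, dotProduct, col_apply]
  have hH : trace (Sᵀ * (H * S)) = ∑ j, S.col j ⬝ᵥ (H *ᵥ S.col j) := by
    simp only [trace, diag_apply, mul_apply, transpose_apply, dotProduct, mulVec, col_apply]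
  rw [hS, hH, Finset.mul_sum]
  exact Finset.sum_le_sum fun j _ => h _

end Frobenius

section Projections

variable {m ρ : Type*} [Fintype m] [Fintype ρ]

/-- Orthogonal projections, as symmetric idempotent real matrices. -/
structure IsOrthProj (P : Matrix m m ℝ) : Prop where
  symm : Pᵀ = P
  idem : P * P = P

theorem isOrthProj_mul_transpose [DecidableEq ρ] {U : Matrix m ρ ℝ} (hU : Uᵀ * U = 1) :
    IsOrthProj (U * Uᵀ) where
  symm := by rw [transpose_mul, transpose_transpose]
  idem := by rw [Matrix.mul_assoc, ← Matrix.mul_assoc Uᵀ, hU, Matrix.one_mul]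

theorem trace_mul_transpose [DecidableEq ρ] {U : Matrix m ρ ℝ} (hU : Uᵀ * U = 1) :
    trace (U * Uᵀ) = Fintype.card ρ := by
  rw [trace_mul_comm, hU, trace_one]

theorem trace_transpose_mul_mul (M : Matrix m m ℝ) (U : Matrix m ρ ℝ) :
    trace (Uᵀ * M * U) = trace (M * (U * Uᵀ)) := by
  rw [Matrix.mul_assoc, trace_mul_comm, Matrix.mul_assoc]

theorem IsOrthProj.froSq_eq_trace {P : Matrix m m ℝ} (hP : IsOrthProj P) : froSq P = trace P := by
  rw [_root_.froSq_eq_trace, hP.symm, hP.idem]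

theorem mulVec_dotProduct_mulVec_of_isometry [DecidableEq ρ] {U : Matrix m ρ ℝ}
    (hU : Uᵀ * U = 1) (x : ρ → ℝ) : (U *ᵥ x) ⬝ᵥ (U *ᵥ x) = x ⬝ᵥ x := by
  rw [dotProduct_mulVec, ← mulVec_transpose, mulVec_mulVec, hU, one_mulVec]

end Projections

section SpectralGap

variable {m : Type*} [Fintype m] [DecidableEq m]

/-- The symmetric matrix with orthonormal eigenvectors the columns of `V` and eigenvalues `d`. -/
def conjDiagonal (V : Matrix m m ℝ) (d : m → ℝ) : Matrix m m ℝ :=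
  V * diagonal d * Vᵀ

theorem exists_eq_conjDiagonal {M : Matrix m m ℝ} (hM : M.IsHermitian) :
    ∃ V : Matrix m m ℝ, Vᵀ * V = 1 ∧ M = conjDiagonal V hM.eigenvalues := by
  refine ⟨(hM.eigenvectorUnitary : Matrix m m ℝ), ?_, ?_⟩
  · simpa [star_eq_conjTranspose] using mem_unitaryGroup_iff'.1 hM.eigenvectorUnitary.2
  · simpa [conjDiagonal, Unitary.conjStarAlgAut_apply, star_eq_conjTranspose, Function.comp_def]
      using hM.spectral_theorem

theorem transpose_conjDiagonal (V : Matrix m m ℝ) (d : m → ℝ) :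
    (conjDiagonal V d)ᵀ = conjDiagonal V d := by
  simp only [conjDiagonal, transpose_mul, transpose_transpose, diagonal_transpose, Matrix.mul_assoc]

theorem conjDiagonal_mul_conjDiagonal {V : Matrix m m ℝ} (hV : Vᵀ * V = 1) (a b : m → ℝ) :
    conjDiagonal V a * conjDiagonal V b = conjDiagonal V (a * b) :=
  calc V * diagonal a * Vᵀ * (V * diagonal b * Vᵀ)
      = V * diagonal a * (Vᵀ * V) * diagonal b * Vᵀ := by simp only [Matrix.mul_assoc]
    _ = V * diagonal (a * b) * Vᵀ := by
      rw [hV, Matrix.mul_one, Matrix.mul_assoc V, diagonal_mul_diagonal]; rfl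

theorem conjDiagonal_linear_combination {V : Matrix m m ℝ} (hV : Vᵀ * V = 1) (a b : ℝ)
    (d : m → ℝ) :
    conjDiagonal V (fun i => a * d i - b) = a • conjDiagonal V d - b • 1 := by
  have hdiag : diagonal (fun i => a * d i - b) = a • diagonal d - b • (1 : Matrix m m ℝ) := by
    rw [smul_one_eq_diagonal, ← diagonal_smul, diagonal_sub]
    rfl
  simp only [conjDiagonal, hdiag, Matrix.mul_sub, Matrix.sub_mul, Matrix.mul_smul, Matrix.smul_mul,
    Matrix.mul_one, mul_eq_one_comm.1 hV]

theorem trace_conjDiagonal {V : Matrix m m ℝ} (hV : Vᵀ * V = 1) (d : m → ℝ) :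
    trace (conjDiagonal V d) = ∑ i, d i := by
  rw [conjDiagonal, trace_mul_comm, ← Matrix.mul_assoc, hV, Matrix.one_mul, trace_diagonal]

theorem mul_dotProduct_self_le_conjDiagonal {V : Matrix m m ℝ} (hV : Vᵀ * V = 1) {d : m → ℝ}
    {γ : ℝ} (hd : ∀ i, γ ≤ d i) (x : m → ℝ) :
    γ * (x ⬝ᵥ x) ≤ x ⬝ᵥ (conjDiagonal V d *ᵥ x) := by
  have hx : x ⬝ᵥ x = (Vᵀ *ᵥ x) ⬝ᵥ (Vᵀ *ᵥ x) := by
    rw [mulVec_dotProduct_mulVec_of_isometry]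
    rw [transpose_transpose, mul_eq_one_comm.1 hV]
  have hform : x ⬝ᵥ (conjDiagonal V d *ᵥ x) = (Vᵀ *ᵥ x) ⬝ᵥ (diagonal d *ᵥ (Vᵀ *ᵥ x)) := by
    rw [conjDiagonal, ← mulVec_mulVec, ← mulVec_mulVec, dotProduct_mulVec, ← mulVec_transpose]
  rw [hx, hform]
  simp only [dotProduct, mulVec_diagonal, Finset.mul_sum]
  refine Finset.sum_le_sum fun i _ => ?_
  nlinarith [hd i, mul_self_nonneg ((Vᵀ *ᵥ x) i)]

/-- A matrix commuting with `V diag(l) Vᵀ` is block diagonal with respect to the eigenspaces. -/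
theorem commute_conjDiagonal_comp {V : Matrix m m ℝ} (hV : Vᵀ * V = 1) {l : m → ℝ}
    {Q : Matrix m m ℝ} (hQ : Q * conjDiagonal V l = conjDiagonal V l * Q) (φ : ℝ → ℝ) :
    Q * conjDiagonal V (φ ∘ l) = conjDiagonal V (φ ∘ l) * Q := by
  have hV' : V * Vᵀ = 1 := mul_eq_one_comm.1 hV
  have hconj : ∀ d : m → ℝ, Q * conjDiagonal V d = conjDiagonal V d * Q ↔
      Vᵀ * Q * V * diagonal d = diagonal d * (Vᵀ * Q * V) := by
    intro d
    constructor <;> intro h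
    · calc Vᵀ * Q * V * diagonal d = Vᵀ * (Q * conjDiagonal V d) * V := by
            simp only [conjDiagonal, Matrix.mul_assoc, hV, Matrix.mul_one]
        _ = Vᵀ * V * diagonal d * (Vᵀ * Q * V) := by
            rw [h]; simp only [conjDiagonal, Matrix.mul_assoc]
        _ = diagonal d * (Vᵀ * Q * V) := by rw [hV, Matrix.one_mul]
    · calc Q * conjDiagonal V d = V * Vᵀ * Q * V * diagonal d * Vᵀ := by
            rw [hV', Matrix.one_mul]; simp only [conjDiagonal, Matrix.mul_assoc]
        _ = V * (Vᵀ * Q * V * diagonal d) * Vᵀ := by simp only [Matrix.mul_assoc]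
        _ = conjDiagonal V d * Q * (V * Vᵀ) := by
            rw [h]; simp only [conjDiagonal, Matrix.mul_assoc]
        _ = conjDiagonal V d * Q := by rw [hV', Matrix.mul_one]
  rw [hconj] at hQ ⊢
  ext i j
  have hij := congrFun (congrFun hQ i) j
  simp only [mul_diagonal, diagonal_mul, Function.comp_apply] at hij ⊢
  by_cases hl : l i = l j
  · rw [hl, mul_comm]
  · have hzero : (Vᵀ * Q * V) i j = 0 :=
      (mul_eq_zero.1 (by linear_combination -hij :
        (l i - l j) * (Vᵀ * Q * V) i j = 0)).resolve_left (sub_ne_zero.2 hl)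
    rw [hzero, zero_mul, mul_zero]

/-- `P` is the spectral projection of the symmetric matrix `M` onto its eigenvalues above `ν`, and
all eigenvalues have distance at least `γ` from `ν`; equivalently `(2P - 1)(M - ν) = |M - ν| ≥ γ`,
which is the form used here. -/
structure HasSpectralGap (M P : Matrix m m ℝ) (ν γ : ℝ) : Prop extends IsOrthProj P where
  comm : P * M = M * P
  le_form : ∀ x : m → ℝ, γ * (x ⬝ᵥ x) ≤ x ⬝ᵥ (((2 : ℝ) • P - 1) * (M - ν • 1)) *ᵥ x

theorem exists_hasSpectralGap {M : Matrix m m ℝ} (hM : M.IsHermitian) {ν : ℝ}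
    (hν : ∀ i, hM.eigenvalues i ≠ ν) :
    ∃ P γ, 0 < γ ∧ HasSpectralGap M P ν γ ∧
      trace P = (Finset.univ.filter fun i => ν < hM.eigenvalues i).card ∧
      ∀ Q : Matrix m m ℝ, Q * M = M * Q → Q * P = P * Q := by
  classical
  obtain ⟨V, hV, hMV⟩ := exists_eq_conjDiagonal hM
  set l := hM.eigenvalues
  let φ : ℝ → ℝ := fun t => if ν < t then 1 else 0
  obtain ⟨γ, hγ, hγl⟩ : ∃ γ : ℝ, 0 < γ ∧ ∀ i, γ ≤ |l i - ν| := by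
    cases isEmpty_or_nonempty m
    · exact ⟨1, one_pos, isEmptyElim⟩
    · obtain ⟨i, hi⟩ := Finite.exists_min fun i => |l i - ν|
      exact ⟨_, abs_pos.2 (sub_ne_zero.2 (hν i)), hi⟩
  have hidem : (φ ∘ l) * (φ ∘ l) = φ ∘ l := by ext i; simp [φ]
  have habs : (fun i => 2 * (φ ∘ l) i - 1) * (fun i => 1 * l i - ν) = fun i => |l i - ν| := by
    ext i
    by_cases h : ν < l i
    · simp only [Pi.mul_apply, Function.comp_apply, φ, if_pos h, abs_of_pos (sub_pos.2 h)]; ring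
    · simp only [Pi.mul_apply, Function.comp_apply, φ, if_neg h,
        abs_of_nonpos (sub_nonpos.2 (not_lt.1 h))]; ring
  refine ⟨conjDiagonal V (φ ∘ l), γ, hγ, ⟨⟨transpose_conjDiagonal V _, ?_⟩, ?_, fun x => ?_⟩, ?_,
    fun Q hQ => commute_conjDiagonal_comp hV (hMV ▸ hQ) φ⟩
  · rw [conjDiagonal_mul_conjDiagonal hV, hidem]
  · rw [hMV, conjDiagonal_mul_conjDiagonal hV, conjDiagonal_mul_conjDiagonal hV, mul_comm]
  · have hsub : M - ν • 1 = conjDiagonal V (fun i => 1 * l i - ν) := by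
      rw [conjDiagonal_linear_combination hV, one_smul, ← hMV]
    rw [hsub, ← one_smul ℝ (1 : Matrix m m ℝ), ← conjDiagonal_linear_combination hV,
      conjDiagonal_mul_conjDiagonal hV, habs]
    exact mul_dotProduct_self_le_conjDiagonal hV hγl x
  · rw [trace_conjDiagonal hV]
    simp [φ]

namespace HasSpectralGap

variable {M P : Matrix m m ℝ} {ν γ : ℝ}

theorem reflection_comm (h : HasSpectralGap M P ν γ) :
    ((2 : ℝ) • P - 1) * (M - ν • 1) = (M - ν • 1) * ((2 : ℝ) • P - 1) := by
  simp only [Matrix.sub_mul, Matrix.mul_sub, Matrix.smul_mul, Matrix.mul_smul, h.comm,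
    Matrix.one_mul, Matrix.mul_one]
  module

theorem le_form_of_mulVec_eq_self (h : HasSpectralGap M P ν γ) {v : m → ℝ} (hv : P *ᵥ v = v) :
    (ν + γ) * (v ⬝ᵥ v) ≤ v ⬝ᵥ (M *ᵥ v) := by
  have hle := h.le_form v
  have hrefl : ((2 : ℝ) • P - 1) *ᵥ v = v := by
    rw [sub_mulVec, one_mulVec, smul_mulVec, hv]; module
  rw [h.reflection_comm, ← mulVec_mulVec, hrefl, sub_mulVec, smul_mulVec, one_mulVec,
    dotProduct_sub, dotProduct_smul, smul_eq_mul] at hle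
  linarith

theorem form_le_of_mulVec_eq_zero (h : HasSpectralGap M P ν γ) {u : m → ℝ} (hu : P *ᵥ u = 0) :
    u ⬝ᵥ (M *ᵥ u) ≤ (ν - γ) * (u ⬝ᵥ u) := by
  have hle := h.le_form u
  have hrefl : ((2 : ℝ) • P - 1) *ᵥ u = -u := by
    rw [sub_mulVec, one_mulVec, smul_mulVec, hu, smul_zero, zero_sub]
  rw [h.reflection_comm, ← mulVec_mulVec, hrefl, mulVec_neg, dotProduct_neg, sub_mulVec,
    smul_mulVec, one_mulVec, dotProduct_sub, dotProduct_smul, smul_eq_mul] at hle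
  linarith

/-- For projections `P`, `Q` of equal rank and `K = M - ν`, the trace of `(2P - 1) K (P - Q)²` is
`tr (KP) - tr (KQ)`. -/
theorem mul_froSq_sub_le (h : HasSpectralGap M P ν γ) {Q : Matrix m m ℝ} (hQ : IsOrthProj Q)
    (htr : trace Q = trace P) : γ * froSq (P - Q) ≤ trace (M * P) - trace (M * Q) := by
  refine (mul_froSq_le_trace h.le_form (P - Q)).trans_eq ?_
  have hcomm : P * (M - ν • 1) = (M - ν • 1) * P := by
    rw [Matrix.mul_sub, Matrix.sub_mul, h.comm, Matrix.mul_smul, Matrix.smul_mul, Matrix.mul_one,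
      Matrix.one_mul]
  have hshift : trace (M * P) - trace (M * Q)
      = trace ((M - ν • 1) * P) - trace ((M - ν • 1) * Q) := by
    simp only [Matrix.sub_mul, Matrix.smul_mul, Matrix.one_mul, trace_sub, trace_smul, htr]
    ring
  rw [hshift, h.reflection_comm, transpose_sub, h.symm, hQ.symm]
  generalize M - ν • (1 : Matrix m m ℝ) = K at hcomm
  have hsq : ((2 : ℝ) • P - 1) * (P - Q) * (P - Q)
      = P - (2 : ℝ) • (P * Q * P) + P * Q + Q * P - Q := by
    simp only [Matrix.sub_mul, Matrix.mul_sub, Matrix.smul_mul, Matrix.one_mul, h.idem, hQ.idem,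
      Matrix.mul_assoc]
    module
  have hPQP : trace (K * (P * Q * P)) = trace (K * (P * Q)) := by
    rw [← Matrix.mul_assoc, trace_mul_comm, ← Matrix.mul_assoc, ← Matrix.mul_assoc, hcomm,
      Matrix.mul_assoc K P P, h.idem, Matrix.mul_assoc]
  have hQP : trace (K * (Q * P)) = trace (K * (P * Q)) := by
    rw [← Matrix.mul_assoc, trace_mul_comm, ← Matrix.mul_assoc, hcomm, Matrix.mul_assoc]
  rw [trace_mul_comm, Matrix.mul_assoc, Matrix.mul_assoc, ← Matrix.mul_assoc _ (P - Q), hsq]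
  simp only [Matrix.mul_sub, Matrix.mul_add, Matrix.mul_smul, trace_sub, trace_add, trace_smul,
    hPQP, hQP, smul_eq_mul]
  ring

end HasSpectralGap

end SpectralGap

section LocalTraceMaximizers

variable {m ρ : Type*} [Fintype m]

/-- The Stiefel manifold of `m × ρ` matrices with orthonormal columns. -/
def stiefel (m ρ : Type*) [Fintype m] [DecidableEq ρ] : Set (Matrix m ρ ℝ) :=
  {U | Uᵀ * U = 1}

theorem dotProduct_mulVec_comm {M : Matrix m m ℝ} (hM : Mᵀ = M) (x y : m → ℝ) :
    x ⬝ᵥ (M *ᵥ y) = y ⬝ᵥ (M *ᵥ x) := by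
  rw [dotProduct_mulVec, dotProduct_comm, ← mulVec_transpose, hM]

theorem add_vecMulVec_mem_stiefel [DecidableEq ρ] {U : Matrix m ρ ℝ} (hU : U ∈ stiefel m ρ)
    {w : m → ℝ} {c : ρ → ℝ} {a : ℝ} (hwU : w ᵥ* U = a • c) (hw : 2 * a + w ⬝ᵥ w = 0) :
    U + vecMulVec w c ∈ stiefel m ρ := by
  change (U + vecMulVec w c)ᵀ * (U + vecMulVec w c) = 1
  rw [transpose_add, transpose_vecMulVec, Matrix.add_mul, Matrix.mul_add, Matrix.mul_add,
    show Uᵀ * U = 1 from hU, mul_vecMulVec, vecMulVec_mul, vecMulVec_mul_vecMulVec,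
    mulVec_transpose, hwU]
  ext i j
  simp only [Matrix.add_apply, vecMulVec_apply, Pi.smul_apply, smul_eq_mul]
  linear_combination (c i * c j) * hw

variable [Fintype ρ]

theorem trace_transpose_mul_mul_add_vecMulVec {M : Matrix m m ℝ} (hM : Mᵀ = M)
    (U : Matrix m ρ ℝ) (w : m → ℝ) (c : ρ → ℝ) :
    trace ((U + vecMulVec w c)ᵀ * M * (U + vecMulVec w c))
      = trace (Uᵀ * M * U) + 2 * ((U *ᵥ c) ⬝ᵥ (M *ᵥ w)) + (c ⬝ᵥ c) * (w ⬝ᵥ (M *ᵥ w)) := by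
  have hleft : trace (Uᵀ * M * vecMulVec w c) = (U *ᵥ c) ⬝ᵥ (M *ᵥ w) := by
    rw [mul_vecMulVec, trace_vecMulVec, ← mulVec_mulVec, mulVec_transpose, ← dotProduct_mulVec,
      dotProduct_comm]
  have hright : trace (vecMulVec c w * M * U) = (U *ᵥ c) ⬝ᵥ (M *ᵥ w) := by
    rw [vecMulVec_mul, vecMulVec_mul, trace_vecMulVec, dotProduct_comm, ← dotProduct_mulVec,
      ← dotProduct_mulVec, dotProduct_mulVec_comm hM]
  have hboth : trace (vecMulVec c w * M * vecMulVec w c) = (c ⬝ᵥ c) * (w ⬝ᵥ (M *ᵥ w)) := by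
    rw [vecMulVec_mul, vecMulVec_mul_vecMulVec, trace_vecMulVec, dotProduct_smul,
      ← dotProduct_mulVec, smul_eq_mul, mul_comm]
  rw [transpose_add, transpose_vecMulVec, Matrix.add_mul, Matrix.add_mul, Matrix.mul_add,
    Matrix.mul_add, trace_add, trace_add, trace_add, hleft, hright, hboth]
  ring

theorem mul_transpose_commute_of_mul_eq {M : Matrix m m ℝ} {U : Matrix m ρ ℝ} (hM : Mᵀ = M)
    (h : M * U = U * (Uᵀ * M * U)) :
    U * Uᵀ * M = M * (U * Uᵀ) := by
  have hright : M * (U * Uᵀ) = U * (Uᵀ * M * U) * Uᵀ := by rw [← Matrix.mul_assoc, h]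
  have hleft := congrArg transpose hright
  simp only [transpose_mul, transpose_transpose, hM, Matrix.mul_assoc] at hleft
  rw [hright]
  simpa only [Matrix.mul_assoc] using hleft

theorem eq_zero_and_nonpos_of_eventually_sin {a b : ℝ}
    (h : ∀ᶠ θ in nhds (0 : ℝ), Real.sin θ ^ 2 * a + 2 * Real.sin θ * Real.cos θ * b ≤ 0) :
    b = 0 ∧ a ≤ 0 := by
  have hb : b = 0 := by
    have hmax : IsLocalMax
        (fun θ => Real.sin θ ^ 2 * a + 2 * Real.sin θ * Real.cos θ * b) 0 := by
      filter_upwards [h] with θ hθ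
      simpa using hθ
    have hderiv := (((Real.hasDerivAt_sin 0).pow 2).mul_const a).add
      ((((Real.hasDerivAt_sin 0).const_mul 2).mul (Real.hasDerivAt_cos 0)).mul_const b)
    simpa using hmax.hasDerivAt_eq_zero hderiv
  obtain ⟨θ, hθ, hθ0, hθπ⟩ := ((h.filter_mono nhdsWithin_le_nhds).and
    (Ioo_mem_nhdsGT Real.pi_pos)).exists
  have hsin := Real.sin_pos_of_pos_of_lt_pi hθ0 hθπ
  refine ⟨hb, nonpos_of_mul_nonpos_right ?_ (pow_pos hsin 2)⟩
  simpa [hb] using hθ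

variable [DecidableEq ρ] {M : Matrix m m ℝ} {U : Matrix m ρ ℝ}

/-- The columns of `U` may be rotated so that `U c` moves towards a unit vector `v` orthogonal to
them. -/
theorem orthogonal_and_form_le_of_isLocalMaxOn_of_unit (hM : Mᵀ = M) (hU : U ∈ stiefel m ρ)
    (hmax : IsLocalMaxOn (fun V => trace (Vᵀ * M * V)) (stiefel m ρ) U) {c : ρ → ℝ}
    {v : m → ℝ} (hc : c ⬝ᵥ c = 1) (hv : v ⬝ᵥ v = 1) (hvU : v ᵥ* U = 0) :
    (U *ᵥ c) ⬝ᵥ (M *ᵥ v) = 0 ∧ v ⬝ᵥ (M *ᵥ v) ≤ (U *ᵥ c) ⬝ᵥ (M *ᵥ (U *ᵥ c)) := by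
  set u := U *ᵥ c with hu
  have huU : u ᵥ* U = c := by rw [← mulVec_transpose, hu, mulVec_mulVec, hU, one_mulVec]
  have huu : u ⬝ᵥ u = 1 := by rw [hu, mulVec_dotProduct_mulVec_of_isometry hU, hc]
  have hvu : v ⬝ᵥ u = 0 := by rw [hu, dotProduct_mulVec, hvU, zero_dotProduct]
  have huv : u ⬝ᵥ v = 0 := by rw [dotProduct_comm, hvu]
  let w : ℝ → m → ℝ := fun θ => (Real.cos θ - 1) • u + Real.sin θ • v
  have hmem : ∀ θ, U + vecMulVec (w θ) c ∈ stiefel m ρ := by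
    refine fun θ => add_vecMulVec_mem_stiefel hU (a := Real.cos θ - 1) ?_ ?_
    · simp only [w, add_vecMul, smul_vecMul, huU, hvU, smul_zero, add_zero]
    · simp only [w, dotProduct_add, add_dotProduct, smul_dotProduct, dotProduct_smul, huu, hv, huv,
        hvu, smul_eq_mul]
      linear_combination Real.sin_sq_add_cos_sq θ
  have htend : Tendsto (fun θ => U + vecMulVec (w θ) c) (nhds 0) (nhdsWithin U (stiefel m ρ)) := by
    refine tendsto_nhdsWithin_iff.2 ⟨Continuous.tendsto' ?_ _ _ ?_, Eventually.of_forall hmem⟩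
    · refine continuous_const.add (Continuous.matrix_vecMulVec ?_ continuous_const)
      fun_prop
    · simp [w]
  have hpath := htend.eventually hmax
  have hsin := eq_zero_and_nonpos_of_eventually_sin (a := v ⬝ᵥ (M *ᵥ v) - u ⬝ᵥ (M *ᵥ u))
    (b := u ⬝ᵥ (M *ᵥ v)) <| hpath.mono fun θ hθ => by
      beta_reduce at hθ
      rw [trace_transpose_mul_mul_add_vecMulVec hM, hc, ← hu] at hθ
      simp only [w, mulVec_add, mulVec_smul, dotProduct_add, add_dotProduct, smul_dotProduct,
        dotProduct_smul, dotProduct_mulVec_comm hM v u, smul_eq_mul] at hθ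
      linear_combination hθ - (u ⬝ᵥ (M *ᵥ u)) * Real.sin_sq_add_cos_sq θ
  exact ⟨hsin.1, sub_nonpos.1 hsin.2⟩

theorem exists_pos_smul_dotProduct_self_eq_one {n : Type*} [Fintype n] {x : n → ℝ} (hx : x ≠ 0) :
    ∃ t : ℝ, 0 < t ∧ (t • x) ⬝ᵥ (t • x) = 1 := by
  have hpos : 0 < x ⬝ᵥ x :=
    (real_dotProduct_self_nonneg x).lt_of_ne' fun h => hx (dotProduct_self_eq_zero.1 h)
  refine ⟨(√(x ⬝ᵥ x))⁻¹, by positivity, ?_⟩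
  rw [smul_dotProduct, dotProduct_smul, smul_eq_mul, smul_eq_mul, ← mul_assoc, ← mul_inv,
    Real.mul_self_sqrt hpos.le, inv_mul_cancel₀ hpos.ne']

theorem orthogonal_and_form_le_of_isLocalMaxOn (hM : Mᵀ = M) (hU : U ∈ stiefel m ρ)
    (hmax : IsLocalMaxOn (fun V => trace (Vᵀ * M * V)) (stiefel m ρ) U) (c : ρ → ℝ)
    {v : m → ℝ} (hvU : v ᵥ* U = 0) :
    (U *ᵥ c) ⬝ᵥ (M *ᵥ v) = 0 ∧
      (c ⬝ᵥ c) * (v ⬝ᵥ (M *ᵥ v)) ≤ (v ⬝ᵥ v) * ((U *ᵥ c) ⬝ᵥ (M *ᵥ (U *ᵥ c))) := by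
  rcases eq_or_ne c 0 with rfl | hc
  · simp
  rcases eq_or_ne v 0 with rfl | hv
  · simp
  obtain ⟨s, hs, hsc⟩ := exists_pos_smul_dotProduct_self_eq_one hc
  obtain ⟨t, ht, htv⟩ := exists_pos_smul_dotProduct_self_eq_one hv
  obtain ⟨horth, hle⟩ := orthogonal_and_form_le_of_isLocalMaxOn_of_unit hM hU hmax hsc htv
    (by rw [smul_vecMul, hvU, smul_zero])
  simp only [mulVec_smul, smul_dotProduct, dotProduct_smul, smul_eq_mul] at horth hle hsc htv
  refine ⟨by simpa [hs.ne', ht.ne'] using horth, ?_⟩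
  have hscaled : s ^ 2 * t ^ 2 * ((c ⬝ᵥ c) * (v ⬝ᵥ (M *ᵥ v)))
      ≤ s ^ 2 * t ^ 2 * ((v ⬝ᵥ v) * ((U *ᵥ c) ⬝ᵥ (M *ᵥ (U *ᵥ c)))) := by
    linear_combination hle + (t * (t * (v ⬝ᵥ (M *ᵥ v)))) * hsc
      - (s * (s * ((U *ᵥ c) ⬝ᵥ (M *ᵥ (U *ᵥ c))))) * htv
  exact le_of_mul_le_mul_left hscaled (by positivity)

theorem mul_eq_mul_transpose_mul_of_isLocalMaxOn (hM : Mᵀ = M) (hU : U ∈ stiefel m ρ)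
    (hmax : IsLocalMaxOn (fun V => trace (Vᵀ * M * V)) (stiefel m ρ) U) :
    M * U = U * (Uᵀ * M * U) := by
  rw [← sub_eq_zero]
  set D := M * U - U * (Uᵀ * M * U) with hD
  have hUD : Uᵀ * D = 0 := by
    rw [hD, Matrix.mul_sub, ← Matrix.mul_assoc Uᵀ U, show Uᵀ * U = 1 from hU, Matrix.one_mul,
      Matrix.mul_assoc, sub_self]
  suffices h : ∀ c, D *ᵥ c = 0 from ext_of_mulVec_single fun j => by rw [h, zero_mulVec]
  intro c
  have horth : (D *ᵥ c) ᵥ* U = 0 := by rw [← mulVec_transpose, mulVec_mulVec, hUD, zero_mulVec]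
  have hMU : M *ᵥ (U *ᵥ c) = D *ᵥ c + U *ᵥ ((Uᵀ * M * U) *ᵥ c) := by
    rw [mulVec_mulVec, mulVec_mulVec, ← add_mulVec, hD, sub_add_cancel]
  have hself := (orthogonal_and_form_le_of_isLocalMaxOn hM hU hmax c horth).1
  rw [dotProduct_mulVec_comm hM, hMU, dotProduct_add, dotProduct_mulVec _ U, horth, zero_dotProduct,
    add_zero, dotProduct_self_eq_zero] at hself
  exact hself

theorem IsOrthProj.sub_mul {P Q : Matrix m m ℝ} (hP : IsOrthProj P) (hQ : IsOrthProj Q)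
    (hcomm : Q * P = P * Q) : IsOrthProj (Q - Q * P) where
  symm := by rw [transpose_sub, transpose_mul, hP.symm, hQ.symm, hcomm]
  idem := by
    have hQQP : Q * (Q * P) = Q * P := by rw [← Matrix.mul_assoc, hQ.idem]
    have hQPQ : Q * P * Q = Q * P := by rw [hcomm, Matrix.mul_assoc, hQ.idem]
    have hQPQP : Q * P * (Q * P) = Q * P := by
      rw [← Matrix.mul_assoc, hQPQ, Matrix.mul_assoc, hP.idem]
    rw [Matrix.sub_mul, Matrix.mul_sub, Matrix.mul_sub, hQ.idem, hQQP, hQPQ, hQPQP, sub_self,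
      sub_zero]

theorem IsOrthProj.eq_of_trace_eq {P Q : Matrix m m ℝ} (hP : IsOrthProj P)
    (hQ : IsOrthProj Q) (hcomm : Q * P = P * Q) (htr : trace Q = trace P)
    (h : ∀ u v, Q *ᵥ u = u → P *ᵥ u = 0 → P *ᵥ v = v → Q *ᵥ v = 0 → u = 0 ∨ v = 0) : Q = P := by
  classical
  have hdichotomy : ∀ x y, (Q - Q * P) *ᵥ x = 0 ∨ (P - P * Q) *ᵥ y = 0 := by
    refine fun x y => h _ _ ?_ ?_ ?_ ?_ <;> rw [mulVec_mulVec, Matrix.mul_sub]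
    · rw [← Matrix.mul_assoc, hQ.idem]
    · rw [hcomm, ← Matrix.mul_assoc, hP.idem, sub_self, zero_mulVec]
    · rw [← Matrix.mul_assoc, hP.idem]
    · rw [← hcomm, ← Matrix.mul_assoc, hQ.idem, sub_self, zero_mulVec]
  have hfro : froSq (Q - Q * P) = froSq (P - P * Q) := by
    rw [(hP.sub_mul hQ hcomm).froSq_eq_trace, (hQ.sub_mul hP hcomm.symm).froSq_eq_trace, trace_sub,
      trace_sub, htr, hcomm]
  have hzero : Q - Q * P = 0 := by
    refine by_contra fun hne => hne (froSq_eq_zero_iff.1 (hfro.trans (froSq_eq_zero_iff.2 ?_)))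
    obtain ⟨x, hx⟩ : ∃ x, (Q - Q * P) *ᵥ x ≠ 0 := by
      by_contra! hall
      exact hne (ext_of_mulVec_single fun j => by rw [hall, zero_mulVec])
    exact ext_of_mulVec_single fun j => by rw [(hdichotomy x _).resolve_left hx, zero_mulVec]
  have hzero' : P - P * Q = 0 := froSq_eq_zero_iff.1 (hfro ▸ froSq_eq_zero_iff.2 hzero)
  rw [sub_eq_zero.1 hzero, hcomm, ← sub_eq_zero.1 hzero']

/-- Across a spectral gap, a direction missing from `U` would beat a superfluous one. -/
theorem mul_transpose_eq_of_isLocalMaxOn [DecidableEq m] (hM : Mᵀ = M) (hU : U ∈ stiefel m ρ)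
    (hmax : IsLocalMaxOn (fun V => trace (Vᵀ * M * V)) (stiefel m ρ) U) {P : Matrix m m ℝ}
    {ν γ : ℝ} (hγ : 0 < γ) (hP : HasSpectralGap M P ν γ) (htr : trace P = Fintype.card ρ)
    (hcomm : U * Uᵀ * P = P * (U * Uᵀ)) : U * Uᵀ = P := by
  refine hP.toIsOrthProj.eq_of_trace_eq (isOrthProj_mul_transpose hU) hcomm
    ((trace_mul_transpose hU).trans htr.symm) fun u v hQu hPu hPv hQv => ?_
  rw [← mulVec_mulVec] at hQu hQv
  have hvU : v ᵥ* U = 0 := by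
    rw [← mulVec_transpose, ← one_mulVec (Uᵀ *ᵥ v), ← hU, ← mulVec_mulVec, hQv, mulVec_zero]
  have huu : (Uᵀ *ᵥ u) ⬝ᵥ (Uᵀ *ᵥ u) = u ⬝ᵥ u := by
    rw [← mulVec_dotProduct_mulVec_of_isometry hU, hQu]
  have hle := (orthogonal_and_form_le_of_isLocalMaxOn hM hU hmax (Uᵀ *ᵥ u) hvU).2
  rw [huu, hQu] at hle
  have hu0 := real_dotProduct_self_nonneg u
  have hv0 := real_dotProduct_self_nonneg v
  have hprod : 2 * γ * ((u ⬝ᵥ u) * (v ⬝ᵥ v)) ≤ 0 := by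
    linear_combination hle
      + mul_le_mul_of_nonneg_left (hP.le_form_of_mulVec_eq_self hPv) hu0
      + mul_le_mul_of_nonneg_left (hP.form_le_of_mulVec_eq_zero hPu) hv0
  simpa only [mul_eq_zero, dotProduct_self_eq_zero] using
    le_antisymm (nonpos_of_mul_nonpos_right hprod (by positivity)) (mul_nonneg hu0 hv0)

end LocalTraceMaximizers

section NearestFrame

variable {m ρ : Type*} [Fintype m] [Fintype ρ]

/-- `C - C² = (1 - C) C (1 - C) + C (1 - C²) C / 2 + (C (1 - C))² / 2`. -/
theorem froSq_le_trace {C : Matrix ρ ρ ℝ} (hC : Cᵀ = C) (hnonneg : ∀ x : ρ → ℝ, 0 ≤ x ⬝ᵥ (C *ᵥ x))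
    (hcontr : ∀ x : ρ → ℝ, (C *ᵥ x) ⬝ᵥ (C *ᵥ x) ≤ x ⬝ᵥ x) : froSq C ≤ trace C := by
  classical
  have hsub : (1 - C)ᵀ = 1 - C := by rw [transpose_sub, transpose_one, hC]
  have hfirst : 0 ≤ trace ((1 - C) * (C * (1 - C))) := by
    have hform : ∀ x : ρ → ℝ, 0 * (x ⬝ᵥ x) ≤ x ⬝ᵥ (C *ᵥ x) := fun x => by
      rw [zero_mul]
      exact hnonneg x
    have h := mul_froSq_le_trace hform (1 - C)
    rwa [zero_mul, hsub] at h
  have hsecond : 0 ≤ trace (C * ((1 - C * C) * C)) := by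
    have hform : ∀ x : ρ → ℝ, 0 * (x ⬝ᵥ x) ≤ x ⬝ᵥ ((1 - C * C) *ᵥ x) := fun x => by
      rw [zero_mul, sub_mulVec, one_mulVec, dotProduct_sub, ← mulVec_mulVec,
        dotProduct_mulVec_comm hC, sub_nonneg]
      exact hcontr x
    have h := mul_froSq_le_trace hform C
    rwa [zero_mul, hC] at h
  have hthird : 0 ≤ trace ((1 - C) * C * (C * (1 - C))) := by
    have h := froSq_nonneg (C * (1 - C))
    rwa [froSq_eq_trace, transpose_mul, hsub, hC] at h
  rw [froSq_eq_trace, hC]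
  simp only [Matrix.sub_mul, Matrix.mul_sub, Matrix.one_mul, Matrix.mul_one, trace_sub,
    Matrix.mul_assoc] at hfirst hsecond hthird
  linarith

variable [DecidableEq ρ]

theorem exp_mem_stiefel {K : Matrix ρ ρ ℝ} (hK : Kᵀ = -K) : NormedSpace.exp K ∈ stiefel ρ ρ := by
  change (NormedSpace.exp K)ᵀ * NormedSpace.exp K = 1
  rw [← exp_transpose, hK, exp_neg,
    nonsing_inv_mul _ ((isUnit_iff_isUnit_det _).1 (isUnit_exp K))]

open scoped Matrix.Norms.Operator in
theorem hasDerivAt_trace_exp_smul_mul (K C : Matrix ρ ρ ℝ) :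
    HasDerivAt (fun t : ℝ => trace (NormedSpace.exp (t • K) * C)) (trace (K * C)) 0 := by
  have hexp := hasDerivAt_exp_smul_const K (0 : ℝ)
  rw [zero_smul, NormedSpace.exp_zero, one_mul] at hexp
  exact (traceLinearMap ρ ℝ ℝ ∘ₗ
    LinearMap.mulRight ℝ C).toContinuousLinearMap.hasFDerivAt.comp_hasDerivAt 0 hexp

/-- The rotations `exp (t (C - Cᵀ))` have `d/dt tr (exp (t (C - Cᵀ))ᵀ C) = ‖C - Cᵀ‖² / 2` at
`t = 0`. -/
theorem transpose_eq_of_forall_trace_le {C : Matrix ρ ρ ℝ}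
    (h : ∀ Q ∈ stiefel ρ ρ, trace (Qᵀ * C) ≤ trace C) : Cᵀ = C := by
  obtain ⟨K, hK⟩ : ∃ K, K = Cᵀ - C := ⟨_, rfl⟩
  have hKt : Kᵀ = -K := by rw [hK, transpose_sub, transpose_transpose, neg_sub]
  have hmax : IsLocalMax (fun t : ℝ => trace (NormedSpace.exp (t • K) * C)) 0 := by
    refine Eventually.of_forall fun t => ?_
    have hle := h _ (exp_mem_stiefel (K := (t • K)ᵀ)
      (by rw [transpose_transpose, transpose_smul, hKt, smul_neg, neg_neg]))
    simpa only [exp_transpose, transpose_transpose, zero_smul, NormedSpace.exp_zero,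
      Matrix.one_mul] using hle
  have hKC : trace (K * C) = 0 := hmax.hasDerivAt_eq_zero (hasDerivAt_trace_exp_smul_mul K C)
  have hKCt : trace (K * Cᵀ) = 0 := by
    rw [← trace_transpose, transpose_mul, transpose_transpose, hKt, Matrix.mul_neg, trace_neg,
      trace_mul_comm, hKC, neg_zero]
  refine sub_eq_zero.1 (froSq_eq_zero_iff.1 ?_)
  rw [← hK, froSq_eq_trace, hKt, Matrix.neg_mul, trace_neg]
  nth_rw 2 [hK]
  rw [Matrix.mul_sub, trace_sub, hKC, hKCt, sub_zero, neg_zero]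

theorem dotProduct_mulVec_nonneg_of_forall_trace_le {C : Matrix ρ ρ ℝ}
    (h : ∀ Q ∈ stiefel ρ ρ, trace (Qᵀ * C) ≤ trace C) (x : ρ → ℝ) : 0 ≤ x ⬝ᵥ (C *ᵥ x) := by
  rcases eq_or_ne x 0 with rfl | hx
  · simp
  obtain ⟨t, ht, hunit⟩ := exists_pos_smul_dotProduct_self_eq_one hx
  set w := t • x with hw
  have hsymm : ((1 : Matrix ρ ρ ℝ) - (2 : ℝ) • vecMulVec w w)ᵀ = 1 - (2 : ℝ) • vecMulVec w w := by
    rw [transpose_sub, transpose_one, transpose_smul, transpose_vecMulVec]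
  have hmem : 1 - (2 : ℝ) • vecMulVec w w ∈ stiefel ρ ρ := by
    change (1 - (2 : ℝ) • vecMulVec w w)ᵀ * (1 - (2 : ℝ) • vecMulVec w w) = 1
    rw [hsymm]
    simp only [Matrix.sub_mul, Matrix.mul_sub, Matrix.smul_mul, Matrix.mul_smul,
      vecMulVec_mul_vecMulVec, hunit, one_smul, Matrix.one_mul, Matrix.mul_one]
    module
  have hreflect := h _ hmem
  rw [hsymm, Matrix.sub_mul, Matrix.one_mul, trace_sub, Matrix.smul_mul, vecMulVec_mul, trace_smul,
    trace_vecMulVec, dotProduct_comm, ← dotProduct_mulVec, smul_eq_mul] at hreflect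
  have hw0 : 0 ≤ t ^ 2 * (x ⬝ᵥ (C *ᵥ x)) := by
    rw [hw, mulVec_smul, dotProduct_smul, smul_dotProduct, smul_eq_mul, smul_eq_mul] at hreflect
    linarith
  exact nonneg_of_mul_nonneg_right hw0 (by positivity)

theorem transpose_mulVec_dotProduct_le {U : Matrix m ρ ℝ} (hU : U ∈ stiefel m ρ) (y : m → ℝ) :
    (Uᵀ *ᵥ y) ⬝ᵥ (Uᵀ *ᵥ y) ≤ y ⬝ᵥ y := by
  have hres := real_dotProduct_self_nonneg (y - U *ᵥ (Uᵀ *ᵥ y))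
  have hcross : y ⬝ᵥ (U *ᵥ (Uᵀ *ᵥ y)) = (Uᵀ *ᵥ y) ⬝ᵥ (Uᵀ *ᵥ y) := by
    rw [dotProduct_mulVec, ← mulVec_transpose]
  rw [dotProduct_sub, sub_dotProduct, sub_dotProduct, dotProduct_comm (U *ᵥ (Uᵀ *ᵥ y)) y, hcross,
    mulVec_dotProduct_mulVec_of_isometry hU] at hres
  linarith

theorem mul_mem_stiefel {U : Matrix m ρ ℝ} {Q : Matrix ρ ρ ℝ} (hU : U ∈ stiefel m ρ)
    (hQ : Q ∈ stiefel ρ ρ) : U * Q ∈ stiefel m ρ := by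
  change (U * Q)ᵀ * (U * Q) = 1
  rw [transpose_mul, Matrix.mul_assoc, ← Matrix.mul_assoc Uᵀ, show Uᵀ * U = 1 from hU,
    Matrix.one_mul, hQ]

theorem froSq_of_mem_stiefel {U : Matrix m ρ ℝ} (hU : U ∈ stiefel m ρ) :
    froSq U = Fintype.card ρ := by
  rw [froSq_eq_trace, hU, trace_one]

theorem froSq_sub_of_mem_stiefel {U V : Matrix m ρ ℝ} (hU : U ∈ stiefel m ρ)
    (hV : V ∈ stiefel m ρ) : froSq (V - U) = 2 * Fintype.card ρ - 2 * trace (Vᵀ * U) := by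
  rw [froSq_sub, froSq_of_mem_stiefel hU, froSq_of_mem_stiefel hV]
  ring

theorem froSq_mul_transpose_sub {U V : Matrix m ρ ℝ} (hU : U ∈ stiefel m ρ)
    (hV : V ∈ stiefel m ρ) :
    froSq (V * Vᵀ - U * Uᵀ) = 2 * Fintype.card ρ - 2 * froSq (Vᵀ * U) := by
  rw [froSq_sub, (isOrthProj_mul_transpose hV).froSq_eq_trace,
    (isOrthProj_mul_transpose hU).froSq_eq_trace, trace_mul_transpose hU, trace_mul_transpose hV,
    (isOrthProj_mul_transpose hV).symm, froSq_transpose_mul, trace_mul_comm]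
  ring

/-- When `V` is the frame of its column space nearest to `U`, the matrix `Vᵀ U` is a positive
semidefinite contraction, so its singular values dominate their squares. -/
theorem froSq_sub_le_froSq_mul_transpose_sub {U V : Matrix m ρ ℝ} (hU : U ∈ stiefel m ρ)
    (hV : V ∈ stiefel m ρ) (hnear : ∀ Q ∈ stiefel ρ ρ, froSq (V - U) ≤ froSq (V * Q - U)) :
    froSq (V - U) ≤ froSq (V * Vᵀ - U * Uᵀ) := by
  have hpolar : ∀ Q ∈ stiefel ρ ρ, trace (Qᵀ * (Vᵀ * U)) ≤ trace (Vᵀ * U) := fun Q hQ => by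
    have h := hnear Q hQ
    rw [froSq_sub_of_mem_stiefel hU hV, froSq_sub_of_mem_stiefel hU (mul_mem_stiefel hV hQ),
      transpose_mul, Matrix.mul_assoc] at h
    linarith
  have hle := froSq_le_trace (transpose_eq_of_forall_trace_le hpolar)
    (dotProduct_mulVec_nonneg_of_forall_trace_le hpolar) fun x => by
      rw [← mulVec_mulVec]
      exact (transpose_mulVec_dotProduct_le hV _).trans_eq
        (mulVec_dotProduct_mulVec_of_isometry hU x)
  rw [froSq_sub_of_mem_stiefel hU hV, froSq_mul_transpose_sub hU hV]
  linarith

end NearestFrame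

section Perturbation

variable {m ρ : Type*} [Fintype m] [Fintype ρ]

theorem continuous_froSq : Continuous fun A : Matrix m ρ ℝ => froSq A := by
  unfold froSq
  fun_prop

theorem two_mul_trace_transpose_mul_le (γ : ℝ) (A B : Matrix m ρ ℝ) :
    2 * γ * trace (Aᵀ * B) ≤ froSq A + γ ^ 2 * froSq B := by
  have h := froSq_nonneg (A - γ • B)
  rw [froSq_sub, froSq_smul, Matrix.mul_smul, trace_smul, smul_eq_mul] at h
  linarith

variable [DecidableEq m]

theorem froSq_reflection_mul_sub_le (M M' P P' : Matrix m m ℝ) (ν : ℝ) :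
    froSq (((2 : ℝ) • P' - 1) * (M' - ν • 1) - ((2 : ℝ) • P - 1) * (M - ν • 1))
      ≤ 8 * (froSq (P' - P) * froSq (M' - ν • 1))
        + 2 * (froSq ((2 : ℝ) • P - 1) * froSq (M' - M)) := by
  have hsplit : ((2 : ℝ) • P' - 1) * (M' - ν • 1) - ((2 : ℝ) • P - 1) * (M - ν • 1)
      = (2 : ℝ) • ((P' - P) * (M' - ν • 1)) + ((2 : ℝ) • P - 1) * (M' - M) := by
    simp only [Matrix.sub_mul, Matrix.mul_sub, Matrix.smul_mul, smul_sub]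
    abel
  rw [hsplit]
  refine (froSq_add_le _ _).trans ?_
  rw [froSq_smul]
  linarith [froSq_mul_le (P' - P) (M' - ν • 1), froSq_mul_le ((2 : ℝ) • P - 1) (M' - M)]

namespace HasSpectralGap

variable {M M' P P' : Matrix m m ℝ} {ν γ : ℝ}

theorem sq_mul_froSq_sub_le (h : HasSpectralGap M P ν γ) (hγ : 0 ≤ γ) (hM : Mᵀ = M)
    (hM' : M'ᵀ = M') (hP' : IsOrthProj P') (htr : trace P' = trace P)
    (hle : trace (M' * P) ≤ trace (M' * P')) : γ ^ 2 * froSq (P' - P) ≤ froSq (M' - M) := by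
  have hgain := h.mul_froSq_sub_le hP' htr
  have hcauchy := two_mul_trace_transpose_mul_le γ (M - M') (P - P')
  rw [transpose_sub, hM, hM', Matrix.sub_mul, Matrix.mul_sub, Matrix.mul_sub, trace_sub, trace_sub,
    trace_sub] at hcauchy
  rw [froSq_sub_comm P', froSq_sub_comm M']
  nlinarith

theorem of_froSq_sub_le (h : HasSpectralGap M P ν γ) (hP' : IsOrthProj P')
    (hcomm : P' * M' = M' * P') {s : ℝ} (hs : 0 ≤ s)
    (hle : froSq (((2 : ℝ) • P' - 1) * (M' - ν • 1) - ((2 : ℝ) • P - 1) * (M - ν • 1)) ≤ s ^ 2) :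
    HasSpectralGap M' P' ν (γ - s) where
  toIsOrthProj := hP'
  comm := hcomm
  le_form x := by
    have hpert := neg_mul_le_dotProduct_mulVec hs hle x
    rw [sub_mulVec, dotProduct_sub] at hpert
    linarith [h.le_form x]

theorem eventually_of_isMaxOn [DecidableEq ρ] {U : Matrix m ρ ℝ}
    (h : HasSpectralGap M (U * Uᵀ) ν γ) (hU : U ∈ stiefel m ρ) (hγ : 0 < γ) (hM : Mᵀ = M) :
    ∀ᶠ M' in nhds M, M'ᵀ = M' → ∀ V ∈ stiefel m ρ,
      IsMaxOn (fun W => trace (Wᵀ * M' * W)) (stiefel m ρ) V →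
      HasSpectralGap M' (V * Vᵀ) ν (γ / 2) ∧
        γ ^ 2 * froSq (V * Vᵀ - U * Uᵀ) ≤ froSq (M' - M) := by
  have hcont : Continuous fun M' : Matrix m m ℝ =>
      8 * (froSq (M' - M) / γ ^ 2 * froSq (M' - ν • 1))
        + 2 * (froSq ((2 : ℝ) • (U * Uᵀ) - 1) * froSq (M' - M)) := by
    have hfro : ∀ N : Matrix m m ℝ, Continuous fun M' => froSq (M' - N) := fun N =>
      continuous_froSq.comp (continuous_id.sub continuous_const)
    have := hfro M
    have := hfro (ν • 1)
    fun_prop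
  have hzero : froSq (M - M) = 0 := by rw [sub_self, froSq_eq_zero_iff]
  filter_upwards [hcont.continuousAt.eventually_lt_const (u := (γ / 2) ^ 2)
    (by simp only [hzero, zero_div, zero_mul, mul_zero, add_zero]; positivity)]
    with M' hsmall hM' V hV hmax
  have hVproj := isOrthProj_mul_transpose hV
  have hdist : γ ^ 2 * froSq (V * Vᵀ - U * Uᵀ) ≤ froSq (M' - M) := by
    refine h.sq_mul_froSq_sub_le hγ.le hM hM' hVproj
      ((trace_mul_transpose hV).trans (trace_mul_transpose hU).symm) ?_
    rw [← trace_transpose_mul_mul, ← trace_transpose_mul_mul]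
    exact hmax hU
  refine ⟨?_, hdist⟩
  have hcomm : V * Vᵀ * M' = M' * (V * Vᵀ) :=
    mul_transpose_commute_of_mul_eq hM'
      (mul_eq_mul_transpose_mul_of_isLocalMaxOn hM' hV hmax.localize)
  have hpert := h.of_froSq_sub_le hVproj hcomm (half_pos hγ).le <| by
    refine (froSq_reflection_mul_sub_le M M' _ _ ν).trans (le_trans ?_ hsmall.le)
    gcongr
    · exact froSq_nonneg _
    · rwa [le_div_iff₀' (by positivity)]
  rwa [sub_half] at hpert

end HasSpectralGap

end Perturbation

section NearestTraceMax

variable {m ρ : Type*} [Fintype m] [Fintype ρ] [DecidableEq ρ]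

/-- `V` is, among the matrices maximizing `W ↦ tr (Wᵀ M W)` on the Stiefel manifold, one that is
nearest to `U`: the greedy choice of a block in HOOI. -/
structure IsNearestTraceMax (M : Matrix m m ℝ) (U V : Matrix m ρ ℝ) : Prop where
  mem : V ∈ stiefel m ρ
  isMaxOn : IsMaxOn (fun W => trace (Wᵀ * M * W)) (stiefel m ρ) V
  nearest : ∀ W ∈ stiefel m ρ, IsMaxOn (fun W => trace (Wᵀ * M * W)) (stiefel m ρ) W →
    froSq (V - U) ≤ froSq (W - U)

namespace IsNearestTraceMax

variable {M : Matrix m m ℝ} {U V : Matrix m ρ ℝ}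

theorem froSq_sub_le (h : IsNearestTraceMax M U V) (hU : U ∈ stiefel m ρ) :
    froSq (V - U) ≤ froSq (V * Vᵀ - U * Uᵀ) := by
  refine froSq_sub_le_froSq_mul_transpose_sub hU h.mem fun Q hQ => ?_
  refine h.nearest _ (mul_mem_stiefel h.mem hQ) (isMaxOn_iff.2 fun W hW => ?_)
  refine (isMaxOn_iff.1 h.isMaxOn W hW).trans_eq ?_
  have hQQ : Q * Qᵀ = 1 := mul_eq_one_comm.1 hQ
  rw [trace_transpose_mul_mul, trace_transpose_mul_mul, transpose_mul, Matrix.mul_assoc V,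
    ← Matrix.mul_assoc Q, hQQ, Matrix.one_mul]

theorem froSq_sub_le_add (h : IsNearestTraceMax M U V) (hU : U ∈ stiefel m ρ) (W : Matrix m ρ ℝ) :
    froSq (V - W) ≤ 4 * froSq (V * Vᵀ - W * Wᵀ) + 4 * froSq (W * Wᵀ - U * Uᵀ)
      + 2 * froSq (U - W) := by
  have hblock := froSq_add_le (V - U) (U - W)
  have hproj := froSq_add_le (V * Vᵀ - W * Wᵀ) (W * Wᵀ - U * Uᵀ)
  rw [sub_add_sub_cancel] at hblock hproj
  linarith [h.froSq_sub_le hU]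

theorem mul_froSq_sub_le [DecidableEq m] (h : IsNearestTraceMax M U V) (hU : U ∈ stiefel m ρ)
    {ν γ : ℝ} (hγ : 0 ≤ γ) (hgap : HasSpectralGap M (V * Vᵀ) ν γ) :
    γ * froSq (V - U) ≤ trace (Vᵀ * M * V) - trace (Uᵀ * M * U) := by
  rw [trace_transpose_mul_mul, trace_transpose_mul_mul]
  exact (mul_le_mul_of_nonneg_left (h.froSq_sub_le hU) hγ).trans
    (hgap.mul_froSq_sub_le (isOrthProj_mul_transpose hU)
      ((trace_mul_transpose hU).trans (trace_mul_transpose h.mem).symm))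

end IsNearestTraceMax

end NearestTraceMax

section NewtonSchulz

variable {m ρ : Type*} [Fintype m] [Fintype ρ]

/-- One Newton–Schulz step towards the nearest matrix with orthonormal columns. It fixes the Stiefel
manifold, and composing with it turns vanishing Riemannian gradients into vanishing Euclidean
ones. -/
noncomputable def newtonSchulz (A : Matrix m ρ ℝ) : Matrix m ρ ℝ :=
  (3 / 2 : ℝ) • A - (1 / 2 : ℝ) • (A * Aᵀ * A)

theorem trace_mul_eq_zero_of_symm_of_skew {S K : Matrix ρ ρ ℝ} (hS : Sᵀ = S) (hK : Kᵀ = -K) :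
    trace (S * K) = 0 := by
  refine self_eq_neg.1 ?_
  conv_lhs =>
    rw [← trace_transpose, transpose_mul, hS, hK, Matrix.neg_mul, trace_neg, trace_mul_comm]

theorem trace_transpose_mul_mul_add_smul {M : Matrix m m ℝ} (hM : Mᵀ = M) (U V : Matrix m ρ ℝ)
    (t : ℝ) : trace ((U + t • V)ᵀ * M * (U + t • V))
      = trace (Uᵀ * M * U) + t * (2 * trace (Uᵀ * M * V) + t * trace (Vᵀ * M * V)) := by
  have hcross : trace (Vᵀ * M * U) = trace (Uᵀ * M * V) := by
    rw [← trace_transpose, transpose_mul, transpose_mul, transpose_transpose, hM, Matrix.mul_assoc]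
  simp only [transpose_add, transpose_smul, Matrix.add_mul, Matrix.mul_add, Matrix.smul_mul,
    Matrix.mul_smul, trace_add, trace_smul, smul_eq_mul, hcross]
  ring

variable [DecidableEq ρ]

theorem newtonSchulz_of_mem_stiefel {U : Matrix m ρ ℝ} (hU : U ∈ stiefel m ρ) :
    newtonSchulz U = U := by
  rw [newtonSchulz, Matrix.mul_assoc, show Uᵀ * U = 1 from hU, Matrix.mul_one]
  module

theorem newtonSchulz_add_smul {U : Matrix m ρ ℝ} (hU : U ∈ stiefel m ρ) (E : Matrix m ρ ℝ)
    (t : ℝ) : newtonSchulz (U + t • E)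
      = U + t • (E - (1 / 2 : ℝ) • (U * Eᵀ * U + U * Uᵀ * E))
        - (t ^ 2 / 2) • (E * Eᵀ * U + E * Uᵀ * E + U * Eᵀ * E + t • (E * Eᵀ * E)) := by
  have hUU : U * Uᵀ * U = U := by rw [Matrix.mul_assoc, hU, Matrix.mul_one]
  have hEU : E * Uᵀ * U = E := by rw [Matrix.mul_assoc, hU, Matrix.mul_one]
  simp only [newtonSchulz, transpose_add, transpose_smul, Matrix.add_mul, Matrix.mul_add,
    Matrix.smul_mul, Matrix.mul_smul, hUU, hEU]
  module

theorem trace_mul_tangent_eq_zero {M : Matrix m m ℝ} (hM : Mᵀ = M) {U : Matrix m ρ ℝ}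
    (hU : U ∈ stiefel m ρ) (hMU : M * U = U * (Uᵀ * M * U)) (E : Matrix m ρ ℝ) :
    trace (Uᵀ * M * (E - (1 / 2 : ℝ) • (U * Eᵀ * U + U * Uᵀ * E))) = 0 := by
  have hS : (Uᵀ * M * U)ᵀ = Uᵀ * M * U := by
    rw [transpose_mul, transpose_mul, transpose_transpose, hM, Matrix.mul_assoc]
  have hUM : Uᵀ * M = Uᵀ * M * U * Uᵀ := by
    have h := congrArg transpose hMU
    rwa [transpose_mul, transpose_mul, hM, hS] at h
  have hUW : Uᵀ * (E - (1 / 2 : ℝ) • (U * Eᵀ * U + U * Uᵀ * E))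
      = (1 / 2 : ℝ) • (Uᵀ * E - Eᵀ * U) := by
    rw [Matrix.mul_sub, Matrix.mul_smul, Matrix.mul_add, Matrix.mul_assoc U, Matrix.mul_assoc U,
      ← Matrix.mul_assoc Uᵀ U, ← Matrix.mul_assoc Uᵀ U, show Uᵀ * U = 1 from hU, Matrix.one_mul,
      Matrix.one_mul]
    module
  rw [hUM, Matrix.mul_assoc _ Uᵀ, hUW]
  refine trace_mul_eq_zero_of_symm_of_skew hS ?_
  simp only [transpose_smul, transpose_sub, transpose_mul, transpose_transpose]
  module

theorem hasDerivAt_trace_newtonSchulz {M : Matrix m m ℝ} (hM : Mᵀ = M) {U : Matrix m ρ ℝ}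
    (hU : U ∈ stiefel m ρ) (hMU : M * U = U * (Uᵀ * M * U)) (E : Matrix m ρ ℝ) :
    HasDerivAt (fun t : ℝ => trace ((newtonSchulz (U + t • E))ᵀ * M * newtonSchulz (U + t • E)))
      0 0 := by
  have htangent := trace_mul_tangent_eq_zero hM hU hMU E
  have hexpand := newtonSchulz_add_smul hU E
  generalize E - (1 / 2 : ℝ) • (U * Eᵀ * U + U * Uᵀ * E) = W at htangent hexpand
  generalize E * Eᵀ * U + E * Uᵀ * E + U * Eᵀ * E = W₂ at hexpand
  generalize E * Eᵀ * E = W₃ at hexpand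
  obtain ⟨V, hV⟩ : ∃ V : ℝ → Matrix m ρ ℝ, V = fun t => W - (t / 2) • (W₂ + t • W₃) := ⟨_, rfl⟩
  have hstep : ∀ t, newtonSchulz (U + t • E) = U + t • V t := fun t => by
    rw [hexpand, hV]
    module
  have hcont : Continuous fun t : ℝ => 2 * trace (Uᵀ * M * V t) + t * trace ((V t)ᵀ * M * V t) := by
    rw [hV]
    fun_prop
  have hzero : 2 * trace (Uᵀ * M * V 0) + 0 * trace ((V 0)ᵀ * M * V 0) = 0 := by
    simp only [hV, zero_div, zero_smul, sub_zero, htangent, mul_zero, zero_mul, add_zero]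
  refine hasDerivAt_iff_tendsto_slope_zero.2 ?_
  have hlim := hcont.tendsto 0
  rw [hzero] at hlim
  refine (hlim.mono_left nhdsWithin_le_nhds).congr' ?_
  filter_upwards [self_mem_nhdsWithin] with t ht
  rw [zero_add, hstep, hstep, zero_smul, add_zero, trace_transpose_mul_mul_add_smul hM, smul_eq_mul,
    eq_inv_mul_iff_mul_eq₀ ht]
  ring

end NewtonSchulz

section SingularValueGap

variable {α : Type*} [LinearOrder α] {l : List α} {d ν : α} {r : ℕ}

theorem lt_of_mem_take_of_lt_getD (hl : l.Pairwise (· ≥ ·)) (hr : r - 1 < l.length)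
    (hν : ν < l.getD (r - 1) d) {x : α} (hx : x ∈ l.take r) : ν < x := by
  obtain ⟨i, hi, rfl⟩ := List.mem_take_iff_getElem.1 hx
  rw [List.getD_eq_getElem _ _ hr] at hν
  exact hν.trans_le (hl.rel_get_of_le (a := ⟨i, by omega⟩) (b := ⟨r - 1, hr⟩)
    (show i ≤ r - 1 by omega))

theorem lt_of_mem_drop_of_getD_lt (hl : l.Pairwise (· ≥ ·)) (hν : l.getD r d < ν) {x : α}
    (hx : x ∈ l.drop r) : x < ν := by
  obtain ⟨i, hi, rfl⟩ := List.mem_drop_iff_getElem.1 hx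
  rw [List.getD_eq_getElem _ _ (by omega)] at hν
  exact (hl.rel_get_of_le (a := ⟨r, by omega⟩) (b := ⟨r + i, by omega⟩)
    (show r ≤ r + i by omega)).trans_lt hν

theorem countP_eq_and_ne_of_getD_lt_of_lt_getD (hl : l.Pairwise (· ≥ ·)) (hlt : l.getD r d < ν)
    (hgt : ν < l.getD (r - 1) d) : l.countP (ν < ·) = r ∧ ∀ x ∈ l, x ≠ ν := by
  have hr : r - 1 < l.length := by
    by_contra! hlen
    rw [List.getD_eq_default _ _ hlen] at hgt
    rw [List.getD_eq_default _ _ (by omega)] at hlt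
    exact lt_asymm hlt hgt
  have hr0 : r ≠ 0 := by
    rintro rfl
    exact lt_asymm hlt hgt
  have htake : ∀ x ∈ l.take r, ν < x := fun x => lt_of_mem_take_of_lt_getD hl hr hgt
  have hdrop : ∀ x ∈ l.drop r, x < ν := fun x => lt_of_mem_drop_of_getD_lt hl hlt
  rw [← List.take_append_drop r l, List.countP_append,
    List.countP_eq_length.2 fun x hx => decide_eq_true (htake x hx),
    List.countP_eq_zero.2 fun x hx => by simpa using (hdrop x hx).le, List.length_take]
  refine ⟨by omega, fun x hx => ?_⟩
  rcases List.mem_append.1 hx with hx | hx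
  · exact (htake x hx).ne'
  · exact (hdrop x hx).ne

variable {m : ℕ} {κ : Type*} [Fintype κ]

theorem coe_eigList (Y : Matrix (Fin m) κ ℝ) : (eigList Y : Multiset ℝ)
    = Finset.univ.val.map (isHermitian_mul_conjTranspose_self Y).eigenvalues := by
  rw [eigList, Multiset.coe_reverse, Multiset.sort_eq]

theorem eigList_pairwise (Y : Matrix (Fin m) κ ℝ) : (eigList Y).Pairwise (· ≥ ·) :=
  List.pairwise_reverse.2 (Multiset.pairwise_sort _ _)

theorem exists_eigenvalues_ne_and_card_eq {Y : Matrix (Fin m) κ ℝ} {r : ℕ}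
    (h : sval Y (r + 1) < sval Y r) :
    ∃ ν, (∀ i, (isHermitian_mul_conjTranspose_self Y).eigenvalues i ≠ ν) ∧
      (Finset.univ.filter fun i =>
        ν < (isHermitian_mul_conjTranspose_self Y).eigenvalues i).card = r := by
  have hgap : (eigList Y).getD r 0 < (eigList Y).getD (r - 1) 0 :=
    lt_of_not_ge fun hge => h.not_ge (Real.sqrt_le_sqrt hge)
  obtain ⟨ν, hlt, hgt⟩ := exists_between hgap
  obtain ⟨hcount, hne⟩ := countP_eq_and_ne_of_getD_lt_of_lt_getD (eigList_pairwise Y) hlt hgt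
  refine ⟨ν, fun i => hne _ ?_, ?_⟩
  · rw [← Multiset.mem_coe, coe_eigList]
    exact Multiset.mem_map_of_mem _ (Finset.mem_univ_val i)
  · rw [← Multiset.coe_countP, coe_eigList, Multiset.countP_map] at hcount
    simpa only [Finset.card_def, Finset.filter_val, decide_eq_true_eq] using hcount

theorem exists_hasSpectralGap_of_sval_lt {Y : Matrix (Fin m) κ ℝ} {r : ℕ}
    (h : sval Y (r + 1) < sval Y r) {U : Matrix (Fin m) (Fin r) ℝ}
    (hU : U ∈ stiefel (Fin m) (Fin r))
    (hmax : IsLocalMaxOn (fun V => trace (Vᵀ * (Y * Yᵀ) * V)) (stiefel (Fin m) (Fin r)) U) :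
    ∃ ν γ, 0 < γ ∧ HasSpectralGap (Y * Yᵀ) (U * Uᵀ) ν γ := by
  obtain ⟨ν, hne, hcard⟩ := exists_eigenvalues_ne_and_card_eq h
  obtain ⟨P, γ, hγ, hP, htr, hcomm⟩ :=
    exists_hasSpectralGap (isHermitian_mul_conjTranspose_self Y) hne
  rw [conjTranspose_eq_transpose_of_trivial] at hP hcomm
  have hM : (Y * Yᵀ)ᵀ = Y * Yᵀ := by rw [transpose_mul, transpose_transpose]
  have hUP : U * Uᵀ = P := mul_transpose_eq_of_isLocalMaxOn hM hU hmax hγ hP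
    (by rw [htr, hcard, Fintype.card_fin])
    (hcomm _ (mul_transpose_commute_of_mul_eq hM
      (mul_eq_mul_transpose_mul_of_isLocalMaxOn hM hU hmax)))
  exact ⟨ν, γ, hγ, hUP ▸ hP⟩

end SingularValueGap

section TensorBlocks

variable {N : ℕ} {I r : Fin N → ℕ}

theorem sum_eq_sum_sum_subtype_ne {M : Type*} [AddCommMonoid M] (β : Fin N → ℕ) (n : Fin N)
    (f : ((i : Fin N) → Fin (β i)) → M) :
    ∑ c, f c = ∑ a : Fin (β n), ∑ c' : ((m : {m : Fin N // m ≠ n}) → Fin (β m.1)),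
      f (fun i => if h : i = n then Fin.cast (by rw [h]) a else c' ⟨i, h⟩) := by
  rw [← Fintype.sum_prod_type']
  refine Fintype.sum_equiv (Equiv.piSplitAt n fun i => Fin (β i)) _ _ fun c => ?_
  congr 1
  ext i
  by_cases h : i = n
  · subst h; simp
  · simp [h]

variable (X : ((n : Fin N) → Fin (I n)) → ℝ)

theorem Gmat_congr {A B : (n : Fin N) → Matrix (Fin (I n)) (Fin (r n)) ℝ} {n : Fin N}
    (h : ∀ i, i ≠ n → A i = B i) : Gmat X A n = Gmat X B n := by
  funext j c
  exact Finset.sum_congr rfl fun idx _ =>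
    congrArg _ (Finset.prod_congr rfl fun m _ => by rw [h m.1 m.2])

theorem fval_eq_froSq (A : (n : Fin N) → Matrix (Fin (I n)) (Fin (r n)) ℝ) (n : Fin N) :
    fval X A = froSq ((A n)ᵀ * Gmat X A n) := by
  rw [fval, froSq, sum_eq_sum_sum_subtype_ne r n]
  refine Finset.sum_congr rfl fun a _ => Finset.sum_congr rfl fun c' _ => ?_
  rw [sum_eq_sum_sum_subtype_ne I n, mul_apply]
  congr 1
  refine Finset.sum_congr rfl fun j _ => ?_
  rw [transpose_apply, Gmat, Finset.mul_sum]
  refine Finset.sum_congr rfl fun idx _ => ?_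
  rw [Fintype.prod_eq_mul_prod_subtype_ne _ n]
  have hne : ∀ {β : Fin N → ℕ} (b : Fin (β n)) (c : ∀ m : {m : Fin N // m ≠ n}, Fin (β m.1))
      (m : {m : Fin N // m ≠ n}),
      (if h : m.1 = n then Fin.cast (by rw [h]) b else c ⟨m.1, h⟩ : Fin (β m.1)) = c m := by
    intro β b c m
    simp [m.2]
  simp only [hne, ↓reduceDIte, Fin.cast_eq_self]
  ring

end TensorBlocks

section FactorTuples

variable {N : ℕ} {I r : Fin N → ℕ}

/-- Tuples of factor matrices of prescribed sizes, with orthonormal columns or not. -/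
abbrev Factors (I r : Fin N → ℕ) : Type :=
  (n : Fin N) → Matrix (Fin (I n)) (Fin (r n)) ℝ

/-- The positions of the entries of a tuple of factor matrices. -/
abbrev FactorIndex (I r : Fin N → ℕ) : Type :=
  (n : Fin N) × Fin (I n) × Fin (r n)

/-- The vector of entries of a tuple of factor matrices, which turns functions of a tuple into
functions on a finite-dimensional space with its sup norm. -/
def flatten : Factors I r ≃ₜ (FactorIndex I r → ℝ) where
  toFun A s := A s.1 s.2.1 s.2.2
  invFun x n i j := x ⟨n, i, j⟩
  continuous_toFun := by fun_prop
  continuous_invFun := by fun_prop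

theorem flatten_apply (A : Factors I r) (n : Fin N) (i : Fin (I n)) (j : Fin (r n)) :
    flatten A ⟨n, i, j⟩ = A n i j :=
  rfl

theorem tdist_eq_sqrt_sum (A B : Factors I r) :
    tdist A B = √(∑ s, (flatten A s - flatten B s) ^ 2) := by
  simp only [tdist, froSq, Fintype.sum_sigma, Fintype.sum_prod_type, flatten_apply,
    Matrix.sub_apply]

theorem dist_flatten_le_tdist (A B : Factors I r) : dist (flatten A) (flatten B) ≤ tdist A B := by
  rw [tdist_eq_sqrt_sum]
  refine (dist_pi_le_iff (Real.sqrt_nonneg _)).2 fun s => Real.abs_le_sqrt ?_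
  exact Finset.single_le_sum (f := fun s => (flatten A s - flatten B s) ^ 2)
    (fun s _ => sq_nonneg _) (Finset.mem_univ s)

theorem hasBasis_nhds_dist_flatten (A : Factors I r) :
    (nhds A).HasBasis (fun ε : ℝ => 0 < ε) fun ε => {B | dist (flatten B) (flatten A) ≤ ε} := by
  rw [flatten.isInducing.nhds_eq_comap]
  exact Metric.nhds_basis_closedBall.comap flatten

theorem continuous_tdist (B : Factors I r) : Continuous fun A => tdist A B :=
  Real.continuous_sqrt.comp <| continuous_finsetSum _ fun n _ =>
    continuous_froSq.comp ((continuous_apply n).sub continuous_const)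

theorem tdist_self (A : Factors I r) : tdist A A = 0 := by
  simp only [tdist_eq_sqrt_sum, sub_self, ne_eq, OfNat.ofNat_ne_zero, not_false_eq_true, zero_pow,
    Finset.sum_const_zero, Real.sqrt_zero]

theorem isClosed_setOf_tfeas : IsClosed {A : Factors I r | TFeas A} := by
  simp only [TFeas, Set.ofPred_forall]
  exact isClosed_iInter fun n => isClosed_eq (by fun_prop) continuous_const

theorem TFeas.update {A : Factors I r} (hA : TFeas A) {n : Fin N}
    {U : Matrix (Fin (I n)) (Fin (r n)) ℝ} (hU : U ∈ stiefel (Fin (I n)) (Fin (r n))) :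
    TFeas (Function.update A n U) := by
  intro i
  rcases eq_or_ne i n with rfl | hi
  · rwa [Function.update_self]
  · rw [Function.update_of_ne hi]
    exact hA i

variable (X : ((n : Fin N) → Fin (I n)) → ℝ)

theorem localMax_iff_eventually {A : Factors I r} :
    LocalMax X A ↔ TFeas A ∧ ∀ᶠ B in nhds A, TFeas B → fval X B ≤ fval X A := by
  refine and_congr_right fun _ => ⟨?_, fun h => ?_⟩
  · rintro ⟨ε, hε, h⟩
    have hnear := (continuous_tdist A).continuousAt.eventually_lt_const (u := ε)
      ((tdist_self A).trans_lt hε)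
    filter_upwards [hnear] with B hB hfeas using h B hfeas hB.le
  · obtain ⟨ε, hε, hball⟩ := (hasBasis_nhds_dist_flatten A).eventually_iff.1 h
    exact ⟨ε, hε, fun B hfeas hB => hball ((dist_flatten_le_tdist B A).trans hB) hfeas⟩

/-- The Gram matrix `Gₙ(A) Gₙ(A)ᵀ`, whose trace form is `f` as a function of the `n`-th block. -/
noncomputable def unfoldingGram (A : Factors I r) (n : Fin N) :
    Matrix (Fin (I n)) (Fin (I n)) ℝ :=
  Gmat X A n * (Gmat X A n)ᵀ

theorem transpose_unfoldingGram (A : Factors I r) (n : Fin N) :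
    (unfoldingGram X A n)ᵀ = unfoldingGram X A n := by
  rw [unfoldingGram, transpose_mul, transpose_transpose]

theorem unfoldingGram_congr {A B : Factors I r} {n : Fin N} (h : ∀ i, i ≠ n → A i = B i) :
    unfoldingGram X A n = unfoldingGram X B n := by
  rw [unfoldingGram, Gmat_congr X h, unfoldingGram]

theorem unfoldingGram_update (A : Factors I r) (n : Fin N)
    (U : Matrix (Fin (I n)) (Fin (r n)) ℝ) :
    unfoldingGram X (Function.update A n U) n = unfoldingGram X A n :=
  unfoldingGram_congr X fun _ hi => Function.update_of_ne hi U A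

theorem continuous_unfoldingGram (n : Fin N) :
    Continuous fun A : Factors I r => unfoldingGram X A n := by
  have hG : Continuous fun A : Factors I r => Gmat X A n := by
    unfold Gmat
    fun_prop
  exact hG.matrix_mul hG.matrix_transpose

theorem froSq_transpose_mul_Gmat (A : Factors I r) (n : Fin N)
    (U : Matrix (Fin (I n)) (Fin (r n)) ℝ) :
    froSq (Uᵀ * Gmat X A n) = trace (Uᵀ * unfoldingGram X A n * U) := by
  rw [froSq_transpose_mul, trace_transpose_mul_mul, unfoldingGram]

theorem fval_eq_trace (A : Factors I r) (n : Fin N) :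
    fval X A = trace ((A n)ᵀ * unfoldingGram X A n * A n) := by
  rw [fval_eq_froSq X A n, froSq_transpose_mul_Gmat]

theorem fval_update (A : Factors I r) (n : Fin N) (U : Matrix (Fin (I n)) (Fin (r n)) ℝ) :
    fval X (Function.update A n U) = trace (Uᵀ * unfoldingGram X A n * U) := by
  rw [fval_eq_trace X _ n, Function.update_self, unfoldingGram_update]

variable {X}

theorem LocalMax.isLocalMaxOn_trace {A : Factors I r} (h : LocalMax X A) (n : Fin N) :
    IsLocalMaxOn (fun U => trace (Uᵀ * unfoldingGram X A n * U))
      (stiefel (Fin (I n)) (Fin (r n))) (A n) := by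
  obtain ⟨hfeas, hmax⟩ := (localMax_iff_eventually X).1 h
  have hupdate : Tendsto (Function.update A n) (nhds (A n)) (nhds A) :=
    (continuous_const.update n continuous_id).tendsto' _ _ (Function.update_eq_self n A)
  refine eventually_nhdsWithin_iff.2 ?_
  filter_upwards [hupdate.eventually hmax] with U hU hmem
  have := hU (hfeas.update hmem)
  rwa [fval_update, fval_eq_trace X A n] at this

theorem exists_hasSpectralGap_unfoldingGram {A : Factors I r} (h : LocalMax X A)
    (hnd : NonDeg X A) (n : Fin N) :
    ∃ ν γ, 0 < γ ∧ HasSpectralGap (unfoldingGram X A n) (A n * (A n)ᵀ) ν γ :=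
  exists_hasSpectralGap_of_sval_lt (hnd n) (h.1 n) (h.isLocalMaxOn_trace n)

end FactorTuples

section BlockStep

variable {N : ℕ} {I r : Fin N → ℕ} {X : ((n : Fin N) → Fin (I n)) → ℝ} {A₀ : Factors I r}

theorem exists_forall_eventually_mul_froSq_sub_le (h : LocalMax X A₀) (hnd : NonDeg X A₀)
    (n : Fin N) :
    ∃ γ > 0, ∀ᶠ A in nhds A₀, TFeas A → ∀ U, IsNearestTraceMax (unfoldingGram X A n) (A n) U →
      γ * froSq (U - A n) ≤ fval X (Function.update A n U) - fval X A := by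
  obtain ⟨ν, γ, hγ, hgap⟩ := exists_hasSpectralGap_unfoldingGram h hnd n
  refine ⟨γ / 2, half_pos hγ, ?_⟩
  filter_upwards [((continuous_unfoldingGram X n).tendsto A₀).eventually
    (hgap.eventually_of_isMaxOn (h.1 n) hγ (transpose_unfoldingGram X A₀ n))] with A hA hfeas U hU
  rw [fval_update, fval_eq_trace X A n]
  exact hU.mul_froSq_sub_le (hfeas n) (half_pos hγ).le
    (hA (transpose_unfoldingGram X A n) U hU.mem hU.isMaxOn).1

theorem exists_forall_mem_of_froSq_sub_lt {m ρ : Type*} [Fintype m] [Fintype ρ]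
    {B : Matrix m ρ ℝ} {s : Set (Matrix m ρ ℝ)} (hs : s ∈ nhds B) :
    ∃ ε > 0, ∀ V, froSq (V - B) < ε → V ∈ s := by
  obtain ⟨ε, hε, hball⟩ := (Metric.nhds_basis_closedBall (α := m → ρ → ℝ) (x := B)).mem_iff.1 hs
  refine ⟨ε ^ 2, by positivity, fun V hV => hball ?_⟩
  refine (dist_pi_le_iff hε.le).2 fun i => (dist_pi_le_iff hε.le).2 fun j => ?_
  exact abs_le_of_sq_le_sq ((sq_apply_le_froSq (V - B) i j).trans hV.le) hε.le

theorem eventually_forall_mem_of_isNearestTraceMax (h : LocalMax X A₀) (hnd : NonDeg X A₀)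
    (n : Fin N) {s : Set (Matrix (Fin (I n)) (Fin (r n)) ℝ)} (hs : s ∈ nhds (A₀ n)) :
    ∀ᶠ A in nhds A₀, TFeas A → ∀ U, IsNearestTraceMax (unfoldingGram X A n) (A n) U → U ∈ s := by
  obtain ⟨ν, γ, hγ, hgap⟩ := exists_hasSpectralGap_unfoldingGram h hnd n
  obtain ⟨ε, hε, hmem⟩ := exists_forall_mem_of_froSq_sub_lt hs
  have hcont : Continuous fun A : Factors I r =>
      4 * (froSq (unfoldingGram X A n - unfoldingGram X A₀ n) / γ ^ 2)
        + 4 * froSq (A₀ n * (A₀ n)ᵀ - A n * (A n)ᵀ) + 2 * froSq (A n - A₀ n) := by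
    have := continuous_unfoldingGram (r := r) X n
    have hfro {m ρ : Type} [Fintype m] [Fintype ρ] := continuous_froSq (m := m) (ρ := ρ)
    fun_prop
  have hzero {m ρ : Type} [Fintype m] [Fintype ρ] : froSq (0 : Matrix m ρ ℝ) = 0 :=
    froSq_eq_zero_iff.2 rfl
  have hsmall := (hcont.tendsto A₀).eventually_lt_const (u := ε)
    (by simpa only [sub_self, hzero, zero_div, mul_zero, add_zero] using hε)
  filter_upwards [hsmall, ((continuous_unfoldingGram X n).tendsto A₀).eventually
    (hgap.eventually_of_isMaxOn (h.1 n) hγ (transpose_unfoldingGram X A₀ n))]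
    with A hlt hA hfeas U hU
  have hpert := (hA (transpose_unfoldingGram X A n) U hU.mem hU.isMaxOn).2
  rw [← le_div_iff₀' (by positivity)] at hpert
  exact hmem U (by linarith [hU.froSq_sub_le_add (hfeas n) (A₀ n)])

end BlockStep

section Sweep

variable {N : ℕ} {I r : Fin N → ℕ}

/-- The state of a sweep from `A` to `A'` after its first `m` block updates. -/
def partialSweep (A A' : Factors I r) (m : ℕ) : Factors I r :=
  fun i => if i.1 < m then A' i else A i

theorem partialSweep_zero (A A' : Factors I r) : partialSweep A A' 0 = A :=
  funext fun _ => if_neg (Nat.not_lt_zero _)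

theorem partialSweep_top (A A' : Factors I r) : partialSweep A A' N = A' :=
  funext fun i => if_pos i.2

theorem partialSweep_apply_self (A A' : Factors I r) (n : Fin N) : partialSweep A A' n n = A n :=
  if_neg (lt_irrefl _)

theorem partialSweep_succ_apply_self (A A' : Factors I r) (n : Fin N) :
    partialSweep A A' (n + 1) n = A' n :=
  if_pos (Nat.lt_succ_self _)

theorem partialSweep_succ (A A' : Factors I r) (n : Fin N) :
    partialSweep A A' (n + 1) = Function.update (partialSweep A A' n) n (A' n) := by
  funext i
  rcases eq_or_ne i n with rfl | hi
  · rw [Function.update_self, partialSweep_succ_apply_self]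
  · have hiff : i.1 < n.1 + 1 ↔ i.1 < n.1 := by
      have := Fin.val_ne_of_ne hi
      omega
    rw [Function.update_of_ne hi, partialSweep, partialSweep]
    simp only [hiff]

theorem TFeas.partialSweep {A A' : Factors I r} (hA : TFeas A) (hA' : TFeas A') (m : ℕ) :
    TFeas (partialSweep A A' m) := by
  intro i
  rw [_root_.partialSweep]
  split_ifs
  · exact hA' i
  · exact hA i

/-- `A'` arises from `A` by one sweep of greedy HOOI. -/
structure IsGreedySweep (X : ((n : Fin N) → Fin (I n)) → ℝ) (A A' : Factors I r) : Prop where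
  tfeas : TFeas A'
  isNearestTraceMax : ∀ n : Fin N,
    IsNearestTraceMax (unfoldingGram X (partialSweep A A' n) n) (A n) (A' n)

variable {X : ((n : Fin N) → Fin (I n)) → ℝ}

theorem IsGreedyHOOI.isGreedySweep {A : ℕ → Factors I r} (hA : IsGreedyHOOI X A) (k : ℕ) :
    IsGreedySweep X (A k) (A (k + 1)) := by
  refine ⟨hA.1.1 (k + 1), fun n => ?_⟩
  have htrace : ∀ U : Matrix (Fin (I n)) (Fin (r n)) ℝ, froSq (Uᵀ * Gseq X A k n)
      = trace (Uᵀ * unfoldingGram X (partialSweep (A k) (A (k + 1)) n) n * U) :=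
    froSq_transpose_mul_Gmat X _ n
  have hmax := hA.1.2 k n
  have hnear := hA.2 k n
  simp only [htrace] at hmax hnear
  refine ⟨hA.1.1 (k + 1) n, isMaxOn_iff.2 hmax, fun W hW hWmax => ?_⟩
  exact (Real.sqrt_le_sqrt_iff (froSq_nonneg _)).1 (hnear W hW (isMaxOn_iff.1 hWmax))

variable {A₀ : Factors I r}

theorem eventually_forall_partialSweep (h : LocalMax X A₀) (hnd : NonDeg X A₀) {m : ℕ}
    (hm : m ≤ N) {p : Factors I r → Prop} (hp : ∀ᶠ A in nhds A₀, p A) :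
    ∀ᶠ A in nhds A₀, TFeas A → ∀ A', IsGreedySweep X A A' → p (partialSweep A A' m) := by
  induction m generalizing p with
  | zero =>
    filter_upwards [hp] with A hA _ A' _
    rwa [partialSweep_zero]
  | succ m ih =>
    obtain ⟨n, rfl⟩ : ∃ n : Fin N, n.1 = m := ⟨⟨m, hm⟩, rfl⟩
    have hupdate : Tendsto (fun z : Factors I r × _ => Function.update z.1 n z.2)
        (nhds A₀ ×ˢ nhds (A₀ n)) (nhds A₀) := by
      rw [← nhds_prod_eq]
      exact (continuous_fst.update n continuous_snd).tendsto' _ _ (Function.update_eq_self n A₀)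
    obtain ⟨q, hq, s, hs, hqs⟩ := eventually_prod_iff.1 (hupdate.eventually hp)
    filter_upwards [ih n.2.le (hq.and (eventually_forall_mem_of_isNearestTraceMax h hnd n hs))]
      with A hA hfeas A' hA'
    obtain ⟨hqA, hblock⟩ := hA hfeas A' hA'
    rw [partialSweep_succ]
    refine hqs hqA (hblock (hfeas.partialSweep hA'.tfeas n) (A' n) ?_)
    rw [partialSweep_apply_self]
    exact hA'.isNearestTraceMax n

theorem sum_mul_froSq_sub_le {γ : Fin N → ℝ} {A A' : Factors I r}
    (hγ : ∀ n : Fin N, γ n * froSq (A' n - A n)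
      ≤ fval X (partialSweep A A' (n + 1)) - fval X (partialSweep A A' n)) :
    ∑ n, γ n * froSq (A' n - A n) ≤ fval X A' - fval X A := by
  refine (Finset.sum_le_sum fun n _ => hγ n).trans_eq ?_
  rw [Fin.sum_univ_eq_sum_range
    (fun m => fval X (partialSweep A A' (m + 1)) - fval X (partialSweep A A' m)),
    Finset.sum_range_sub fun m => fval X (partialSweep A A' m), partialSweep_zero,
    partialSweep_top]

theorem exists_eventually_mul_dist_sq_le (h : LocalMax X A₀) (hnd : NonDeg X A₀) :
    ∃ c > 0, ∀ᶠ A in nhds A₀, TFeas A → ∀ A', IsGreedySweep X A A' →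
      c * dist (flatten A) (flatten A') ^ 2 ≤ fval X A' - fval X A := by
  choose γ hγ hblock using exists_forall_eventually_mul_froSq_sub_le h hnd
  obtain ⟨c, hc, hcγ⟩ : ∃ c > 0, ∀ n, c ≤ γ n :=
    ((eventually_mem_nhdsWithin (s := Set.Ioi (0 : ℝ))).and
      (eventually_all.2 fun n => (eventually_le_nhds (hγ n)).filter_mono nhdsWithin_le_nhds)).exists
  refine ⟨c, hc, ?_⟩
  filter_upwards [eventually_all.2 fun n : Fin N =>
    eventually_forall_partialSweep h hnd n.2.le (hblock n)] with A hA hfeas A' hA'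
  have hstep : ∀ n : Fin N, γ n * froSq (A' n - A n)
      ≤ fval X (partialSweep A A' (n + 1)) - fval X (partialSweep A A' n) := fun n => by
    have hn := hA n hfeas A' hA' (hfeas.partialSweep hA'.tfeas n) (A' n)
    rw [partialSweep_apply_self, ← partialSweep_succ] at hn
    exact hn (hA'.isNearestTraceMax n)
  calc c * dist (flatten A) (flatten A') ^ 2
      ≤ c * tdist A' A ^ 2 := by
        rw [dist_comm]
        gcongr
        exact dist_flatten_le_tdist A' A
    _ = ∑ n, c * froSq (A' n - A n) := by
        rw [tdist, Real.sq_sqrt (Finset.sum_nonneg fun n _ => froSq_nonneg _), Finset.mul_sum]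
    _ ≤ ∑ n, γ n * froSq (A' n - A n) := by
        gcongr with n
        · exact froSq_nonneg _
        · exact hcγ n
    _ ≤ fval X A' - fval X A := sum_mul_froSq_sub_le hstep

end Sweep

section SmoothedObjective

open MvPolynomial

variable {N : ℕ} {I r : Fin N → ℕ}

/-- The entry `(i, j)` of the Newton–Schulz step of the `n`-th block, as a polynomial in the entries
of the tuple. -/
noncomputable def newtonSchulzPoly (n : Fin N) (i : Fin (I n)) (j : Fin (r n)) :
    MvPolynomial (FactorIndex I r) ℝ :=
  C (3 / 2) * X ⟨n, i, j⟩
    - C (1 / 2) * ∑ l, (∑ k, X ⟨n, i, k⟩ * X ⟨n, l, k⟩) * X ⟨n, l, j⟩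

theorem eval_newtonSchulzPoly (A : Factors I r) (n : Fin N) (i : Fin (I n)) (j : Fin (r n)) :
    eval (flatten A) (newtonSchulzPoly n i j) = newtonSchulz (A n) i j := by
  simp only [newtonSchulzPoly, newtonSchulz, map_sub, map_mul, map_sum, eval_C, eval_X,
    flatten_apply, Matrix.sub_apply, Matrix.smul_apply, mul_apply, transpose_apply, smul_eq_mul]

variable (T : ((n : Fin N) → Fin (I n)) → ℝ)

/-- The polynomial `A ↦ f(newtonSchulz A₁, …, newtonSchulz A_N)` in the entries of `A`. It agrees
with `f` on feasible tuples, where its Euclidean gradient is a Riemannian gradient of `f`. -/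
noncomputable def smoothedObjective : MvPolynomial (FactorIndex I r) ℝ :=
  ∑ c : (n : Fin N) → Fin (r n),
    (∑ idx, C (T idx) * ∏ n, newtonSchulzPoly n (idx n) (c n)) ^ 2

theorem eval_smoothedObjective (A : Factors I r) :
    eval (flatten A) (smoothedObjective T) = fval T fun n => newtonSchulz (A n) := by
  simp only [smoothedObjective, fval, map_sum, map_pow, map_mul, map_prod, eval_C,
    eval_newtonSchulzPoly]

variable {A : Factors I r} (hA : TFeas A)
include hA

theorem eval_smoothedObjective_of_tfeas :
    eval (flatten A) (smoothedObjective T) = fval T A := by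
  rw [eval_smoothedObjective]
  exact congrArg (fval T) (funext fun n => newtonSchulz_of_mem_stiefel (hA n))

theorem eval_smoothedObjective_update (n : Fin N) (U : Matrix (Fin (I n)) (Fin (r n)) ℝ) :
    eval (flatten (Function.update A n U)) (smoothedObjective T)
      = trace ((newtonSchulz U)ᵀ * unfoldingGram T A n * newtonSchulz U) := by
  rw [eval_smoothedObjective, fval_eq_trace T _ n, Function.update_self,
    unfoldingGram_congr T (B := A) fun k hk => ?_]
  rw [Function.update_of_ne hk, newtonSchulz_of_mem_stiefel (hA k)]

omit hA in
theorem flatten_update_add_smul_single (A : Factors I r) (n : Fin N) (i : Fin (I n))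
    (j : Fin (r n)) (t : ℝ) :
    flatten (Function.update A n (A n + t • Matrix.single i j 1))
      = flatten A + t • Pi.single ⟨n, i, j⟩ 1 := by
  funext ⟨k, a, b⟩
  rcases eq_or_ne k n with rfl | hk
  · simp [flatten_apply, Matrix.single_apply, Pi.single_apply, eq_comm]
  · simp [flatten_apply, hk]

theorem eval_pderiv_smoothedObjective_eq_zero {n : Fin N}
    (h : unfoldingGram T A n * A n = A n * ((A n)ᵀ * unfoldingGram T A n * A n))
    (i : Fin (I n)) (j : Fin (r n)) :
    eval (flatten A) (pderiv ⟨n, i, j⟩ (smoothedObjective T)) = 0 := by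
  have hzero := hasDerivAt_trace_newtonSchulz (transpose_unfoldingGram T A n) (hA n) h
    (Matrix.single i j 1)
  simp only [← eval_smoothedObjective_update T hA, flatten_update_add_smul_single] at hzero
  have hline : HasDerivAt (fun t : ℝ => flatten A + t • Pi.single ⟨n, i, j⟩ 1)
      (Pi.single (⟨n, i, j⟩ : FactorIndex I r) 1) 0 := by
    simpa using ((hasDerivAt_id (0 : ℝ)).smul_const _).const_add (flatten A)
  have hderiv := (hasFDerivAt_eval (smoothedObjective T) _).comp_hasDerivAt (0 : ℝ) hline
  simpa [evalFDeriv_apply, Pi.single_apply] using hderiv.unique hzero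

end SmoothedObjective

section PolynomialGradient

open MvPolynomial

variable {σ : Type*} [Fintype σ]

theorem exists_forall_abs_eval_pderiv_sub_le (F : MvPolynomial σ ℝ) {K : Set (σ → ℝ)}
    (hK : IsCompact K) : ∃ L : ℝ, 0 ≤ L ∧ ∀ x ∈ K, ∀ y ∈ K, ∀ i,
      |eval x (pderiv i F) - eval y (pderiv i F)| ≤ L * dist x y := by
  have hsmooth : ContDiff ℝ 1 fun (x : σ → ℝ) i => eval x (pderiv i F) :=
    contDiff_pi.2 fun i => (AnalyticOnNhd.eval_mvPolynomial _).contDiff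
  obtain ⟨L, hL⟩ := hsmooth.locallyLipschitz.locallyLipschitzOn.exists_lipschitzOnWith_of_compact hK
  exact ⟨L, L.2, fun x hx y hy i => (dist_le_pi_dist _ _ i).trans (hL.dist_le_mul x hx y hy)⟩

theorem sqrt_eval_gradNormSq_le {F : MvPolynomial σ ℝ} {x : σ → ℝ} {b : ℝ}
    (h : ∀ i, |eval x (pderiv i F)| ≤ b) (hb : 0 ≤ b) :
    √(eval x (gradNormSq F)) ≤ √(Fintype.card σ) * b := by
  rw [eval_gradNormSq]
  calc √(∑ i, eval x (pderiv i F) ^ 2)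
      ≤ √(∑ _i : σ, b ^ 2) :=
        Real.sqrt_le_sqrt (Finset.sum_le_sum fun i _ => sq_le_sq.2 ((h i).trans (le_abs_self b)))
    _ = √(Fintype.card σ) * b := by
        rw [Finset.sum_const, Finset.card_univ, nsmul_eq_mul, Real.sqrt_mul (Nat.cast_nonneg _),
          Real.sqrt_sq hb]

theorem closedBall_subset_euclideanBall :
    Metric.closedBall (0 : σ → ℝ) 1 ⊆ euclideanBall σ √(Fintype.card σ) := by
  intro y hy
  have hle : ∀ i, y i ^ 2 ≤ 1 := fun i =>
    (sq_le_one_iff_abs_le_one _).2 ((norm_le_pi_norm y i).trans (mem_closedBall_zero_iff.1 hy))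
  calc ∑ i, y i ^ 2 ≤ ∑ _i : σ, (1 : ℝ) := Finset.sum_le_sum fun i _ => hle i
    _ = √(Fintype.card σ) ^ 2 := by
        rw [Finset.sum_const, Finset.card_univ, nsmul_one, Real.sq_sqrt (Nat.cast_nonneg _)]

end PolynomialGradient

section SweepGradient

open MvPolynomial

variable {N : ℕ} {I r : Fin N → ℕ}

theorem flatten_mem_closedBall {A : Factors I r} (hA : TFeas A) :
    flatten A ∈ Metric.closedBall 0 1 := by
  refine mem_closedBall_zero_iff.2 ((pi_norm_le_iff_of_nonneg zero_le_one).2 fun ⟨n, i, j⟩ => ?_)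
  refine (sq_le_one_iff_abs_le_one _).1 ?_
  have hcol : ∑ k, A n k j ^ 2 = 1 := by
    simpa only [mul_apply, transpose_apply, one_apply_eq, sq] using congrFun (congrFun (hA n) j) j
  exact hcol ▸ Finset.single_le_sum (f := fun k => A n k j ^ 2) (fun _ _ => sq_nonneg _)
    (Finset.mem_univ i)

theorem dist_flatten_partialSweep_le (A A' : Factors I r) (m : ℕ) {y : FactorIndex I r → ℝ}
    (hy : y ∈ segment ℝ (flatten A) (flatten A')) :
    dist y (flatten (partialSweep A A' m)) ≤ dist (flatten A) (flatten A') := by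
  rw [segment_eq_image_lineMap] at hy
  obtain ⟨t, ⟨ht0, ht1⟩, rfl⟩ := hy
  refine (dist_pi_le_iff dist_nonneg).2 fun ⟨n, i, j⟩ => ?_
  refine le_trans ?_ (dist_le_pi_dist (flatten A) (flatten A') ⟨n, i, j⟩)
  rw [AffineMap.pi_lineMap_apply, flatten_apply (partialSweep A A' m), partialSweep]
  split_ifs
  · refine (dist_lineMap_right _ _ t).trans_le (mul_le_of_le_one_left dist_nonneg ?_)
    exact abs_le.2 ⟨by linarith, by linarith⟩
  · refine (dist_lineMap_left _ _ t).trans_le (mul_le_of_le_one_left dist_nonneg ?_)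
    exact abs_le.2 ⟨by linarith, by linarith⟩

variable (T : ((n : Fin N) → Fin (I n)) → ℝ)

theorem eval_pderiv_partialSweep_eq_zero {A A' : Factors I r} (hA : TFeas A)
    (hA' : IsGreedySweep T A A') (n : Fin N) (i : Fin (I n)) (j : Fin (r n)) :
    eval (flatten (partialSweep A A' (n + 1))) (pderiv ⟨n, i, j⟩ (smoothedObjective T)) = 0 := by
  refine eval_pderiv_smoothedObjective_eq_zero T (hA.partialSweep hA'.tfeas (n + 1)) ?_ i j
  rw [partialSweep_succ_apply_self, partialSweep_succ, unfoldingGram_update]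
  exact mul_eq_mul_transpose_mul_of_isLocalMaxOn (transpose_unfoldingGram T _ n) (hA'.tfeas n)
    (hA'.isNearestTraceMax n).isMaxOn.localize

theorem exists_forall_sqrt_eval_gradNormSq_le : ∃ C > 0, ∀ A A' : Factors I r,
    TFeas A → IsGreedySweep T A A' → ∀ y ∈ segment ℝ (flatten A) (flatten A'),
      √(eval y (gradNormSq (smoothedObjective T))) ≤ C * dist (flatten A) (flatten A') := by
  obtain ⟨L, hL, hlip⟩ := exists_forall_abs_eval_pderiv_sub_le (smoothedObjective (r := r) T)
    (isCompact_closedBall (0 : FactorIndex I r → ℝ) 1)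
  refine ⟨√(Fintype.card (FactorIndex I r)) * L + 1, by positivity, fun A A' hA hA' y hy => ?_⟩
  have hball : y ∈ Metric.closedBall 0 1 := (convex_closedBall 0 1).segment_subset
    (flatten_mem_closedBall hA) (flatten_mem_closedBall hA'.tfeas) hy
  have hentry : ∀ s, |eval y (pderiv s (smoothedObjective T))|
      ≤ L * dist (flatten A) (flatten A') := fun ⟨n, i, j⟩ => by
    have h := hlip y hball _ (flatten_mem_closedBall (hA.partialSweep hA'.tfeas (n + 1))) ⟨n, i, j⟩
    rw [eval_pderiv_partialSweep_eq_zero T hA hA', sub_zero] at h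
    exact h.trans (mul_le_mul_of_nonneg_left (dist_flatten_partialSweep_le A A' _ hy) hL)
  have hgrad := sqrt_eval_gradNormSq_le hentry (by positivity)
  rw [add_mul, mul_assoc]
  exact hgrad.trans (le_add_of_nonneg_right (by positivity))

end SweepGradient

section LocalConvergence

open MvPolynomial

variable {N : ℕ} {I r : Fin N → ℕ} {X : ((n : Fin N) → Fin (I n)) → ℝ} {A₀ : Factors I r}

theorem exists_eventually_isAscentStep (h : LocalMax X A₀) (hnd : NonDeg X A₀) :
    ∃ c > 0, ∃ C > 0, ∀ᶠ A in nhds A₀, TFeas A → ∀ A', IsGreedySweep X A A' →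
      IsAscentStep (smoothedObjective X)
        (euclideanBall (FactorIndex I r) √(Fintype.card (FactorIndex I r))) c C
        (flatten A) (flatten A') := by
  obtain ⟨c, hc, hincrease⟩ := exists_eventually_mul_dist_sq_le h hnd
  obtain ⟨C, hC, hgrad⟩ := exists_forall_sqrt_eval_gradNormSq_le X
  refine ⟨c, hc, C, hC, ?_⟩
  filter_upwards [hincrease] with A hA hfeas A' hA'
  refine ⟨?_, ?_, hgrad A A' hfeas hA'⟩
  · rw [eval_smoothedObjective_of_tfeas X hfeas, eval_smoothedObjective_of_tfeas X hA'.tfeas]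
    exact hA hfeas A' hA'
  · exact ((convex_closedBall 0 1).segment_subset (flatten_mem_closedBall hfeas)
      (flatten_mem_closedBall hA'.tfeas)).trans closedBall_subset_euclideanBall

theorem LocalMax.exists_pos_forall_dist_le (h : LocalMax X A₀) :
    ∃ ε > 0, ∀ A : Factors I r, TFeas A → dist (flatten A) (flatten A₀) ≤ ε →
      fval X A ≤ fval X A₀ ∧ (fval X A = fval X A₀ → LocalMax X A) := by
  obtain ⟨ε, hε, hmax⟩ := (hasBasis_nhds_dist_flatten A₀).eventually_iff.1
    ((localMax_iff_eventually X).1 h).2.eventually_nhds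
  refine ⟨ε, hε, fun A hfeas hA => ⟨(hmax hA).self_of_nhds hfeas, fun hvalue => ?_⟩⟩
  rw [localMax_iff_eventually, hvalue]
  exact ⟨hfeas, hmax hA⟩

theorem exists_radius_forall_greedySweep_converges (h : LocalMax X A₀) (hnd : NonDeg X A₀) :
    ∃ δ > 0, ∀ A : ℕ → Factors I r, (∀ k, TFeas (A k)) →
      (∀ k, IsGreedySweep X (A k) (A (k + 1))) → dist (flatten (A 0)) (flatten A₀) < δ →
      ∃ B, LocalMax X B ∧ Tendsto A atTop (nhds B) := by
  obtain ⟨ε, hε, hmax⟩ := h.exists_pos_forall_dist_le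
  obtain ⟨c, hc, C, hC, hascent⟩ := exists_eventually_isAscentStep h hnd
  have hstay := eventually_forall_partialSweep h hnd le_rfl
    ((hasBasis_nhds_dist_flatten A₀).mem_of_mem hε)
  obtain ⟨η, hη, hstep⟩ := (hasBasis_nhds_dist_flatten A₀).eventually_iff.1 (hstay.and hascent)
  obtain ⟨Ω, hΩ⟩ := exists_isDesingularizing_euclideanBall (smoothedObjective X)
    √(Fintype.card (FactorIndex I r))
  have hfeasible : IsClosed {x : FactorIndex I r → ℝ | TFeas (flatten.symm x)} :=
    isClosed_setOf_tfeas.preimage flatten.symm.continuous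
  obtain ⟨δ, hδ, hconv⟩ := exists_radius_forall_ascent_converges hΩ (isClosed_euclideanBall _)
    (finite_criticalValues_euclideanBall _ _) hc hC (lt_min hη hε) (min_le_right η ε)
    hfeasible (p := flatten A₀) fun x hx hxε => by
      rw [← flatten.apply_symm_apply x] at hxε ⊢
      rw [eval_smoothedObjective_of_tfeas X hx, eval_smoothedObjective_of_tfeas X h.1]
      exact (hmax _ hx hxε).1
  refine ⟨δ, hδ, fun A hfeas hsweep h0 => ?_⟩
  obtain ⟨y, hy, hlim, hyη, hvalue⟩ := hconv (fun k => flatten (A k))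
    (fun k => by simpa only [Set.mem_ofPred_eq, flatten.symm_apply_apply] using hfeas k) h0
    fun k hk => by
      obtain ⟨hclose, hasc⟩ := hstep (hk.trans (min_le_left η ε))
      refine ⟨?_, hasc (hfeas k) _ (hsweep k)⟩
      simpa only [partialSweep_top, Set.mem_ofPred_eq] using hclose (hfeas k) _ (hsweep k)
  rw [← flatten.apply_symm_apply y] at hlim hyη hvalue
  rw [eval_smoothedObjective_of_tfeas X hy, eval_smoothedObjective_of_tfeas X h.1] at hvalue
  exact ⟨flatten.symm y, (hmax _ hy (hyη.trans (min_le_right η ε))).2 hvalue,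
    flatten.isInducing.tendsto_nhds_iff.2 hlim⟩

theorem tendsto_fro_sub {A : ℕ → Factors I r} (h : Tendsto A atTop (nhds A₀)) (n : Fin N) :
    Tendsto (fun k => fro (A k n - A₀ n)) atTop (nhds 0) := by
  have hcont : Continuous fun B : Factors I r => fro (B n - A₀ n) :=
    Real.continuous_sqrt.comp (continuous_froSq.comp ((continuous_apply n).sub continuous_const))
  exact (hcont.tendsto' A₀ 0 (by simp [fro, froSq])).comp h

end LocalConvergence

/-- Every greedy HOOI sequence starting sufficiently close to a
block-nondegenerate local maximizer converges to a local maximizer. -/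
theorem stmt13 {N : ℕ} {I r : Fin N → ℕ} (hr : ∀ n, r n ≤ I n)
    (X : ((n : Fin N) → Fin (I n)) → ℝ)
    (Astar : (n : Fin N) → Matrix (Fin (I n)) (Fin (r n)) ℝ)
    (hstar : LocalMax X Astar) (hnd : NonDeg X Astar) :
    ∃ δ > (0 : ℝ), ∀ A : ℕ → (n : Fin N) → Matrix (Fin (I n)) (Fin (r n)) ℝ,
      IsGreedyHOOI X A → tdist (A 0) Astar ≤ δ →
      ∃ Abar : (n : Fin N) → Matrix (Fin (I n)) (Fin (r n)) ℝ,
        TFeas Abar ∧ LocalMax X Abar ∧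
        ∀ n, Filter.Tendsto (fun k => fro (A k n - Abar n)) Filter.atTop (nhds 0) := by
  obtain ⟨δ, hδ, hconv⟩ := exists_radius_forall_greedySweep_converges hstar hnd
  refine ⟨δ / 2, half_pos hδ, fun A hA h0 => ?_⟩
  have hclose : dist (flatten (A 0)) (flatten Astar) < δ :=
    (dist_flatten_le_tdist _ _).trans_lt (h0.trans_lt (half_lt_self hδ))
  obtain ⟨Abar, hbar, hlim⟩ := hconv A hA.1.1 hA.isGreedySweep hclose
  exact ⟨Abar, hbar.1, hbar, tendsto_fro_sub hlim⟩
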